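/- arXiv:2212.12635 — 3 statements merged into one kernel-verified Lean document; each statement's English description precedes it below -/
import Mathlib

section
/- Let D be a squarefree positive integer with an even number of distinct prime factors (so D ≥ 6) and let N be a positive integer with gcd(D, N) = 1. Then, as real numbers, φ(D)·ψ(N)/12 − e₁(D, N)/4 − e₃(D, N)/3 > (DN/12)·(1/(e^γ·log(log(DN)) + 3/log(log 6))) − (7/3)·√(DN). -/
open scoped BigOperators

/-- The Dedekind psi function `ψ(N) = N ∏_{p ∣ N} (1 + 1/p)`, as a real number. -/
noncomputable def dedekindPsi (N : ℕ) : ℝ :=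
  N * ∏ p ∈ N.primeFactors, (1 + 1 / (p : ℝ))

/-- The Kronecker symbol `(-4|p)`: `0` at `p = 2`, and the Legendre symbol
`(-4|p)` at odd primes `p` (junk value `0` at non-primes). -/
noncomputable def chiFour (p : ℕ) : ℤ :=
  if hp : p.Prime then (if p = 2 then 0 else @legendreSym p ⟨hp⟩ (-4)) else 0

/-- The Kronecker symbol `(-3|p)`: `-1` at `p = 2`, and the Legendre symbol
`(-3|p)` at odd primes `p` (junk value `0` at non-primes). -/
noncomputable def chiThree (p : ℕ) : ℤ :=
  if hp : p.Prime then (if p = 2 then -1 else @legendreSym p ⟨hp⟩ (-3)) else 0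

/-- `e₁(D, N) = ∏_{p ∣ D} (1 - (-4|p)) ⬝ ∏_{p ∣ N} (1 + (-4|p))`, the number of
CM points of discriminant `-4` on `X₀^D(N)`. -/
noncomputable def eOne (D N : ℕ) : ℤ :=
  (∏ p ∈ D.primeFactors, (1 - chiFour p)) * ∏ p ∈ N.primeFactors, (1 + chiFour p)

/-- `e₃(D, N) = ∏_{p ∣ D} (1 - (-3|p)) ⬝ ∏_{p ∣ N} (1 + (-3|p))`, the number of
CM points of discriminant `-3` on `X₀^D(N)`. -/
noncomputable def eThree (D N : ℕ) : ℤ :=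
  (∏ p ∈ D.primeFactors, (1 - chiThree p)) * ∏ p ∈ N.primeFactors, (1 + chiThree p)



open Real in
/-- Succ step for sums over primes. -/
lemma gl_sum_succ (f : ℕ → ℝ) (n : ℕ) :
    ∑ p ∈ Nat.primesLE (n + 1), f p =
      ∑ p ∈ Nat.primesLE n, f p + (if (n + 1).Prime then f (n + 1) else 0) := by
  rw [Nat.primesLE_eq_filter_range, Nat.primesLE_eq_filter_range, Finset.sum_filter,
    Finset.sum_filter, Finset.sum_range_succ]

/-- Factorisation of `log n!`. -/
lemma gl_log_fact (n : ℕ) :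
    Real.log (n.factorial : ℝ) =
      ∑ p ∈ Nat.primesLE n, ((n.factorial).factorization p : ℝ) * Real.log p := by
  have h1 : n.factorial = ∏ p ∈ Nat.primesLE n, p ^ (n.factorial).factorization p := by
    conv_lhs => rw [← Nat.prod_factorization_pow_eq_self (Nat.factorial_ne_zero n)]
    rw [Nat.prod_factorization_eq_prod_primeFactors]
    apply Finset.prod_congr _ (fun _ _ => rfl)
    ext p
    rw [Nat.mem_primeFactors, Nat.mem_primesLE]
    constructor
    · rintro ⟨hp, hd, -⟩
      exact ⟨(hp.dvd_factorial).1 hd, hp⟩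
    · rintro ⟨hle, hp⟩
      exact ⟨hp, (hp.dvd_factorial).2 hle, Nat.factorial_ne_zero n⟩
  conv_lhs => rw [h1]
  rw [Nat.cast_prod, Real.log_prod]
  · refine Finset.sum_congr rfl fun p _ => ?_
    push_cast
    rw [Real.log_pow]
  · intro p hp
    have := (Nat.prime_of_mem_primesLE hp).pos
    positivity

lemma gl_log_fact_le (n : ℕ) (hn : 1 ≤ n) :
    Real.log (n.factorial : ℝ) ≤ n * Real.log n - n + Real.log n + 1 := by
  induction n, hn using Nat.le_induction with
  | base => simp
  | succ n hn ih =>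
    have hn0 : (0:ℝ) < n := by exact_mod_cast hn
    rw [Nat.factorial_succ]
    push_cast
    rw [Real.log_mul (by positivity) (by positivity)]
    have h : 1 / ((n:ℝ) + 1) ≤ Real.log (n + 1) - Real.log n := by
      have := Real.log_le_sub_one_of_pos (x := (n:ℝ) / (n + 1)) (by positivity)
      rw [Real.log_div (by positivity) (by positivity)] at this
      have h2 : (n:ℝ) / (n + 1) - 1 = - (1 / ((n:ℝ) + 1)) := by field_simp; ring
      linarith
    have h3 : 1 ≤ ((n:ℝ) + 1) * (Real.log (n + 1) - Real.log n) := by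
      have := mul_le_mul_of_nonneg_left h (by positivity : (0:ℝ) ≤ (n:ℝ) + 1)
      have h2 : ((n:ℝ) + 1) * (1 / ((n:ℝ) + 1)) = 1 := by field_simp
      linarith
    nlinarith

lemma gl_log_ub (p k m : ℕ) (hk : 0 < k) (hp : 0 < p) (h : p ^ k ≤ 2 ^ m) :
    Real.log p ≤ m / k * Real.log 2 := by
  have h1 : Real.log ((p:ℝ) ^ k) ≤ Real.log ((2:ℝ) ^ m) := by
    apply Real.log_le_log (by positivity)
    exact_mod_cast h
  rw [Real.log_pow, Real.log_pow] at h1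
  have hk' : (0:ℝ) < k := by exact_mod_cast hk
  rw [div_mul_eq_mul_div, le_div_iff₀ hk']
  linarith

lemma gl_log_lb (p k m : ℕ) (hk : 0 < k) (h : 2 ^ m ≤ p ^ k) :
    m / k * Real.log 2 ≤ Real.log p := by
  have h1 : Real.log ((2:ℝ) ^ m) ≤ Real.log ((p:ℝ) ^ k) := by
    apply Real.log_le_log (by positivity)
    exact_mod_cast h
  rw [Real.log_pow, Real.log_pow] at h1
  have hk' : (0:ℝ) < k := by exact_mod_cast hk
  rw [div_mul_eq_mul_div, div_le_iff₀ hk']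
  linarith

/-- Sum of `log p / p` over primes up to `n`. -/
noncomputable def glT (n : ℕ) : ℝ := ∑ p ∈ Nat.primesLE n, Real.log p / p

/-- Sum of `1 / p` over primes up to `n`. -/
noncomputable def glS (n : ℕ) : ℝ := ∑ p ∈ Nat.primesLE n, 1 / (p : ℝ)

lemma gl_val_ge (n p : ℕ) (hp : p.Prime) :
    n / p + n / p ^ 2 ≤ (n.factorial).factorization p := by
  rw [Nat.factorization_factorial hp (b := Nat.log p n + 3) (by omega)]
  have : ∑ i ∈ Finset.Ico 1 3, n / p ^ i ≤ ∑ i ∈ Finset.Ico 1 (Nat.log p n + 3), n / p ^ i :=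
    Finset.sum_le_sum_of_subset (by
      apply Finset.Ico_subset_Ico_right; omega)
  have h2 : Finset.Ico 1 3 = {1, 2} := by decide
  rw [h2] at this
  simpa using this

lemma gl_T_upper (n : ℕ) (hn : 2000 ≤ n) : glT n ≤ Real.log n + 43 / 1000 := by
  have hn0 : (2000:ℝ) ≤ n := by exact_mod_cast hn
  have hdiv : ∀ m : ℕ, 0 < m → (n:ℝ) / m - 1 ≤ ((n / m : ℕ) : ℝ) := by
    intro m hm
    have := Nat.lt_div_mul_add (a := n) hm
    have h2 : (n:ℝ) < (n / m : ℕ) * m + m := by exact_mod_cast this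
    have hm' : (0:ℝ) < m := by exact_mod_cast hm
    rw [sub_le_iff_le_add, div_le_iff₀ hm']
    nlinarith
  have h1 : ∑ p ∈ Nat.primesLE n, (((n / p : ℕ) : ℝ) * Real.log p +
      ((n / p ^ 2 : ℕ) : ℝ) * Real.log p) ≤ Real.log (n.factorial : ℝ) := by
    rw [gl_log_fact]
    refine Finset.sum_le_sum fun p hp => ?_
    have hl : 0 ≤ Real.log p := Real.log_natCast_nonneg p
    have := gl_val_ge n p (Nat.prime_of_mem_primesLE hp)
    have h2 : ((n / p : ℕ) : ℝ) + ((n / p ^ 2 : ℕ) : ℝ) ≤ (n.factorial).factorization p := by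
      exact_mod_cast this
    nlinarith
  rw [Finset.sum_add_distrib] at h1
  have h2 : (n:ℝ) * glT n - Chebyshev.theta n ≤
      ∑ p ∈ Nat.primesLE n, ((n / p : ℕ) : ℝ) * Real.log p := by
    rw [Chebyshev.theta_eq_sum_primesLE_log, glT, Finset.mul_sum, ← Finset.sum_sub_distrib]
    refine Finset.sum_le_sum fun p hp => ?_
    have hl : 0 ≤ Real.log p := Real.log_natCast_nonneg p
    have := hdiv p (Nat.prime_of_mem_primesLE hp).pos
    have h3 : (n:ℝ) * (Real.log p / p) - Real.log p = ((n:ℝ) / p - 1) * Real.log p := by ring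
    rw [h3]
    exact mul_le_mul_of_nonneg_right this hl
  have h3 : ∑ p ∈ ({2, 3, 5} : Finset ℕ), ((n / p ^ 2 : ℕ) : ℝ) * Real.log p ≤
      ∑ p ∈ Nat.primesLE n, ((n / p ^ 2 : ℕ) : ℝ) * Real.log p := by
    apply Finset.sum_le_sum_of_subset_of_nonneg
    · intro p hp
      rw [Nat.mem_primesLE]
      simp only [Finset.mem_insert, Finset.mem_singleton] at hp
      rcases hp with rfl | rfl | rfl <;> refine ⟨by omega, by norm_num⟩
    · intro p _ _
      exact mul_nonneg (by positivity) (Real.log_natCast_nonneg p)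
  have h4 := gl_log_fact_le n (by omega)
  have h5 := Chebyshev.theta_le_log4_mul_x (x := n) (by positivity)
  have l4 : Real.log 4 = 2 * Real.log 2 := by
    rw [show (4:ℝ) = 2 ^ 2 by norm_num, Real.log_pow]; norm_num
  rw [l4] at h5
  have l3 := gl_log_lb 3 2 3 (by norm_num) (by norm_num)
  have l5 := gl_log_lb 5 4 9 (by norm_num) (by norm_num)
  have l2 := Real.log_two_lt_d9
  have l2' := Real.log_two_gt_d9
  rw [Finset.sum_insert (by decide), Finset.sum_insert (by decide), Finset.sum_singleton] at h3
  have e2 := hdiv (2 ^ 2) (by norm_num)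
  have e3 := hdiv (3 ^ 2) (by norm_num)
  have e5 := hdiv (5 ^ 2) (by norm_num)
  push_cast at e2 e3 e5 l3 l5 h3
  have g2 : ((n:ℝ) / 4 - 1) * 0.693147 ≤ ((n / 4 : ℕ) : ℝ) * Real.log 2 := by
    apply mul_le_mul e2 (by linarith) (by norm_num) (Nat.cast_nonneg _)
  have g3 : ((n:ℝ) / 9 - 1) * 1.03972 ≤ ((n / 9 : ℕ) : ℝ) * Real.log 3 := by
    apply mul_le_mul e3 (by linarith) (by norm_num) (Nat.cast_nonneg _)
  have g5 : ((n:ℝ) / 25 - 1) * 1.55958 ≤ ((n / 25 : ℕ) : ℝ) * Real.log 5 := by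
    apply mul_le_mul e5 (by linarith) (by norm_num) (Nat.cast_nonneg _)
  -- log n ≤ 0.0038 n
  have hlog : Real.log n ≤ 7.6247 + (n - 2048) / 2048 := by
    have h6 := Real.log_le_sub_one_of_pos (x := (n:ℝ) / 2048) (by positivity)
    rw [Real.log_div (by positivity) (by norm_num)] at h6
    have h7 : Real.log 2048 = 11 * Real.log 2 := by
      rw [show (2048:ℝ) = 2 ^ 11 by norm_num, Real.log_pow]; norm_num
    have h8 : (n - 2048 : ℝ) / 2048 = (n:ℝ) / 2048 - 1 := by ring
    rw [h8]; linarith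
  have hfin : (n:ℝ) * glT n ≤ n * (Real.log n + 43 / 1000) := by
    have h9 : Real.log 2 * (n:ℝ) ≤ 0.693148 * n := by
      apply mul_le_mul_of_nonneg_right (by linarith) (by positivity)
    have : (n:ℝ) * glT n ≤ n * Real.log n - n + Real.log n + 1 + 2 * (0.693148 * n) -
      (((n:ℝ) / 4 - 1) * 0.693147 + ((n:ℝ) / 9 - 1) * 1.03972 + ((n:ℝ) / 25 - 1) * 1.55958) := by
      norm_num
      linarith
    norm_num at this
    linarith
  exact le_of_mul_le_mul_left hfin (by positivity)

lemma gl_tail (m : ℕ) (hm : 36 ≤ m) :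
    ∑ p ∈ Nat.primesLE m, Real.log p / (p * (p - 1)) + (Real.log ((m:ℝ) + 1) + 1) / m ≤ 0.87 := by
  induction m, hm using Nat.le_induction with
  | base =>
    have l2 := Real.log_two_lt_d9
    have h : Nat.primesLE 36 = {2, 3, 5, 7, 11, 13, 17, 19, 23, 29, 31} := by decide +kernel
    rw [h]
    have l3 := gl_log_ub 3 5 8 (by norm_num) (by norm_num) (by norm_num)
    have l5 := gl_log_ub 5 3 7 (by norm_num) (by norm_num) (by norm_num)
    have l7 := gl_log_ub 7 6 17 (by norm_num) (by norm_num) (by norm_num)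
    have l11 := gl_log_ub 11 2 7 (by norm_num) (by norm_num) (by norm_num)
    have l13 := gl_log_ub 13 4 15 (by norm_num) (by norm_num) (by norm_num)
    have l17 := gl_log_ub 17 6 25 (by norm_num) (by norm_num) (by norm_num)
    have l19 := gl_log_ub 19 4 17 (by norm_num) (by norm_num) (by norm_num)
    have l23 := gl_log_ub 23 5 23 (by norm_num) (by norm_num) (by norm_num)
    have l29 := gl_log_ub 29 8 39 (by norm_num) (by norm_num) (by norm_num)
    have l31 := gl_log_ub 31 1 5 (by norm_num) (by norm_num) (by norm_num)
    have l37 := gl_log_ub 37 4 21 (by norm_num) (by norm_num) (by norm_num)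
    iterate 10 rw [Finset.sum_insert (by decide)]
    rw [Finset.sum_singleton]
    push_cast at *
    norm_num at *
    linarith
  | succ m hm ih =>
    rw [gl_sum_succ]
    have hm0 : (36:ℝ) ≤ m := by exact_mod_cast hm
    have hl : 0 ≤ Real.log ((m:ℝ) + 1) := Real.log_nonneg (by linarith)
    have hstep : (if (m + 1).Prime then Real.log ((m + 1 : ℕ):ℝ) /
        (((m + 1 : ℕ):ℝ) * (((m + 1 : ℕ):ℝ) - 1)) else 0) ≤
        Real.log ((m:ℝ) + 1) / ((m + 1) * m) := by
      split_ifs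
      · push_cast; simp
      · positivity
    have hlog : Real.log ((m:ℝ) + 1 + 1) ≤ Real.log ((m:ℝ) + 1) + 1 / (m + 1) := by
      have := Real.log_le_sub_one_of_pos (x := ((m:ℝ) + 1 + 1) / (m + 1)) (by positivity)
      rw [Real.log_div (by positivity) (by positivity)] at this
      have h2 : ((m:ℝ) + 1 + 1) / (m + 1) - 1 = 1 / (m + 1) := by field_simp; ring
      linarith
    have : Real.log ((m:ℝ) + 1) / ((m + 1) * m) + (Real.log ((m:ℝ) + 1 + 1) + 1) / (m + 1) ≤
        (Real.log ((m:ℝ) + 1) + 1) / m := by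
      have h3 : (Real.log ((m:ℝ) + 1 + 1) + 1) / (m + 1) ≤
        (Real.log ((m:ℝ) + 1) + 1 / (m + 1) + 1) / (m + 1) := by gcongr
      have h4 : (Real.log ((m:ℝ) + 1) + 1) / m - Real.log ((m:ℝ) + 1) / ((m + 1) * m) -
        (Real.log ((m:ℝ) + 1) + 1 / (m + 1) + 1) / (m + 1) = 1 / (m * (m + 1) ^ 2) := by
        field_simp; ring
      have : 0 < 1 / ((m:ℝ) * (m + 1) ^ 2) := by positivity
      linarith
    push_cast at *
    linarith

lemma gl_T_lower (n : ℕ) (hn : 2000 ≤ n) : Real.log ((n:ℝ) + 1) - 1.871 ≤ glT n := by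
  have hn0 : (2000:ℝ) ≤ n := by exact_mod_cast hn
  have h1 : Real.log (n.factorial : ℝ) ≤
      ∑ p ∈ Nat.primesLE n, (n:ℝ) * (Real.log p / p + Real.log p / (p * (p - 1))) := by
    rw [gl_log_fact]
    refine Finset.sum_le_sum fun p hp => ?_
    have hl : 0 ≤ Real.log p := Real.log_natCast_nonneg p
    have hp' := (Nat.prime_of_mem_primesLE hp)
    have h2 : (2:ℝ) ≤ p := by exact_mod_cast hp'.two_le
    have := Nat.factorization_factorial_le_div_pred hp' n
    have h3 : ((n.factorial).factorization p : ℝ) ≤ n / (p - 1) := by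
      calc ((n.factorial).factorization p : ℝ) ≤ ((n / (p - 1) : ℕ) : ℝ) := by exact_mod_cast this
        _ ≤ (n:ℝ) / ((p - 1 : ℕ) : ℝ) := Nat.cast_div_le
        _ = _ := by rw [Nat.cast_sub hp'.one_le]; simp
    have h5 : (p:ℝ) - 1 ≠ 0 := by linarith
    have h6 : (p:ℝ) ≠ 0 := by linarith
    have h4 : (n:ℝ) * (Real.log p / p + Real.log p / (p * (p - 1))) =
      n / (p - 1) * Real.log p := by field_simp; ring
    rw [h4]
    exact mul_le_mul_of_nonneg_right h3 hl
  rw [← Finset.mul_sum, Finset.sum_add_distrib] at h1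
  have h2 := gl_tail n (by omega)
  have h2' : 0 ≤ (Real.log ((n:ℝ) + 1) + 1) / n := by
    have : 0 ≤ Real.log ((n:ℝ) + 1) := Real.log_nonneg (by linarith)
    positivity
  have h3 := Stirling.le_log_factorial_stirling (n := n) (by omega)
  have h4 : 0 ≤ Real.log n := Real.log_natCast_nonneg n
  have h5 : 0 ≤ Real.log (2 * Real.pi) := Real.log_nonneg (by linarith [Real.pi_gt_three])
  have h6 : (n:ℝ) * (Real.log n - 1) ≤ n * (glT n + 0.87) := by
    have : glT n + ∑ p ∈ Nat.primesLE n, Real.log p / (p * (p - 1)) ≤ glT n + 0.87 := by linarith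
    have h7 := mul_le_mul_of_nonneg_left this (by positivity : (0:ℝ) ≤ n)
    unfold glT at h7 ⊢
    linarith
  have h7 := le_of_mul_le_mul_left h6 (by positivity)
  have hlog : Real.log ((n:ℝ) + 1) ≤ Real.log n + 1 / 2000 := by
    have := Real.log_le_sub_one_of_pos (x := ((n:ℝ) + 1) / n) (by positivity)
    rw [Real.log_div (by positivity) (by positivity)] at this
    have h2 : ((n:ℝ) + 1) / n - 1 = 1 / n := by field_simp; ring
    have : 1 / (n:ℝ) ≤ 1 / 2000 := by gcongr
    linarith
  norm_num at *
  linarith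

lemma gl_abel (n : ℕ) (hn : 2000 ≤ n) (m : ℕ) (hm : n ≤ m) :
    Real.log (Real.log ((m:ℝ) + 1)) +
      (glS n - Real.log (Real.log n) - 1.914 / Real.log n) ≤ glS m := by
  have hU : glS n - glT n / Real.log n + Real.log (Real.log m) - Real.log (Real.log n)
      + 1.871 * (1 / Real.log m - 1 / Real.log n) ≤ glS m - glT m / Real.log m := by
    induction m, hm using Nat.le_induction with
    | base => simp
    | succ m hm ih =>
      have hm0 : (2000:ℝ) ≤ m := by exact_mod_cast hn.trans hm
      have hx : 0 < Real.log m := Real.log_pos (by linarith)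
      have hxy : Real.log m < Real.log ((m:ℝ) + 1) := Real.log_lt_log (by linarith) (by linarith)
      have hT := gl_T_lower m (hn.trans hm)
      have hS : glS (m + 1) = glS m +
          (if (m + 1).Prime then Real.log ((m:ℝ) + 1) / ((m:ℝ) + 1) else 0)
            / Real.log ((m:ℝ) + 1) := by
        unfold glS
        rw [gl_sum_succ]
        split_ifs
        · push_cast
          have : Real.log ((m:ℝ) + 1) ≠ 0 := by linarith
          field_simp
        · simp
      have hT' : glT (m + 1) = glT m +
          (if (m + 1).Prime then Real.log ((m:ℝ) + 1) / ((m:ℝ) + 1) else 0) := by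
        unfold glT
        rw [gl_sum_succ]
        push_cast
        rfl
      rw [hS, hT']
      push_cast
      set x := Real.log (m:ℝ)
      set y := Real.log ((m:ℝ) + 1)
      generalize (if (m + 1).Prime then y / ((m:ℝ) + 1) else 0) = τ
      have hy : 0 < y := hx.trans hxy
      have h1 : Real.log y - Real.log x ≤ y / x - 1 := by
        rw [← Real.log_div hy.ne' hx.ne']
        exact Real.log_le_sub_one_of_pos (by positivity)
      have h2 : 0 ≤ (1 / x - 1 / y) := by
        have : 1 / y ≤ 1 / x := one_div_le_one_div_of_le hx hxy.le
        linarith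
      have h3 : (y - 1.871) * (1 / x - 1 / y) ≤ glT m * (1 / x - 1 / y) :=
        mul_le_mul_of_nonneg_right hT h2
      have h4 : (y - 1.871) * (1 / x - 1 / y) = y / x - 1 - 1.871 * (1 / x - 1 / y) := by
        field_simp
      have h5 : glT m * (1 / x - 1 / y) = glT m / x - glT m / y := by ring
      have h6 : (glT m + τ) / y = glT m / y + τ / y := by ring
      rw [h6]
      linarith
  have hn0 : (2000:ℝ) ≤ n := by exact_mod_cast hn
  have hm0 : (2000:ℝ) ≤ m := by exact_mod_cast hn.trans hm
  have hT := gl_T_lower m (hn.trans hm)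
  have hTn := gl_T_upper n hn
  have hx : 0 < Real.log m := Real.log_pos (by linarith)
  have hz : 0 < Real.log n := Real.log_pos (by linarith)
  have hxy : Real.log m < Real.log ((m:ℝ) + 1) := Real.log_lt_log (by linarith) (by linarith)
  set x := Real.log (m:ℝ)
  set y := Real.log ((m:ℝ) + 1)
  set z := Real.log (n:ℝ)
  have hy : 0 < y := hx.trans hxy
  have h1 : Real.log y - Real.log x ≤ y / x - 1 := by
    rw [← Real.log_div hy.ne' hx.ne']
    exact Real.log_le_sub_one_of_pos (by positivity)
  have h2 : (y - 1.871) / x ≤ glT m / x := by gcongr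
  have h3 : glT n / z ≤ (z + 43 / 1000) / z := by gcongr
  have h4 : (z + 43 / 1000) / z = 1 + 0.043 * (1 / z) := by field_simp; ring
  have h5 : (y - 1.871) / x = y / x - 1.871 * (1 / x) := by ring
  have h6 : 1.914 / z = 1.914 * (1 / z) := by ring
  rw [h6]
  linarith

lemma gl_euler (s : ℝ) (hs : 1 < s) (n M : ℕ) (hM : n ≤ M) :
    ∑ p ∈ Nat.primesLE n, (-Real.log (1 - (p:ℝ) ^ (-s)) - (p:ℝ) ^ (-s)) +
      ∑ p ∈ Nat.primesLE M, (p:ℝ) ^ (-s) ≤ Real.log (∑' k : ℕ, 1 / (k:ℝ) ^ s) := by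
  let f : ℕ →* ℝ :=
    { toFun := fun k => (k:ℝ) ^ (-s)
      map_one' := by simp
      map_mul' := by
        intro a b
        push_cast
        exact Real.mul_rpow (by positivity) (by positivity) }
  have hf : ∀ k, f k = (k:ℝ) ^ (-s) := fun k => rfl
  have hfun : (fun k : ℕ => 1 / (k:ℝ) ^ s) = f := by
    ext k
    rw [hf, Real.rpow_neg (by positivity), one_div]
  have hsum : Summable f := by
    rw [← hfun]
    exact Real.summable_one_div_nat_rpow.2 hs
  have h1 := EulerProduct.prod_primesBelow_geometric_eq_tsum_smoothNumbers hsum (M + 1)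
  have h2 : ∑' m : (M + 1).smoothNumbers, f m ≤ ∑' k, f k :=
    Summable.tsum_subtype_le _ _ (fun k => by rw [hf]; positivity) hsum
  rw [← h1] at h2
  rw [hfun]
  have hlt : ∀ p ∈ Nat.primesLE M, f p < 1 := by
    intro p hp
    rw [hf]
    apply Real.rpow_lt_one_of_one_lt_of_neg
    · exact_mod_cast (Nat.prime_of_mem_primesLE hp).one_lt
    · linarith
  have hpos : 0 < ∏ p ∈ (M + 1).primesBelow, (1 - f p)⁻¹ := by
    apply Finset.prod_pos
    intro p hp
    have := hlt p hp
    exact inv_pos.2 (by linarith)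
  have h3 := Real.log_le_log hpos h2
  refine le_trans ?_ h3
  rw [Real.log_prod]
  swap
  · intro p hp
    have := hlt p hp
    exact (inv_pos.2 (by linarith)).ne'
  have h4 : ∑ p ∈ Nat.primesLE n, (-Real.log (1 - (p:ℝ) ^ (-s)) - (p:ℝ) ^ (-s)) ≤
      ∑ p ∈ Nat.primesLE M, (-Real.log (1 - (p:ℝ) ^ (-s)) - (p:ℝ) ^ (-s)) := by
    apply Finset.sum_le_sum_of_subset_of_nonneg
    · intro p hp
      rw [Nat.mem_primesLE] at *
      exact ⟨hp.1.trans hM, hp.2⟩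
    · intro p hp _
      have := hlt p hp
      rw [hf] at this
      have := Real.log_le_sub_one_of_pos (x := 1 - (p:ℝ) ^ (-s)) (by linarith)
      linarith
  refine (add_le_add_left h4 _).trans ?_
  rw [← Finset.sum_add_distrib]
  apply le_of_eq
  apply Finset.sum_congr rfl
  intro p hp
  rw [Real.log_inv, hf]
  ring

lemma gl_geom (z : ℝ) (k m : ℕ) :
    (1 - z) * ∑ j ∈ Finset.range m, (if k ≤ j then z ^ j else 0) = z ^ k - z ^ (max k m) := by
  induction m with
  | zero => simp
  | succ m ih =>
    rw [Finset.sum_range_succ, mul_add, ih]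
    split_ifs with h
    · rw [max_eq_right h, max_eq_right (by omega)]
      ring
    · rw [max_eq_left (by omega), max_eq_left (by omega)]
      ring

lemma gl_swap (δ : ℝ) (hδ : 0 < δ) (J : ℕ) :
    (1 - Real.exp (-δ)) * ∑ j ∈ Finset.range (J + 1),
      Real.exp (-δ) ^ j * glS ⌊Real.exp j⌋₊ ≤
      ∑ p ∈ Nat.primesLE ⌊Real.exp J⌋₊, (p:ℝ) ^ (-(1 + δ)) := by
  have h1 : ∀ j ∈ Finset.range (J + 1), Real.exp (-δ) ^ j * glS ⌊Real.exp j⌋₊ =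
      ∑ p ∈ Nat.primesLE ⌊Real.exp J⌋₊, (1 / (p:ℝ)) *
        (if ⌈Real.log p⌉₊ ≤ j then Real.exp (-δ) ^ j else 0) := by
    intro j hj
    have hj' : j ≤ J := by
      have := Finset.mem_range.1 hj
      omega
    have h2 : Nat.primesLE ⌊Real.exp j⌋₊ =
        (Nat.primesLE ⌊Real.exp J⌋₊).filter (fun p : ℕ => ⌈Real.log (p:ℝ)⌉₊ ≤ j) := by
      ext p
      rw [Finset.mem_filter, Nat.mem_primesLE, Nat.mem_primesLE]
      have key : p.Prime → (p ≤ ⌊Real.exp j⌋₊ ↔ ⌈Real.log p⌉₊ ≤ j) := by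
        intro hp
        have hp0 : (0:ℝ) < p := by exact_mod_cast hp.pos
        rw [Nat.le_floor_iff (Real.exp_pos _).le, Nat.ceil_le, Real.log_le_iff_le_exp hp0]
      have hmono : ⌊Real.exp j⌋₊ ≤ ⌊Real.exp J⌋₊ := by
        apply Nat.floor_le_floor
        apply Real.exp_le_exp.2
        exact_mod_cast hj'
      constructor
      · rintro ⟨h, hp⟩
        exact ⟨⟨h.trans hmono, hp⟩, (key hp).1 h⟩
      · rintro ⟨⟨_, hp⟩, h⟩
        exact ⟨(key hp).2 h, hp⟩
    rw [glS, h2, Finset.sum_filter, Finset.mul_sum]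
    apply Finset.sum_congr rfl
    intro p _
    split_ifs <;> ring
  rw [Finset.sum_congr rfl h1, Finset.sum_comm, Finset.mul_sum]
  apply Finset.sum_le_sum
  intro p hp
  have hp0 : (0:ℝ) < p := by exact_mod_cast (Nat.prime_of_mem_primesLE hp).pos
  rw [← Finset.mul_sum, mul_left_comm, gl_geom, neg_add, Real.rpow_add hp0, Real.rpow_neg_one,
    one_div]
  apply mul_le_mul_of_nonneg_left _ (by positivity)
  have h3 : Real.exp (-δ) ^ ⌈Real.log p⌉₊ ≤ (p:ℝ) ^ (-δ) := by
    rw [← Real.exp_nat_mul, Real.rpow_def_of_pos hp0]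
    apply Real.exp_le_exp.2
    have := Nat.le_ceil (Real.log p)
    nlinarith
  have : 0 < Real.exp (-δ) ^ (max ⌈Real.log p⌉₊ (J + 1)) := by positivity
  linarith

lemma gl_harm (z : ℝ) (J : ℕ) :
    (1 - z) * ∑ j ∈ Finset.range (J + 1), z ^ j * (harmonic j : ℝ) =
      ∑ i ∈ Finset.range J, z ^ (i + 1) / ((i:ℝ) + 1) - z ^ (J + 1) * (harmonic J : ℝ) := by
  induction J with
  | zero => simp
  | succ J ih =>
    rw [Finset.sum_range_succ, mul_add, ih, Finset.sum_range_succ _ J, harmonic_succ]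
    push_cast
    ring

open Filter Topology in
lemma gl_laplace_fixed (A : ℝ) (n : ℕ)
    (h : ∀ m : ℕ, n ≤ m → Real.log (Real.log ((m:ℝ) + 1)) + A ≤ glS m) (ε : ℝ) (hε : 0 < ε) :
    ∃ C : ℝ, ∀ δ : ℝ, 0 < δ →
      ∑ p ∈ Nat.primesLE n, (-Real.log (1 - (p:ℝ) ^ (-(1 + δ))) - (p:ℝ) ^ (-(1 + δ))) +
        (A - Real.eulerMascheroniConstant - ε) - δ * C ≤
        Real.log (δ * ∑' k : ℕ, 1 / (k:ℝ) ^ (1 + δ)) := by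
  set c := A - Real.eulerMascheroniConstant - ε with hc
  have hev : ∀ᶠ j : ℕ in atTop, (harmonic j : ℝ) + c ≤ glS ⌊Real.exp j⌋₊ ∧ n ≤ ⌊Real.exp j⌋₊ := by
    have h1 : ∀ᶠ j : ℕ in atTop, (harmonic j : ℝ) - Real.log j <
        Real.eulerMascheroniConstant + ε :=
      Real.tendsto_harmonic_sub_log.eventually_lt_const (by linarith)
    filter_upwards [h1, eventually_ge_atTop n, eventually_ge_atTop 1] with j h1 h2 h3
    have hj : (1:ℝ) ≤ j := by exact_mod_cast h3
    have h4 : n ≤ ⌊Real.exp j⌋₊ := by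
      apply Nat.le_floor
      have h5 : (n:ℝ) ≤ j := by exact_mod_cast h2
      have := Real.add_one_le_exp (j:ℝ)
      linarith
    refine ⟨?_, h4⟩
    have h5 := h _ h4
    have h6 : (j:ℝ) ≤ Real.log ((⌊Real.exp j⌋₊:ℝ) + 1) := by
      rw [Real.le_log_iff_exp_le (by positivity)]
      exact (Nat.lt_floor_add_one _).le
    have h7 := Real.log_le_log (by linarith) h6
    linarith
  obtain ⟨J0, hJ0⟩ := eventually_atTop.1 hev
  set C := ∑ j ∈ Finset.range J0, |(harmonic j : ℝ) + c| with hC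
  refine ⟨C, fun δ hδ => ?_⟩
  set z := Real.exp (-δ) with hz
  have hz0 : 0 < z := Real.exp_pos _
  have hz1 : z < 1 := by rw [hz]; simpa using hδ
  set Q := ∑ p ∈ Nat.primesLE n, (-Real.log (1 - (p:ℝ) ^ (-(1 + δ))) - (p:ℝ) ^ (-(1 + δ)))
  set Z := ∑' k : ℕ, 1 / (k:ℝ) ^ (1 + δ) with hZ
  have hbound : ∀ J : ℕ, J0 ≤ J →
      Q + ((∑ i ∈ Finset.range J, z ^ (i + 1) / ((i:ℝ) + 1) - z ^ (J + 1) * (harmonic J : ℝ)) +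
        c * (1 - z ^ (J + 1)) - (1 - z) * C) ≤ Real.log Z := by
    intro J hJ
    have h1 := gl_euler (1 + δ) (by linarith) n ⌊Real.exp J⌋₊ (hJ0 J hJ).2
    have h2 := gl_swap δ hδ J
    rw [← hz] at h2
    have h3 : ∑ j ∈ Finset.range (J + 1), (z ^ j * (harmonic j : ℝ) + c * z ^ j) - C ≤
        ∑ j ∈ Finset.range (J + 1), z ^ j * glS ⌊Real.exp j⌋₊ := by
      have h4 : ∑ j ∈ Finset.range (J + 1), (z ^ j * (harmonic j : ℝ) + c * z ^ j) -
          ∑ j ∈ Finset.range (J + 1), z ^ j * glS ⌊Real.exp j⌋₊ ≤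
          ∑ j ∈ Finset.range (J + 1), (if j < J0 then |(harmonic j : ℝ) + c| else 0) := by
        rw [← Finset.sum_sub_distrib]
        apply Finset.sum_le_sum
        intro j _
        have hzj : 0 < z ^ j := by positivity
        have hzj1 : z ^ j ≤ 1 := pow_le_one₀ hz0.le hz1.le
        split_ifs with hj
        · have h5 : 0 ≤ glS ⌊Real.exp j⌋₊ := Finset.sum_nonneg fun p _ => by positivity
          have h6 : z ^ j * ((harmonic j : ℝ) + c) ≤ 1 * |(harmonic j : ℝ) + c| :=
            (mul_le_mul_of_nonneg_left (le_abs_self _) hzj.le).trans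
              (mul_le_mul_of_nonneg_right hzj1 (abs_nonneg _))
          have h7 : 0 ≤ z ^ j * glS ⌊Real.exp j⌋₊ := by positivity
          linarith
        · have h5 := (hJ0 j (by omega)).1
          have h6 := mul_le_mul_of_nonneg_left h5 hzj.le
          linarith
      have h5 : ∑ j ∈ Finset.range (J + 1), (if j < J0 then |(harmonic j : ℝ) + c| else 0) = C := by
        rw [hC, ← Finset.sum_filter]
        apply Finset.sum_congr _ (fun _ _ => rfl)
        ext j
        simp only [Finset.mem_filter, Finset.mem_range]
        omega
      linarith
    have h4 := mul_le_mul_of_nonneg_left h3 (by linarith : 0 ≤ 1 - z)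
    rw [mul_sub, Finset.sum_add_distrib, mul_add, gl_harm, ← Finset.mul_sum, mul_left_comm] at h4
    have h5 : (1 - z) * ∑ j ∈ Finset.range (J + 1), z ^ j = 1 - z ^ (J + 1) :=
      mul_neg_geom_sum z (J + 1)
    rw [h5] at h4
    linarith
  have hlim : Tendsto (fun J : ℕ => Q + ((∑ i ∈ Finset.range J, z ^ (i + 1) / ((i:ℝ) + 1) -
      z ^ (J + 1) * (harmonic J : ℝ)) + c * (1 - z ^ (J + 1)) - (1 - z) * C)) atTop
      (𝓝 (Q + ((-Real.log (1 - z) - 0) + c * (1 - 0) - (1 - z) * C))) := by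
    have hzJ : Tendsto (fun J : ℕ => z ^ (J + 1)) atTop (𝓝 0) :=
      (tendsto_pow_atTop_nhds_zero_of_lt_one hz0.le hz1).comp (tendsto_add_atTop_nat 1)
    have hs : Tendsto (fun J : ℕ => ∑ i ∈ Finset.range J, z ^ (i + 1) / ((i:ℝ) + 1)) atTop
        (𝓝 (-Real.log (1 - z))) :=
      (Real.hasSum_pow_div_log_of_abs_lt_one (by rw [abs_of_pos hz0]; exact hz1)).tendsto_sum_nat
    have hh : Tendsto (fun J : ℕ => z ^ (J + 1) * (harmonic J : ℝ)) atTop (𝓝 0) := by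
      have hJz : Tendsto (fun J : ℕ => (J:ℝ) * z ^ J) atTop (𝓝 0) :=
        tendsto_self_mul_const_pow_of_lt_one hz0.le hz1
      have hle : ∀ J : ℕ, (harmonic J : ℝ) ≤ J := by
        intro J
        induction J with
        | zero => simp
        | succ J ih =>
          rw [harmonic_succ]
          push_cast
          have : ((J:ℝ) + 1)⁻¹ ≤ 1 := inv_le_one_of_one_le₀ (by
            have : (0:ℝ) ≤ J := Nat.cast_nonneg J
            linarith)
          linarith
      have hnn : ∀ J : ℕ, 0 ≤ (harmonic J : ℝ) := by
        intro J
        induction J with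
        | zero => simp
        | succ J ih =>
          rw [harmonic_succ]
          push_cast
          positivity
      refine squeeze_zero (fun J => ?_) (fun J => ?_) hJz
      · have := hnn J
        positivity
      · rw [mul_comm]
        apply mul_le_mul (hle J) _ (by positivity) (by positivity)
        exact pow_le_pow_of_le_one hz0.le hz1.le (by omega)
    exact ((((hs.sub hh).add ((hzJ.const_sub 1).const_mul c)).sub_const _).const_add Q)
  have hres := le_of_tendsto hlim (eventually_atTop.2 ⟨J0, hbound⟩)
  have h1z : 1 - z ≤ δ := by
    have := Real.add_one_le_exp (-δ)
    linarith
  have hlz : Real.log (1 - z) ≤ Real.log δ := Real.log_le_log (by linarith) h1z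
  have hC0 : 0 ≤ C := Finset.sum_nonneg fun _ _ => abs_nonneg _
  have hCz : (1 - z) * C ≤ δ * C := mul_le_mul_of_nonneg_right h1z hC0
  have hZ0 : 0 < Z := by
    have hsum : Summable (fun k : ℕ => 1 / (k:ℝ) ^ (1 + δ)) :=
      Real.summable_one_div_nat_rpow.2 (by linarith)
    refine hsum.tsum_pos (fun k => by positivity) 1 (by simp)
  rw [Real.log_mul hδ.ne' hZ0.ne']
  linarith

open Filter Topology in
lemma gl_laplace (A : ℝ) (n : ℕ)
    (h : ∀ m : ℕ, n ≤ m → Real.log (Real.log ((m:ℝ) + 1)) + A ≤ glS m) :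
    ∑ p ∈ Nat.primesLE n, (-Real.log (1 - 1 / (p:ℝ)) - 1 / (p:ℝ)) + A ≤
      Real.eulerMascheroniConstant := by
  apply le_of_forall_pos_le_add
  intro ε hε
  obtain ⟨C, hC⟩ := gl_laplace_fixed A n h ε hε
  have hδ : Tendsto (fun s : ℝ => s - 1) (𝓝[>] 1) (𝓝 0) := by
    have : Tendsto (fun s : ℝ => s - 1) (𝓝 1) (𝓝 (1 - 1)) := tendsto_id.sub_const 1
    rw [sub_self] at this
    exact this.mono_left nhdsWithin_le_nhds
  have hR : Tendsto (fun s : ℝ => Real.log ((s - 1) * ∑' k : ℕ, 1 / (k:ℝ) ^ s)) (𝓝[>] 1)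
      (𝓝 (Real.log 1)) :=
    (Real.continuousAt_log one_ne_zero).tendsto.comp tendsto_sub_mul_tsum_nat_rpow
  have hL : Tendsto (fun s : ℝ => ∑ p ∈ Nat.primesLE n,
      (-Real.log (1 - (p:ℝ) ^ (-s)) - (p:ℝ) ^ (-s)) +
        (A - Real.eulerMascheroniConstant - ε) - (s - 1) * C) (𝓝[>] 1)
      (𝓝 (∑ p ∈ Nat.primesLE n, (-Real.log (1 - 1 / (p:ℝ)) - 1 / (p:ℝ)) +
        (A - Real.eulerMascheroniConstant - ε) - 0 * C)) := by
    refine Tendsto.sub (Tendsto.add_const _ (tendsto_finsetSum _ fun p hp => ?_))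
      (hδ.mul_const C)
    have hp1 : (1:ℝ) < p := by exact_mod_cast (Nat.prime_of_mem_primesLE hp).one_lt
    have hpow : Tendsto (fun s : ℝ => (p:ℝ) ^ (-s)) (𝓝[>] 1) (𝓝 (1 / (p:ℝ))) := by
      have h1 : Tendsto (fun s : ℝ => (p:ℝ) ^ (-s)) (𝓝 1) (𝓝 ((p:ℝ) ^ (-(1:ℝ)))) :=
        (Real.continuousAt_const_rpow (by positivity)).tendsto.comp
          (tendsto_id.neg : Tendsto (fun s : ℝ => -s) (𝓝 1) (𝓝 (-1)))
      rw [Real.rpow_neg_one, ← one_div] at h1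
      exact h1.mono_left nhdsWithin_le_nhds
    have hne : 1 - 1 / (p:ℝ) ≠ 0 := by
      have : 1 / (p:ℝ) < 1 := by rw [div_lt_one (by linarith)]; exact hp1
      linarith
    exact (((hpow.const_sub 1).log hne).neg).sub hpow
  have := le_of_tendsto_of_tendsto hL hR (by
    filter_upwards [self_mem_nhdsWithin] with s hs
    have := hC (s - 1) (sub_pos.2 hs)
    rw [add_sub_cancel] at this
    exact this)
  rw [Real.log_one] at this
  linarith

/-- Explicit Mertens bound. -/
lemma gl_mertens (n : ℕ) (hn : 2000 ≤ n) :
    ∑ p ∈ Nat.primesLE n, -Real.log (1 - 1 / (p:ℝ)) ≤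
      Real.eulerMascheroniConstant + Real.log (Real.log n) + 1.914 / Real.log n := by
  have h := gl_laplace _ n (fun m hm => gl_abel n hn m hm)
  rw [Finset.sum_sub_distrib] at h
  unfold glS at h
  linarith

lemma gl_primes_card (m : ℕ) (hm : 2 ≤ m) : ((Nat.primesLE m).card : ℝ) ≤ m / 2 + 1 := by
  rw [Nat.primesLE_card_eq_primeCounting]
  have h := Nat.primeCounting'_add_le (a := 2) (k := 3) (by norm_num) (by norm_num) (m - 2)
  have h2 : 3 + (m - 2) = m + 1 := by omega
  rw [h2] at h
  have h3 : Nat.primeCounting' 3 = 1 := by decide +kernel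
  rw [h3, Nat.totient_two] at h
  have h4 : Nat.primeCounting m ≤ m / 2 + 1 := by
    unfold Nat.primeCounting
    omega
  calc ((Nat.primeCounting m : ℕ) : ℝ) ≤ ((m / 2 + 1 : ℕ) : ℝ) := by exact_mod_cast h4
    _ ≤ m / 2 + 1 := by
      push_cast
      have := Nat.cast_div_le (α := ℝ) (m := m) (n := 2)
      push_cast at this
      linarith

lemma gl_theta_lower (n : ℕ) (hn : 2000 ≤ n) : 0.59 * (n:ℝ) ≤ Chebyshev.theta n := by
  have hn0 : (2000:ℝ) ≤ n := by exact_mod_cast hn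
  have hln : 0 ≤ Real.log n := Real.log_natCast_nonneg n
  have h1 : Chebyshev.psi n ≤ Chebyshev.theta n +
      ((Nat.primesLE (Nat.sqrt n)).card : ℝ) * Real.log n := by
    rw [Chebyshev.psi_eq_sum_mul_log_prime, Chebyshev.theta_eq_sum_primesLE_log]
    have h2 : ((Nat.primesLE (Nat.sqrt n)).card : ℝ) * Real.log n =
        ∑ p ∈ Nat.primesLE n, (if p ≤ Nat.sqrt n then Real.log n else 0) := by
      rw [← Finset.sum_filter, Finset.sum_const, nsmul_eq_mul]
      congr 3
      ext p
      simp only [Finset.mem_filter, Nat.mem_primesLE]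
      have := Nat.sqrt_le_self n
      constructor
      · rintro ⟨a, b⟩; exact ⟨⟨a.trans this, b⟩, a⟩
      · rintro ⟨⟨_, b⟩, a⟩; exact ⟨a, b⟩
    rw [h2, ← Finset.sum_add_distrib]
    apply Finset.sum_le_sum
    intro p hp
    have hpp := Nat.prime_of_mem_primesLE hp
    have hlp : 0 ≤ Real.log p := Real.log_natCast_nonneg p
    split_ifs with hle
    · have h3 : p ^ Nat.log p n ≤ n := Nat.pow_log_le_self p (by omega)
      have h4 : Real.log ((p:ℝ) ^ Nat.log p n) ≤ Real.log n := by
        apply Real.log_le_log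
        · have := hpp.pos
          positivity
        · exact_mod_cast h3
      rw [Real.log_pow] at h4
      linarith
    · have h3 : n < p ^ 2 := by
        rw [sq]; exact Nat.sqrt_lt.1 (by omega)
      have h4 : Nat.log p n < 2 := Nat.log_lt_of_lt_pow (by omega) h3
      have h5 : (Nat.log p n : ℝ) ≤ 1 := by
        have : Nat.log p n ≤ 1 := by omega
        exact_mod_cast this
      nlinarith
  have hs : 2 ≤ Nat.sqrt n := by
    rw [Nat.le_sqrt]; omega
  have h2 := gl_primes_card _ hs
  have h3 : (Nat.sqrt n : ℝ) ≤ √n := Real.nat_sqrt_le_real_sqrt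
  have h4 := Chebyshev.psi_ge n
  set r := √(n:ℝ) with hr
  have hr2 : r ^ 2 = n := Real.sq_sqrt (by positivity)
  have hr0 : 0 ≤ r := Real.sqrt_nonneg _
  have hr1 : 44.7 ≤ r := by
    apply Real.le_sqrt_of_sq_le; norm_num; linarith
  have hlog : Real.log n = 2 * Real.log r := by
    rw [← hr2, Real.log_pow]; norm_num
  have l2 := Real.log_two_lt_d9
  have l2' := Real.log_two_gt_d9
  have hlr : Real.log r ≤ 3.1589 + r / 64 := by
    have h6 := Real.log_le_sub_one_of_pos (x := r / 64) (by positivity)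
    rw [Real.log_div (by positivity) (by norm_num)] at h6
    have h7 : Real.log 64 = 6 * Real.log 2 := by
      rw [show (64:ℝ) = 2 ^ 6 by norm_num, Real.log_pow]; norm_num
    linarith
  have hlr0 : 0 ≤ Real.log r := Real.log_nonneg (by linarith)
  have hlog1 : Real.log ((n:ℝ) + 1) ≤ Real.log n + 1 / 2000 := by
    have := Real.log_le_sub_one_of_pos (x := ((n:ℝ) + 1) / n) (by positivity)
    rw [Real.log_div (by positivity) (by positivity)] at this
    have h2 : ((n:ℝ) + 1) / n - 1 = 1 / n := by field_simp; ring
    have : 1 / (n:ℝ) ≤ 1 / 2000 := by gcongr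
    linarith
  have h5 : ((Nat.primesLE (Nat.sqrt n)).card : ℝ) * Real.log n ≤ (r / 2 + 1) * Real.log n :=
    mul_le_mul_of_nonneg_right (by linarith) hln
  have h6 : (r / 2 + 2) * Real.log n ≤ (r / 2 + 2) * (2 * (3.1589 + r / 64)) := by
    apply mul_le_mul_of_nonneg_left _ (by positivity)
    linarith
  have h7 : 0.69314 * (n:ℝ) ≤ n * Real.log 2 := by nlinarith
  have h8 : (0.59:ℝ) * r ^ 2 + (r / 2 + 2) * (2 * (3.1589 + r / 64)) + 1 / 2000 ≤
    0.69314 * r ^ 2 := by nlinarith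
  rw [hr2] at h8
  linarith

lemma gl_gamma_lt : Real.eulerMascheroniConstant < 0.61 := by
  have h := Real.eulerMascheroniConstant_lt_eulerMascheroniSeq' 16
  have h2 : Real.eulerMascheroniSeq' 16 = (harmonic 16 : ℝ) - Real.log 16 := by
    simp [Real.eulerMascheroniSeq']
  have h3 : Real.log 16 = 4 * Real.log 2 := by
    rw [show (16:ℝ) = 2 ^ 4 by norm_num, Real.log_pow]; norm_num
  have h4 : harmonic 16 < 3.381 := by
    simp only [harmonic, Finset.sum_range_succ, Finset.sum_range_zero]
    norm_num
  have h5 : (harmonic 16 : ℝ) < 3.381 := by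
    have : ((harmonic 16 : ℚ) : ℝ) < ((3.381 : ℚ) : ℝ) := by exact_mod_cast h4
    norm_num at this ⊢
  have := Real.log_two_gt_d9
  rw [h2, h3] at h
  norm_num at *
  linarith

lemma gl_prod_eq (n : ℕ) : ∏ p ∈ Nat.primesLE n, (1 - 1 / (p:ℝ))⁻¹ =
    Real.exp (∑ p ∈ Nat.primesLE n, -Real.log (1 - 1 / (p:ℝ))) := by
  rw [Real.exp_sum]
  apply Finset.prod_congr rfl
  intro p hp
  have hp1 : (1:ℝ) < p := by exact_mod_cast (Nat.prime_of_mem_primesLE hp).one_lt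
  have : 1 / (p:ℝ) < 1 := by rw [div_lt_one (by linarith)]; exact hp1
  rw [Real.exp_neg, Real.exp_log (by linarith)]

lemma gl_big (n : ℕ) (hn : 2000 ≤ n) :
    ∏ p ∈ Nat.primesLE n, (1 - 1 / (p:ℝ))⁻¹ ≤
      Real.exp Real.eulerMascheroniConstant * Real.log (Chebyshev.theta n) + 5.1 := by
  have hn0 : (2000:ℝ) ≤ n := by exact_mod_cast hn
  rw [gl_prod_eq]
  have h1 := gl_mertens n hn
  have l2' := Real.log_two_gt_d9
  have hL : 7.55 ≤ Real.log n := by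
    have h3 := gl_log_lb 2000 10 109 (by norm_num) (by norm_num)
    have h4 : Real.log (2000:ℕ) ≤ Real.log n := Real.log_le_log (by norm_num) (by exact_mod_cast hn)
    push_cast at h3 h4
    linarith
  set L := Real.log (n:ℝ) with hLdef
  have hL0 : 0 < L := by linarith
  have h2 := Real.exp_le_exp.2 h1
  rw [Real.exp_add, Real.exp_add, Real.exp_log hL0] at h2
  have hu0 : 0 ≤ 1.914 / L := by positivity
  have hu1 : 1.914 / L ≤ 0.254 := by
    rw [div_le_iff₀ hL0]; linarith
  set u := 1.914 / L with hu
  have huL : L * u = 1.914 := by rw [hu]; field_simp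
  have h3 := Real.exp_bound' hu0 (by linarith) (n := 3) (by norm_num)
  simp only [Finset.sum_range_succ, Finset.sum_range_zero, Nat.factorial] at h3
  norm_num at h3
  have h4 : Real.exp u ≤ 1 + u + 0.56 * u ^ 2 := by nlinarith [sq_nonneg u]
  have h5 : L * Real.exp u ≤ L + 2.2 := by
    have h6 := mul_le_mul_of_nonneg_left h4 hL0.le
    have h7 : L * (1 + u + 0.56 * u ^ 2) = L + L * u + 0.56 * (L * u) * u := by ring
    rw [h7, huL] at h6
    linarith
  have hth := gl_theta_lower n hn
  have h8 : L - 0.54 ≤ Real.log (Chebyshev.theta n) := by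
    have h9 := Real.log_le_log (by positivity) hth
    rw [Real.log_mul (by norm_num) (by positivity)] at h9
    have h10 : -0.54 ≤ Real.log 0.59 := by
      rw [Real.le_log_iff_exp_le (by norm_num), Real.exp_neg, inv_le_comm₀ (Real.exp_pos _) (by norm_num)]
      have := Real.sum_le_exp_of_nonneg (x := 0.54) (by norm_num) 4
      simp only [Finset.sum_range_succ, Finset.sum_range_zero, Nat.factorial] at this
      norm_num at this ⊢
      linarith
    linarith
  have hg : Real.exp Real.eulerMascheroniConstant ≤ 1.85 := by
    refine (Real.exp_le_exp.2 gl_gamma_lt.le).trans ?_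
    have := Real.exp_bound' (x := 0.61) (by norm_num) (by norm_num) (n := 5) (by norm_num)
    simp only [Finset.sum_range_succ, Finset.sum_range_zero, Nat.factorial] at this
    norm_num at this ⊢
    linarith
  have hg0 := Real.exp_pos Real.eulerMascheroniConstant
  have h9 : Real.exp Real.eulerMascheroniConstant * (L * Real.exp u) ≤
    Real.exp Real.eulerMascheroniConstant * (Real.log (Chebyshev.theta n) + 2.74) := by
    apply mul_le_mul_of_nonneg_left _ hg0.le
    linarith
  nlinarith
lemma gl_c1 : (∏ p ∈ Nat.primesLE 18, p) * 100 ≤ 554 * ∏ p ∈ Nat.primesLE 18, (p - 1) := by decide +kernel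
lemma gl_c2 : (∏ p ∈ Nat.primesLE 196, p) * 100 ≤ 953 * ∏ p ∈ Nat.primesLE 196, (p - 1) := by decide +kernel
set_option maxRecDepth 100000 in
lemma gl_c3 : (∏ p ∈ (Finset.Ioc 196 1999).filter (fun p => Nat.gcd p 13082761331670030 = 1), p) * 10000 ≤ 14320 * ∏ p ∈ (Finset.Ioc 196 1999).filter (fun p => Nat.gcd p 13082761331670030 = 1), (p - 1) := by decide +kernel
lemma gl_d1 : 2 ^ 23 ≤ primorial 19 := by decide +kernel
lemma gl_d2 : 2 ^ 264 ≤ primorial 197 := by decide +kernel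

lemma gl_factor_ge {p : ℕ} (hp : p.Prime) : 1 ≤ (1 - 1 / (p:ℝ))⁻¹ := by
  have hp1 : (1:ℝ) < p := by exact_mod_cast hp.one_lt
  have h1 : 1 / (p:ℝ) < 1 := by rw [div_lt_one (by linarith)]; exact hp1
  have h2 : 0 < 1 / (p:ℝ) := by positivity
  exact (one_le_inv₀ (by linarith)).2 (by linarith)

lemma gl_prod_mono {S T : Finset ℕ} (h : S ⊆ T) (hT : ∀ p ∈ T, 1 < p) :
    ∏ p ∈ S, (1 - 1 / (p:ℝ))⁻¹ ≤ ∏ p ∈ T, (1 - 1 / (p:ℝ))⁻¹ := by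
  have key : ∀ p ∈ T, 1 ≤ (1 - 1 / (p:ℝ))⁻¹ := by
    intro p hp
    have hp1 : (1:ℝ) < p := by exact_mod_cast hT p hp
    have h1 : 1 / (p:ℝ) < 1 := by rw [div_lt_one (by linarith)]; exact hp1
    have h2 : 0 < 1 / (p:ℝ) := by positivity
    exact (one_le_inv₀ (by linarith)).2 (by linarith)
  rw [← Finset.prod_sdiff h]
  have h1 : 1 ≤ ∏ p ∈ T \ S, (1 - 1 / (p:ℝ))⁻¹ := by
    have := Finset.prod_le_prod (s := T \ S) (f := fun _ => (1:ℝ))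
      (g := fun p : ℕ => (1 - 1 / (p:ℝ))⁻¹) (fun _ _ => zero_le_one)
      (fun p hp => key p (Finset.mem_sdiff.1 hp).1)
    simpa using this
  have h2 : 0 ≤ ∏ p ∈ S, (1 - 1 / (p:ℝ))⁻¹ :=
    Finset.prod_nonneg fun p hp => zero_le_one.trans (key p (h hp))
  nlinarith

lemma gl_prod_frac (T : Finset ℕ) (hT : ∀ p ∈ T, 1 < p) (a b : ℕ) (hb : 0 < b)
    (h : (∏ p ∈ T, p) * b ≤ a * ∏ p ∈ T, (p - 1)) :
    ∏ p ∈ T, (1 - 1 / (p:ℝ))⁻¹ ≤ a / b := by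
  have h1 : ∏ p ∈ T, (1 - 1 / (p:ℝ))⁻¹ = (∏ p ∈ T, (p:ℝ)) / ∏ p ∈ T, ((p:ℝ) - 1) := by
    rw [← Finset.prod_div_distrib]
    apply Finset.prod_congr rfl
    intro p hp
    have hp1 : (1:ℝ) < p := by exact_mod_cast hT p hp
    have : (p:ℝ) - 1 ≠ 0 := by linarith
    have : (p:ℝ) ≠ 0 := by linarith
    field_simp
  have h2 : ∏ p ∈ T, ((p:ℝ) - 1) = ((∏ p ∈ T, (p - 1) : ℕ) : ℝ) := by
    push_cast
    apply Finset.prod_congr rfl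
    intro p hp
    rw [Nat.cast_sub (hT p hp).le]; simp
  have h3 : 0 < ∏ p ∈ T, ((p:ℝ) - 1) := by
    apply Finset.prod_pos
    intro p hp
    have hp1 : (1:ℝ) < p := by exact_mod_cast hT p hp
    linarith
  have hb' : (0:ℝ) < b := by exact_mod_cast hb
  rw [h1, div_le_div_iff₀ h3 hb', h2]
  have h' : ((∏ p ∈ T, p : ℕ) : ℝ) * b ≤ a * ((∏ p ∈ T, (p - 1) : ℕ) : ℝ) := by exact_mod_cast h
  rwa [Nat.cast_prod] at h'

lemma gl_one_lt (n : ℕ) : ∀ p ∈ Nat.primesLE n, 1 < p := fun _ hp => Nat.one_lt_of_mem_primesLE hp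

lemma gl_b1 (y : ℕ) (hy : y ≤ 18) : ∏ p ∈ Nat.primesLE y, (1 - 1 / (p:ℝ))⁻¹ ≤ 5.54 := by
  refine (gl_prod_mono (Nat.primesLE_mono hy) (gl_one_lt _)).trans ?_
  refine (gl_prod_frac _ (gl_one_lt _) _ _ (by norm_num) gl_c1).trans ?_
  norm_num

lemma gl_b2 (y : ℕ) (hy : y ≤ 196) : ∏ p ∈ Nat.primesLE y, (1 - 1 / (p:ℝ))⁻¹ ≤ 9.53 := by
  refine (gl_prod_mono (Nat.primesLE_mono hy) (gl_one_lt _)).trans ?_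
  refine (gl_prod_frac _ (gl_one_lt _) _ _ (by norm_num) gl_c2).trans ?_
  norm_num

lemma gl_b3 (y : ℕ) (hy : y ≤ 1999) : ∏ p ∈ Nat.primesLE y, (1 - 1 / (p:ℝ))⁻¹ ≤ 13.65 := by
  set T := (Finset.Ioc 196 1999).filter (fun p => Nat.gcd p 13082761331670030 = 1) with hTdef
  have hT : ∀ p ∈ T, 1 < p := by
    intro p hp
    have := (Finset.mem_Ioc.1 (Finset.mem_filter.1 hp).1).1
    omega
  have hTb := gl_prod_frac T hT 14320 10000 (by norm_num) gl_c3
  have h2 := gl_b2 196 le_rfl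
  have hsub : Nat.primesLE y ⊆ Nat.primesLE 196 ∪ T := by
    intro p hp
    obtain ⟨h1, hpp⟩ := Nat.mem_primesLE.1 hp
    rw [Finset.mem_union, Nat.mem_primesLE]
    by_cases h : p ≤ 196
    · exact Or.inl ⟨h, hpp⟩
    · right
      rw [hTdef, Finset.mem_filter, Finset.mem_Ioc]
      refine ⟨⟨by omega, by omega⟩, ?_⟩
      have : Nat.Coprime p 13082761331670030 := by
        rw [hpp.coprime_iff_not_dvd]
        intro hd
        have e : 13082761331670030 = 2*3*5*7*11*13*17*19*23*29*31*37*41*43 := by norm_num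
        rw [e] at hd
        simp only [hpp.dvd_mul] at hd
        have aux : ∀ m : ℕ, 0 < m → m ≤ 196 → ¬ p ∣ m := fun m hm hm2 hd =>
          h ((Nat.le_of_dvd hm hd).trans hm2)
        simp [aux] at hd
      exact this
  have hdisj : Disjoint (Nat.primesLE 196) T := by
    rw [Finset.disjoint_left]
    intro p hp hp2
    have := (Finset.mem_Ioc.1 (Finset.mem_filter.1 hp2).1).1
    have := Nat.le_of_mem_primesLE hp
    omega
  refine (gl_prod_mono hsub ?_).trans ?_
  · intro p hp
    rcases Finset.mem_union.1 hp with h | h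
    · exact gl_one_lt _ p h
    · exact hT p h
  · rw [Finset.prod_union hdisj]
    have h3 : 0 ≤ ∏ p ∈ T, (1 - 1 / (p:ℝ))⁻¹ := by
      have := gl_prod_mono (Finset.empty_subset T) hT
      rw [Finset.prod_empty] at this
      linarith
    refine (mul_le_mul h2 hTb h3 (by norm_num)).trans ?_
    norm_num

lemma gl_expgamma : 1.648 ≤ Real.exp Real.eulerMascheroniConstant := by
  refine le_trans ?_ (Real.exp_le_exp.2 Real.one_half_lt_eulerMascheroniConstant.le)
  have := Real.sum_le_exp_of_nonneg (x := 1/2) (by norm_num) 6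
  simp only [Finset.sum_range_succ, Finset.sum_range_zero, Nat.factorial] at this
  norm_num at this ⊢
  linarith

lemma gl_theta_ge (y a m : ℕ) (hy : a ≤ y) (h : 2 ^ m ≤ primorial a) :
    m * Real.log 2 ≤ Chebyshev.theta y := by
  have h1 : Chebyshev.theta a ≤ Chebyshev.theta y := Chebyshev.theta_mono (by exact_mod_cast hy)
  rw [Chebyshev.theta_eq_log_primorial] at h1
  rw [Nat.floor_natCast] at h1
  refine le_trans ?_ h1
  rw [← Real.log_pow]
  exact Real.log_le_log (by positivity) (by exact_mod_cast h)

lemma gl_main (y : ℕ) (hy : 3 ≤ y) : ∏ p ∈ Nat.primesLE y, (1 - 1 / (p:ℝ))⁻¹ ≤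
      Real.exp Real.eulerMascheroniConstant * Real.log (Chebyshev.theta y) + 5.1 := by
  have hg := gl_expgamma
  have l2 := Real.log_two_gt_d9
  by_cases h1 : y ≤ 18
  · have hb := gl_b1 y h1
    have ht := gl_theta_ge y 3 2 hy (by decide +kernel)
    have h5 : (4/3:ℝ) ≤ Chebyshev.theta y := by push_cast at ht; linarith
    have ht2 : Real.log 6 ≤ Chebyshev.theta y := by
      have h1 : Chebyshev.theta (3:ℕ) ≤ Chebyshev.theta y := Chebyshev.theta_mono (by exact_mod_cast hy)
      rw [Chebyshev.theta_eq_log_primorial, Nat.floor_natCast] at h1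
      have : primorial 3 = 6 := by decide +kernel
      rw [this] at h1
      exact_mod_cast h1
    have h6 := gl_log_lb 6 2 5 (by norm_num) (by norm_num)
    have h7 : (1.7:ℝ) ≤ Chebyshev.theta y := by push_cast at h6; linarith
    have h8 : (2:ℝ)/2 * Real.log 2 / 2 ≤ Real.log 1.7 := by
      have := Real.log_le_log (x := 2) (y := 1.7 ^ 2) (by norm_num) (by norm_num)
      rw [Real.log_pow] at this
      push_cast at this; linarith
    have h9 := Real.log_le_log (by norm_num) h7
    nlinarith
  by_cases h2 : y ≤ 196
  · have hb := gl_b2 y h2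
    have ht := gl_theta_ge y 19 23 (by omega) gl_d1
    have h7 : (15.9:ℝ) ≤ Chebyshev.theta y := by push_cast at ht; linarith
    have h8 : 79 * Real.log 2 ≤ 20 * Real.log 15.9 := by
      have := Real.log_le_log (x := 2 ^ 79) (y := 15.9 ^ 20) (by norm_num) (by norm_num)
      rw [Real.log_pow, Real.log_pow] at this
      push_cast at this; linarith
    have h9 := Real.log_le_log (by norm_num) h7
    nlinarith
  by_cases h3 : y ≤ 1999
  · have hb := gl_b3 y h3
    have ht := gl_theta_ge y 197 264 (by omega) gl_d2
    have h7 : (182.9:ℝ) ≤ Chebyshev.theta y := by push_cast at ht; linarith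
    have h8 : 15 * Real.log 2 ≤ 2 * Real.log 182.9 := by
      have := Real.log_le_log (x := 2 ^ 15) (y := 182.9 ^ 2) (by norm_num) (by norm_num)
      rw [Real.log_pow, Real.log_pow] at this
      push_cast at this; linarith
    have h9 := Real.log_le_log (by norm_num) h7
    nlinarith
  exact gl_big y (by omega)

lemma gl_loglog6 : 0 < Real.log (Real.log 6) ∧ 5.1 ≤ 3 / Real.log (Real.log 6) := by
  have h1 := gl_log_lb 6 2 5 (by norm_num) (by norm_num)
  have h2 := gl_log_ub 6 17 44 (by norm_num) (by norm_num) (by norm_num)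
  have l2 := Real.log_two_gt_d9
  have l2' := Real.log_two_lt_d9
  push_cast at h1 h2
  have hpos : 0 < Real.log (Real.log 6) := Real.log_pos (by linarith)
  refine ⟨hpos, ?_⟩
  rw [le_div_iff₀ hpos]
  have : Real.log (Real.log 6) ≤ 3 / 5.1 := by
    rw [Real.log_le_iff_le_exp (by linarith)]
    have := Real.sum_le_exp_of_nonneg (x := 3/5.1) (by norm_num) 6
    simp only [Finset.sum_range_succ, Finset.sum_range_zero, Nat.factorial] at this
    norm_num at this ⊢
    linarith
  linarith

lemma gl_exchange (S P : Finset ℕ) (hc : S.card = P.card) (f : ℕ → ℝ) (c : ℝ)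
    (h1 : ∀ a ∈ S \ P, f a ≤ c) (h2 : ∀ b ∈ P \ S, c ≤ f b) :
    ∑ p ∈ S, f p ≤ ∑ p ∈ P, f p := by
  have e1 := Finset.sum_le_card_nsmul (S \ P) f c h1
  have e2 := Finset.card_nsmul_le_sum (P \ S) f c h2
  have e3 : (S \ P).card = (P \ S).card := by
    have a1 := Finset.card_sdiff_add_card_inter S P
    have a2 := Finset.card_sdiff_add_card_inter P S
    rw [Finset.inter_comm] at a2
    omega
  rw [e3] at e1
  have e4 := Finset.sum_inter_add_sum_sdiff S P f
  have e5 := Finset.sum_inter_add_sum_sdiff P S f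
  rw [Finset.inter_comm] at e5
  linarith

lemma gl_exists_y (k : ℕ) (hk : 2 ≤ k) : ∃ y, 3 ≤ y ∧ (Nat.primesLE y).card = k := by
  have hy : (Nat.primesLE (Nat.nth Nat.Prime (k - 1))).card = k := by
    rw [Nat.primesLE_card_eq_primeCounting, Nat.primeCounting, Nat.primeCounting',
      Nat.count_nth_succ_of_infinite Nat.infinite_setOfPred_prime]
    omega
  refine ⟨_, ?_, hy⟩
  by_contra h
  have h2 := Finset.card_le_card (Nat.primesLE_mono (show Nat.nth Nat.Prime (k - 1) ≤ 2 by omega))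
  have h3 : (Nat.primesLE 2).card = 1 := by decide +kernel
  omega

lemma gl_prod_eq_exp (S : Finset ℕ) (hS : ∀ p ∈ S, 1 < p) :
    ∏ p ∈ S, (1 - 1 / (p:ℝ))⁻¹ = Real.exp (∑ p ∈ S, -Real.log (1 - 1 / (p:ℝ))) := by
  rw [Real.exp_sum]
  apply Finset.prod_congr rfl
  intro p hp
  have hp1 : (1:ℝ) < p := by exact_mod_cast hS p hp
  have : 1 / (p:ℝ) < 1 := by rw [div_lt_one (by linarith)]; exact hp1
  rw [Real.exp_neg, Real.exp_log (by linarith)]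

lemma gl_neg_log_anti {a b : ℕ} (ha : 1 < a) (hab : a ≤ b) :
    -Real.log (1 - 1 / (b:ℝ)) ≤ -Real.log (1 - 1 / (a:ℝ)) := by
  have ha1 : (1:ℝ) < a := by exact_mod_cast ha
  have hab' : (a:ℝ) ≤ b := by exact_mod_cast hab
  have h1 : 1 / (a:ℝ) < 1 := by rw [div_lt_one (by linarith)]; exact ha1
  have h2 : 1 / (b:ℝ) ≤ 1 / a := one_div_le_one_div_of_le (by linarith) hab'
  have := Real.log_le_log (x := 1 - 1 / (a:ℝ)) (y := 1 - 1 / (b:ℝ)) (by linarith) (by linarith)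
  linarith

/-- The bound `D / φ(D) ≤ e^γ log log D + 5.1`, with `log D ≥ log 6`. -/
lemma gl_totient (D : ℕ) (hD1 : 1 < D) (hDsf : Squarefree D) (hk : 2 ≤ D.primeFactors.card) :
    Real.log 6 ≤ Real.log D ∧ (D:ℝ) ≤ Nat.totient D *
      (Real.exp Real.eulerMascheroniConstant * Real.log (Real.log D) + 5.1) := by
  obtain ⟨y, hy, hc⟩ := gl_exists_y _ hk
  have hS : ∀ p ∈ D.primeFactors, 1 < p := fun p hp => (Nat.prime_of_mem_primeFactors hp).one_lt
  have hS' : ∀ p ∈ D.primeFactors \ Nat.primesLE y, y < p := by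
    intro p hp
    rw [Finset.mem_sdiff, Nat.mem_primesLE] at hp
    by_contra h
    exact hp.2 ⟨by omega, Nat.prime_of_mem_primeFactors hp.1⟩
  have hP' : ∀ p ∈ Nat.primesLE y \ D.primeFactors, 1 < p ∧ p ≤ y := by
    intro p hp
    rw [Finset.mem_sdiff] at hp
    exact ⟨gl_one_lt _ p hp.1, Nat.le_of_mem_primesLE hp.1⟩
  have e1 : ∏ p ∈ D.primeFactors, (1 - 1 / (p:ℝ))⁻¹ ≤ ∏ p ∈ Nat.primesLE y, (1 - 1 / (p:ℝ))⁻¹ := by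
    rw [gl_prod_eq_exp _ hS, gl_prod_eq_exp _ (gl_one_lt _), Real.exp_le_exp]
    apply gl_exchange _ _ hc.symm _ (-Real.log (1 - 1 / (y:ℝ)))
    · intro a ha
      exact gl_neg_log_anti (by omega) (hS' a ha).le
    · intro b hb
      exact gl_neg_log_anti (hP' b hb).1 (hP' b hb).2
  have e2 : Chebyshev.theta y ≤ Real.log D := by
    have h1 : Real.log D = ∑ p ∈ D.primeFactors, Real.log p := by
      conv_lhs => rw [← Nat.prod_primeFactors_of_squarefree hDsf]
      rw [Nat.cast_prod, Real.log_prod]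
      intro p hp
      have := hS p hp
      positivity
    rw [h1, Chebyshev.theta_eq_sum_primesLE_log]
    have := gl_exchange (Nat.primesLE y) D.primeFactors hc (fun p => Real.log p) (Real.log y) ?_ ?_
    · exact this
    · intro a ha
      have h := hP' a ha
      exact Real.log_le_log (by exact_mod_cast (by omega : 0 < a)) (by exact_mod_cast h.2)
    · intro b hb
      exact Real.log_le_log (by exact_mod_cast (by omega : 0 < y)) (by exact_mod_cast (hS' b hb).le)
  have e3 : Real.log 6 ≤ Chebyshev.theta y := by
    have h1 : Chebyshev.theta (3:ℕ) ≤ Chebyshev.theta y := Chebyshev.theta_mono (by exact_mod_cast hy)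
    rw [Chebyshev.theta_eq_log_primorial, Nat.floor_natCast] at h1
    have : primorial 3 = 6 := by decide +kernel
    rw [this] at h1
    exact_mod_cast h1
  refine ⟨e3.trans e2, ?_⟩
  have l6 : 0 < Real.log 6 := Real.log_pos (by norm_num)
  have e4 := e1.trans (gl_main y hy)
  have e5 : Real.log (Chebyshev.theta y) ≤ Real.log (Real.log D) :=
    Real.log_le_log (by linarith) e2
  have e6 : ∏ p ∈ D.primeFactors, (1 - 1 / (p:ℝ))⁻¹ ≤
      Real.exp Real.eulerMascheroniConstant * Real.log (Real.log D) + 5.1 := by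
    have := mul_le_mul_of_nonneg_left e5 (Real.exp_pos Real.eulerMascheroniConstant).le
    linarith
  have e7 : (Nat.totient D : ℝ) = D * ∏ p ∈ D.primeFactors, (1 - 1 / (p:ℝ)) := by
    have := Nat.totient_eq_mul_prod_factors D
    have h2 : (((Nat.totient D : ℚ)) : ℝ) = ((D * ∏ p ∈ D.primeFactors, (1 - (p:ℚ)⁻¹) : ℚ) : ℝ) := by
      rw [this]
    push_cast at h2
    simpa using h2
  have e8 : (∏ p ∈ D.primeFactors, (1 - 1 / (p:ℝ))) * ∏ p ∈ D.primeFactors, (1 - 1 / (p:ℝ))⁻¹ = 1 := by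
    rw [← Finset.prod_mul_distrib]
    apply Finset.prod_eq_one
    intro p hp
    have hp1 : (1:ℝ) < p := by exact_mod_cast hS p hp
    have : 1 / (p:ℝ) < 1 := by rw [div_lt_one (by linarith)]; exact hp1
    exact mul_inv_cancel₀ (by linarith)
  calc (D:ℝ) = Nat.totient D * ∏ p ∈ D.primeFactors, (1 - 1 / (p:ℝ))⁻¹ := by
        rw [e7, mul_assoc, e8, mul_one]
    _ ≤ _ := mul_le_mul_of_nonneg_left e6 (Nat.cast_nonneg _)

lemma gl_legendre (p : ℕ) (hp : p.Prime) (a : ℤ) : |@legendreSym p ⟨hp⟩ a| ≤ 1 := by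
  haveI : Fact p.Prime := ⟨hp⟩
  rcases quadraticChar_isQuadratic (ZMod p) (a : ZMod p) with h | h | h <;>
    simp [legendreSym, h]

lemma gl_chiFour (p : ℕ) : |chiFour p| ≤ 1 := by
  unfold chiFour
  split_ifs with hp h
  · simp
  · exact gl_legendre p hp _
  · simp

lemma gl_chiThree (p : ℕ) : |chiThree p| ≤ 1 := by
  unfold chiThree
  split_ifs with hp h
  · simp
  · exact gl_legendre p hp _
  · simp

lemma gl_prod_chi (S : Finset ℕ) (f : ℕ → ℤ) (hf : ∀ p, |f p| ≤ 2) : |∏ p ∈ S, f p| ≤ 2 ^ S.card := by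
  rw [Finset.abs_prod, ← Finset.prod_const]
  exact Finset.prod_le_prod (fun _ _ => abs_nonneg _) (fun p _ => hf p)

lemma gl_e_bound (χ : ℕ → ℤ) (hχ : ∀ p, |χ p| ≤ 1) (S T : Finset ℕ) :
    (∏ p ∈ S, (1 - χ p)) * ∏ p ∈ T, (1 + χ p) ≤ 2 ^ (S.card + T.card) := by
  refine (le_abs_self _).trans ?_
  rw [abs_mul, pow_add]
  refine mul_le_mul (gl_prod_chi _ _ ?_) (gl_prod_chi _ _ ?_) (abs_nonneg _) (by positivity)
  · intro p
    have := abs_le.1 (hχ p)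
    rw [abs_le]; constructor <;> linarith [this.1, this.2]
  · intro p
    have := abs_le.1 (hχ p)
    rw [abs_le]; constructor <;> linarith [this.1, this.2]

lemma gl_four_pow (n : ℕ) (hn : 0 < n) : (4:ℝ) ^ n.primeFactors.card ≤ 8 / 3 * n := by
  have h1 : ∏ p ∈ n.primeFactors, (4:ℝ) ≤ ∏ p ∈ n.primeFactors,
      (((if p = 2 then (2:ℝ) else 1) * (if p = 3 then (4/3:ℝ) else 1)) * p) := by
    apply Finset.prod_le_prod
    · intros; norm_num
    · intro p hp
      have hpp := Nat.prime_of_mem_primeFactors hp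
      have h2 := hpp.two_le
      by_cases a : p = 2
      · subst a; norm_num
      by_cases b : p = 3
      · subst b; norm_num
      have c : p ≠ 4 := by rintro rfl; norm_num at hpp
      have d : (4:ℝ) ≤ p := by exact_mod_cast (by omega : 4 ≤ p)
      simpa [a, b] using d
  rw [Finset.prod_const, Finset.prod_mul_distrib, Finset.prod_mul_distrib, Finset.prod_ite_eq',
    Finset.prod_ite_eq', ← Nat.cast_prod] at h1
  refine h1.trans ?_
  have h3 : ((∏ p ∈ n.primeFactors, p : ℕ) : ℝ) ≤ n := by
    exact_mod_cast Nat.le_of_dvd hn (Nat.prod_primeFactors_dvd n)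
  have h4 : (if 2 ∈ n.primeFactors then (2:ℝ) else 1) * (if 3 ∈ n.primeFactors then (4/3:ℝ) else 1) ≤ 8/3 := by
    split_ifs <;> norm_num
  exact mul_le_mul h4 h3 (Nat.cast_nonneg _) (by norm_num)

lemma gl_psi_ge (N : ℕ) : (N:ℝ) ≤ dedekindPsi N := by
  unfold dedekindPsi
  have : (1:ℝ) ≤ ∏ p ∈ N.primeFactors, (1 + 1 / (p : ℝ)) := by
    have := Finset.prod_le_prod (s := N.primeFactors) (f := fun _ => (1:ℝ))
      (g := fun p : ℕ => (1 + 1 / (p:ℝ))) (fun _ _ => zero_le_one)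
      (fun p _ => by have : 0 ≤ 1 / (p:ℝ) := by positivity
                     linarith)
    simpa using this
  exact le_mul_of_one_le_right (Nat.cast_nonneg _) this

/-- For `D > 1` a squarefree integer with an even number of distinct prime
factors (so `D ≥ 6`) and `N` a positive integer coprime to `D`, one has
`φ(D)ψ(N)/12 - e₁(D,N)/4 - e₃(D,N)/3
  > (DN/12)(1/(e^γ log log (DN) + 3/log log 6)) - 7√(DN)/3`. -/
theorem genus_lower_bound' (D N : ℕ) (hD1 : 1 < D) (hDsf : Squarefree D)
    (hDeven : Even D.primeFactors.card) (hNpos : 0 < N) (hgcd : Nat.gcd D N = 1) :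
    (Nat.totient D : ℝ) * dedekindPsi N / 12 - (eOne D N : ℝ) / 4 - (eThree D N : ℝ) / 3 >
      ((D : ℝ) * N) / 12 *
        (1 / (Real.exp Real.eulerMascheroniConstant * Real.log (Real.log ((D : ℝ) * N)) +
          3 / Real.log (Real.log 6))) -
      7 / 3 * Real.sqrt ((D : ℝ) * N) := by
  have hk : 2 ≤ D.primeFactors.card := by
    have h0 : D.primeFactors.card ≠ 0 := by
      rw [Ne, Finset.card_eq_zero, Nat.primeFactors_eq_empty]
      omega
    obtain ⟨r, hr⟩ := hDeven
    omega
  obtain ⟨h6, hD⟩ := gl_totient D hD1 hDsf hk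
  obtain ⟨hl, h51⟩ := gl_loglog6
  have hDpos : (0:ℝ) < D := by exact_mod_cast (by omega : 0 < D)
  have hN1 : (1:ℝ) ≤ N := by exact_mod_cast hNpos
  have l6 : 1 < Real.log 6 := by
    by_contra h
    have : Real.log (Real.log 6) ≤ 0 :=
      Real.log_nonpos (Real.log_nonneg (by norm_num)) (not_lt.1 h)
    linarith
  have hDN : Real.log D ≤ Real.log ((D:ℝ) * N) :=
    Real.log_le_log hDpos (le_mul_of_one_le_right hDpos.le hN1)
  have hll : Real.log (Real.log D) ≤ Real.log (Real.log ((D:ℝ) * N)) :=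
    Real.log_le_log (by linarith) hDN
  have hll0 : 0 ≤ Real.log (Real.log D) := Real.log_nonneg (by linarith)
  have hg := Real.exp_pos Real.eulerMascheroniConstant
  set B := Real.exp Real.eulerMascheroniConstant * Real.log (Real.log ((D : ℝ) * N)) +
          3 / Real.log (Real.log 6) with hB
  have hB0 : 0 < B := by
    have : 0 ≤ Real.exp Real.eulerMascheroniConstant * Real.log (Real.log ((D : ℝ) * N)) :=
      mul_nonneg hg.le (hll0.trans hll)
    linarith
  have hDB : (D:ℝ) ≤ Nat.totient D * B := by
    refine hD.trans (mul_le_mul_of_nonneg_left ?_ (Nat.cast_nonneg _))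
    have := mul_le_mul_of_nonneg_left hll hg.le
    linarith
  have hmain : ((D : ℝ) * N) / 12 * (1 / B) ≤ (Nat.totient D : ℝ) * dedekindPsi N / 12 := by
    have h1 : (D:ℝ) / B ≤ Nat.totient D := by rwa [div_le_iff₀ hB0]
    have h2 := mul_le_mul h1 (gl_psi_ge N) (by positivity) (Nat.cast_nonneg _)
    calc ((D : ℝ) * N) / 12 * (1 / B) = (D / B * N) / 12 := by ring
      _ ≤ _ := by linarith
  have hcard : (D * N).primeFactors.card = D.primeFactors.card + N.primeFactors.card := by
    have hcop : Nat.Coprime D N := hgcd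
    rw [hcop.primeFactors_mul, Finset.card_union_of_disjoint hcop.disjoint_primeFactors]
  have b1 : (eOne D N : ℝ) ≤ 2 ^ (D * N).primeFactors.card := by
    rw [hcard]
    exact_mod_cast gl_e_bound chiFour gl_chiFour D.primeFactors N.primeFactors
  have b2 : (eThree D N : ℝ) ≤ 2 ^ (D * N).primeFactors.card := by
    rw [hcard]
    exact_mod_cast gl_e_bound chiThree gl_chiThree D.primeFactors N.primeFactors
  have b3 := gl_four_pow (D * N) (by positivity)
  push_cast at b3
  have hx : 0 < (D:ℝ) * N := by positivity
  have b4 : (2:ℝ) ^ (D * N).primeFactors.card < 4 * Real.sqrt ((D:ℝ) * N) := by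
    have h4 : ((2:ℝ) ^ (D * N).primeFactors.card) ^ 2 = 4 ^ (D * N).primeFactors.card := by
      rw [← pow_mul, mul_comm, pow_mul]; norm_num
    apply lt_of_pow_lt_pow_left₀ 2 (by positivity)
    rw [h4, mul_pow, Real.sq_sqrt hx.le]
    linarith
  linarith
end

section
/- Let Δ be a negative integer with Δ ≡ 0 or 1 (mod 4), let o(Δ) = ℤ[x]/(x² − Δx + (Δ² − Δ)/4) be the imaginary quadratic order of discriminant Δ, and let r be the number of distinct odd primes dividing Δ. Then the number of elements c of the class group Pic(o(Δ)) = ClassGroup o(Δ) satisfying c² = 1 is equal to 2^μ, where μ = r − 1 if Δ ≡ 1 (mod 4) or Δ ≡ 4 (mod 16); μ = r if Δ ≡ 8 or 12 (mod 16) or Δ ≡ 16 (mod 32); and μ = r + 1 if Δ ≡ 0 (mod 32). -/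
open Polynomial

/-- The imaginary quadratic order of discriminant `Δ`:
`o(Δ) = ℤ[x]/(x² − Δx + (Δ² − Δ)/4)`. -/
abbrev quadOrder (Δ : ℤ) : Type :=
  ℤ[X] ⧸ Ideal.span {(X ^ 2 - C Δ * X + C ((Δ ^ 2 - Δ) / 4) : ℤ[X])}



def cpairs (n : ℕ) : Finset (ℕ × ℕ) :=
  n.divisorsAntidiagonal.filter (fun p => Nat.Coprime p.1 p.2)

lemma mem_cpairs {n : ℕ} {p : ℕ × ℕ} :
    p ∈ cpairs n ↔ p.1 * p.2 = n ∧ n ≠ 0 ∧ Nat.Coprime p.1 p.2 := by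
  simp [cpairs, Nat.mem_divisorsAntidiagonal, and_assoc]

lemma coprime_fact_prod (n : ℕ) (s t : Finset ℕ) (hs : ∀ p ∈ s, p.Prime) (ht : ∀ p ∈ t, p.Prime)
    (hst : Disjoint s t) :
    Nat.Coprime (∏ p ∈ s, p ^ n.factorization p) (∏ p ∈ t, p ^ n.factorization p) := by
  apply Nat.Coprime.prod_left
  intro p hp
  apply Nat.Coprime.prod_right
  intro q hq
  apply Nat.Coprime.pow
  rw [Nat.coprime_primes (hs p hp) (ht q hq)]
  rintro rfl
  exact Finset.disjoint_left.mp hst hp hq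

lemma card_cpairs (n : ℕ) (hn : n ≠ 0) : (cpairs n).card = 2 ^ n.primeFactors.card := by
  rw [← Finset.card_powerset]
  refine Finset.card_bij' (fun p _ => p.1.primeFactors)
    (fun s _ => (∏ p ∈ s, p ^ n.factorization p, ∏ p ∈ n.primeFactors \ s, p ^ n.factorization p))
    ?_ ?_ ?_ ?_
  · rintro ⟨a, b⟩ h
    rw [mem_cpairs] at h
    obtain ⟨rfl, h0, hc⟩ := h
    rw [Finset.mem_powerset]
    exact Nat.primeFactors_mono (dvd_mul_right _ _) h0
  · intro s hs
    rw [Finset.mem_powerset] at hs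
    rw [mem_cpairs]
    refine ⟨?_, hn, ?_⟩
    · simp only
      rw [mul_comm, Finset.prod_sdiff hs]
      exact Nat.prod_factorization_pow_eq_self hn
    · apply coprime_fact_prod
      · intro p hp; exact Nat.prime_of_mem_primeFactors (hs hp)
      · intro p hp; exact Nat.prime_of_mem_primeFactors (Finset.mem_sdiff.mp hp).1
      · exact Finset.disjoint_sdiff
  · rintro ⟨a, b⟩ h
    rw [mem_cpairs] at h
    obtain ⟨rfl, h0, hc⟩ := h
    simp only at h0 hc ⊢
    have ha : a ≠ 0 := left_ne_zero_of_mul h0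
    have hb : b ≠ 0 := right_ne_zero_of_mul h0
    have key : ∀ a b : ℕ, a ≠ 0 → b ≠ 0 → Nat.Coprime a b →
        ∏ p ∈ a.primeFactors, p ^ (a * b).factorization p = a := by
      intro a b ha hb hc
      conv_rhs => rw [← Nat.prod_factorization_pow_eq_self ha]
      apply Finset.prod_congr rfl
      intro p hp
      rw [Nat.factorization_mul ha hb, Finsupp.add_apply]
      have : b.factorization p = 0 := by
        apply Nat.factorization_eq_zero_of_not_dvd
        intro hpb
        exact Finset.disjoint_left.mp hc.disjoint_primeFactors hp
          (Nat.mem_primeFactors.mpr ⟨Nat.prime_of_mem_primeFactors hp, hpb, hb⟩)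
      rw [this, add_zero]
    have h2 : (a * b).primeFactors \ a.primeFactors = b.primeFactors := by
      rw [Nat.primeFactors_mul ha hb, Finset.union_sdiff_left]
      exact Finset.sdiff_eq_self_of_disjoint hc.disjoint_primeFactors.symm
    rw [h2, key a b ha hb hc]
    congr 1
    rw [mul_comm a b, key b a hb ha hc.symm]
  · intro s hs
    rw [Finset.mem_powerset] at hs
    simp only
    ext q
    rw [Nat.mem_primeFactors]
    constructor
    · rintro ⟨hq, hd, -⟩
      obtain ⟨p, hp, hqp⟩ := (Prime.dvd_finsetProd_iff hq.prime _).mp hd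
      have := hq.dvd_of_dvd_pow hqp
      rw [Nat.prime_dvd_prime_iff_eq hq (Nat.prime_of_mem_primeFactors (hs hp))] at this
      rwa [this]
    · intro hq
      have hqn := hs hq
      have hqp := Nat.prime_of_mem_primeFactors hqn
      refine ⟨hqp, ?_, ?_⟩
      · refine dvd_trans ?_ (Finset.dvd_prod_of_mem _ hq)
        apply dvd_pow_self
        exact (hqp.factorization_pos_of_dvd hn (Nat.dvd_of_mem_primeFactors hqn)).ne'
      · rw [Finset.prod_ne_zero_iff]
        intro p hp
        exact pow_ne_zero _ (Nat.prime_of_mem_primeFactors (hs hp)).ne_zero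

def amb0 (Δ : ℤ) : Set (ℤ × ℤ × ℤ) :=
  {t | 0 < t.1 ∧ t.2.1 = 0 ∧ t.2.1 ^ 2 - 4 * t.1 * t.2.2 = Δ ∧ IsCoprime t.1 t.2.2}

def amb1 (Δ : ℤ) : Set (ℤ × ℤ × ℤ) :=
  {t | 0 < t.1 ∧ t.2.1 = t.1 ∧ t.2.1 ^ 2 - 4 * t.1 * t.2.2 = Δ ∧ IsCoprime t.1 t.2.2}

def ambSet (Δ : ℤ) : Set (ℤ × ℤ × ℤ) := amb0 Δ ∪ amb1 Δ

lemma cpairs_inj {n : ℕ} {p q : ℕ × ℕ} (hp : p ∈ cpairs n) (hq : q ∈ cpairs n)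
    (h : p.1 = q.1) : p = q := by
  rw [mem_cpairs] at hp hq
  obtain ⟨h1, h0, -⟩ := hp
  obtain ⟨h2, -, -⟩ := hq
  ext
  · exact h
  · rw [← h2, h] at h1
    refine Nat.eq_of_mul_eq_mul_left (Nat.pos_of_ne_zero ?_) h1
    rintro h3
    rw [← h2, h3] at h0
    simp at h0

lemma ncard_of_image {n : ℕ} (hn : n ≠ 0) (f : ℕ × ℕ → ℤ × ℤ × ℤ) (k : ℤ) (hk : k ≠ 0)
    (hf : ∀ p, (f p).1 = k * p.1) {s : Set (ℤ × ℤ × ℤ)} (hs : s = f '' (cpairs n : Set (ℕ × ℕ))) :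
    s.Finite ∧ s.ncard = 2 ^ n.primeFactors.card := by
  rw [hs]
  refine ⟨(cpairs n).finite_toSet.image _, ?_⟩
  rw [Set.ncard_image_of_injOn, Set.ncard_coe_finset, card_cpairs n hn]
  intro p hp q hq hpq
  apply cpairs_inj hp hq
  have := congrArg Prod.fst hpq
  rw [hf, hf] at this
  exact_mod_cast mul_left_cancel₀ hk this

lemma amb0_eq (m : ℕ) (hm : m ≠ 0) :
    amb0 (-4 * m) = (fun p : ℕ × ℕ => ((1 * p.1 : ℤ), (0 : ℤ), (p.2 : ℤ))) ''
      (cpairs m : Set (ℕ × ℕ)) := by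
  ext ⟨a, b, c⟩
  simp only [amb0, Set.mem_ofPred_eq, Set.mem_image, Finset.mem_coe, mem_cpairs, Prod.mk.injEq,
    Prod.exists]
  constructor
  · rintro ⟨ha, rfl, h, hc⟩
    have hac : a * c = m := by linarith
    have hc0 : 0 < c := by
      have : 0 < a * c := by rw [hac]; exact_mod_cast Nat.pos_of_ne_zero hm
      exact pos_of_mul_pos_right this ha.le
    lift a to ℕ using ha.le
    lift c to ℕ using hc0.le
    exact ⟨a, c, ⟨by exact_mod_cast hac, hm, Nat.isCoprime_iff_coprime.mp hc⟩, by simp⟩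
  · rintro ⟨a', c', ⟨h, -, hc⟩, rfl, rfl, rfl⟩
    subst h
    refine ⟨?_, rfl, ?_, ?_⟩
    · have := left_ne_zero_of_mul hm
      positivity
    · push_cast; ring
    · simpa using Nat.isCoprime_iff_coprime.mpr hc

lemma amb0_empty {Δ : ℤ} (h : Δ % 4 = 1) : amb0 Δ = ∅ := by
  ext ⟨a, b, c⟩
  simp only [amb0, Set.mem_ofPred_eq, Set.mem_empty_iff_false, iff_false]
  rintro ⟨ha, rfl, h1, hc⟩
  rw [← h1] at h
  have : (0:ℤ) ^ 2 - 4 * a * c = 4 * (-(a * c)) := by ring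
  omega

/-- D ≡ 3 mod 4 -/
lemma amb1_odd (D : ℕ) (h : D % 4 = 3) :
    amb1 (-D) = (fun p : ℕ × ℕ => ((1 * p.1 : ℤ), (p.1 : ℤ), ((p.1 + p.2) / 4 : ℤ))) ''
      (cpairs D : Set (ℕ × ℕ)) := by
  ext ⟨a, b, c⟩
  simp only [amb1, Set.mem_ofPred_eq, Set.mem_image, Finset.mem_coe, mem_cpairs, Prod.mk.injEq,
    Prod.exists]
  constructor
  · rintro ⟨ha, rfl, h1, hc⟩
    obtain ⟨f, hf⟩ : ∃ f, f = 4 * c - b := ⟨_, rfl⟩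
    have hc4 : c = (b + f) / 4 := by omega
    have hac : b * f = D := by rw [hf]; linarith
    have hc0 : 0 < f := by
      have : 0 < b * f := by rw [hac]; omega
      exact pos_of_mul_pos_right this ha.le
    have hcop : IsCoprime b f := by
      have h2 : IsCoprime b (2 * 2) := by
        have : IsCoprime b 2 := by
          rw [Int.isCoprime_iff_gcd_eq_one, Int.gcd_comm]
          rw [← Int.isCoprime_iff_gcd_eq_one, Prime.coprime_iff_not_dvd Int.prime_two]
          intro h2
          have : (2:ℤ) ∣ D := hac ▸ h2.mul_right f
          omega
        exact this.mul_right this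
      have h3 := h2.mul_right hc
      rw [hf]
      have : 4 * c - b = 2 * 2 * c + b * (-1) := by ring
      rw [this]
      exact IsCoprime.add_mul_left_right_iff.mpr h3
    lift b to ℕ using ha.le
    lift f to ℕ using hc0.le
    exact ⟨b, f, ⟨by exact_mod_cast hac, by omega, Nat.isCoprime_iff_coprime.mp hcop⟩, by simp [hc4]⟩
  · rintro ⟨a', f, ⟨h2, -, hc⟩, rfl, rfl, rfl⟩
    have h4 : (a' + f) % 4 = 0 := by
      have := Nat.mul_mod a' f 4
      rw [h2, h] at this
      have h5 := Nat.mod_lt a' (show 4 > 0 by norm_num)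
      have h6 := Nat.mod_lt f (show 4 > 0 by norm_num)
      rw [Nat.add_mod]
      generalize a' % 4 = x at *
      generalize f % 4 = y at *
      interval_cases x <;> interval_cases y <;> omega
    obtain ⟨c, hcc⟩ : ∃ c : ℤ, (a' : ℤ) + f = 4 * c := ⟨((a' : ℤ) + f) / 4, by omega⟩
    have hc4 : ((a':ℤ) + f) / 4 = c := by omega
    have hf : (f : ℤ) = 4 * c - a' := by omega
    rw [hc4]
    refine ⟨?_, by simp, ?_, ?_⟩
    · have : a' ≠ 0 := by rintro rfl; simp at h2; omega
      positivity
    · rw [← h2]; push_cast; rw [hf]; ring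
    · have := Nat.isCoprime_iff_coprime.mpr hc
      rw [hf] at this
      have h7 : 4 * c - (a':ℤ) = 4 * c + a' * (-1) := by ring
      rw [h7, IsCoprime.add_mul_left_right_iff] at this
      rw [one_mul]
      exact this.of_mul_right_right

/-- analysis of `amb1` for Δ = -4 m -/
lemma amb1_even_mem {m : ℕ} (hm : m ≠ 0) {a b c : ℤ} (h : (a, b, c) ∈ amb1 (-4 * m)) :
    ∃ e f : ℕ, a = 2 * e ∧ b = 2 * e ∧ (e : ℤ) + f = 2 * c ∧ e * f = m ∧ c % 2 = 1 ∧
      IsCoprime (e : ℤ) c := by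
  obtain ⟨ha, hb, h1, hc⟩ := h
  simp only at ha hb h1 hc
  subst hb
  have h2 : (2:ℤ) ∣ b := by
    have : (2:ℤ) ∣ b ^ 2 := ⟨2 * b * c - 2 * m, by linarith⟩
    exact Int.prime_two.dvd_of_dvd_pow this
  obtain ⟨e, rfl⟩ := h2
  have hem : e * (2 * c - e) = m := by nlinarith
  have he : 0 < e := by omega
  have hf : 0 < 2 * c - e := by
    have : 0 < e * (2 * c - e) := by rw [hem]; exact_mod_cast Nat.pos_of_ne_zero hm
    exact pos_of_mul_pos_right this he.le
  obtain ⟨f, hff⟩ : ∃ f, f = 2 * c - e := ⟨_, rfl⟩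
  rw [← hff] at hem hf
  have hc2 : c % 2 = 1 := by
    have := hc.of_mul_left_left
    rw [Prime.coprime_iff_not_dvd Int.prime_two] at this
    omega
  have hec := hc.of_mul_left_right
  lift e to ℕ using he.le
  lift f to ℕ using hf.le
  exact ⟨e, f, rfl, rfl, by omega, by exact_mod_cast hem, hc2, hec⟩

lemma amb1_m_odd (m : ℕ) (h : m % 4 = 1) :
    amb1 (-4 * m) = (fun p : ℕ × ℕ => ((2 * p.1 : ℤ), (2 * p.1 : ℤ), ((p.1 + p.2) / 2 : ℤ))) ''
      (cpairs m : Set (ℕ × ℕ)) := by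
  ext ⟨a, b, c⟩
  simp only [Set.mem_image, Finset.mem_coe, mem_cpairs, Prod.mk.injEq,
    Prod.exists]
  constructor
  · intro h0
    obtain ⟨e, f, rfl, rfl, h1, h2, h3, h4⟩ := amb1_even_mem (by omega) h0
    refine ⟨e, f, ⟨h2, by omega, ?_⟩, rfl, rfl, by omega⟩
    rw [← Nat.isCoprime_iff_coprime]
    have h5 : (f:ℤ) = 2 * c + e * (-1) := by linarith
    rw [h5, IsCoprime.add_mul_left_right_iff]
    refine IsCoprime.mul_right ?_ h4
    apply IsCoprime.symm
    rw [Prime.coprime_iff_not_dvd Int.prime_two]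
    intro h6
    have : 2 ∣ m := h2 ▸ (Int.natCast_dvd_natCast.mp h6).mul_right f
    omega
  · rintro ⟨e, f, ⟨h2, -, hc⟩, rfl, rfl, rfl⟩
    have h4 : (e + f) % 4 = 2 ∧ e % 2 = 1 := by
      have := Nat.mul_mod e f 4
      rw [h2, h] at this
      have h5 := Nat.mod_lt e (show 4 > 0 by norm_num)
      have h6 := Nat.mod_lt f (show 4 > 0 by norm_num)
      rw [Nat.add_mod]
      have h7 : e % 2 = (e % 4) % 2 := by omega
      rw [h7]
      generalize e % 4 = x at *
      generalize f % 4 = y at *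
      interval_cases x <;> interval_cases y <;> omega
    obtain ⟨c, hcc⟩ : ∃ c : ℤ, (e : ℤ) + f = 2 * c := ⟨((e : ℤ) + f) / 2, by omega⟩
    have hc4 : ((e:ℤ) + f) / 2 = c := by omega
    have hf : (f : ℤ) = 2 * c - e := by omega
    rw [hc4]
    refine ⟨?_, by simp, ?_, ?_⟩
    · have : e ≠ 0 := by rintro rfl; simp at h2; omega
      simp only
      positivity
    · rw [← h2]; push_cast; rw [hf]; ring
    · have := Nat.isCoprime_iff_coprime.mpr hc
      rw [hf] at this
      have h7 : 2 * c - (e:ℤ) = 2 * c + e * (-1) := by ring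
      rw [h7, IsCoprime.add_mul_left_right_iff] at this
      refine IsCoprime.mul_left ?_ this.of_mul_right_right
      simp only
      rw [Prime.coprime_iff_not_dvd Int.prime_two]
      omega

lemma amb1_m_8 (m : ℕ) (h : m % 2 = 0) (hm : m ≠ 0) :
    amb1 (-4 * (4 * m : ℕ)) = (fun p : ℕ × ℕ => ((4 * p.1 : ℤ), (4 * p.1 : ℤ), ((p.1 + p.2) : ℤ))) ''
      (cpairs m : Set (ℕ × ℕ)) := by
  ext ⟨a, b, c⟩
  simp only [Set.mem_image, Finset.mem_coe, mem_cpairs, Prod.mk.injEq,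
    Prod.exists]
  constructor
  · intro h0
    obtain ⟨e, f, rfl, rfl, h1, h2, h3, h4⟩ := amb1_even_mem (by omega) h0
    have he : 2 ∣ e := by
      by_contra he
      have : 2 ∣ e * f := h2 ▸ ⟨2 * m, by ring⟩
      rcases (Nat.Prime.dvd_mul Nat.prime_two).mp this with h | h
      · exact he h
      · omega
    obtain ⟨e, rfl⟩ := he
    obtain ⟨f, rfl⟩ : 2 ∣ f := by omega
    push_cast at h1
    refine ⟨e, f, ⟨by linarith, by omega, ?_⟩, by push_cast; ring, by push_cast; ring, by omega⟩
    rw [← Nat.isCoprime_iff_coprime]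
    have h5 : (f:ℤ) = c + e * (-1) := by linarith
    rw [h5, IsCoprime.add_mul_left_right_iff]
    push_cast at h4
    exact h4.of_mul_left_right
  · rintro ⟨e, f, ⟨h2, -, hc⟩, rfl, rfl, rfl⟩
    have hodd : ¬ (2:ℤ) ∣ (e + f) := by
      intro h3
      have : 2 ∣ e * f := by omega
      have h4 : 2 ∣ e ∧ 2 ∣ f := by
        rcases (Nat.Prime.dvd_mul Nat.prime_two).mp this with h | h <;> omega
      have := Nat.dvd_gcd h4.1 h4.2
      rw [hc.gcd_eq_one] at this
      omega
    refine ⟨?_, by simp, ?_, ?_⟩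
    · have : e ≠ 0 := by rintro rfl; simp at h2; omega
      simp only
      positivity
    · rw [← h2]; push_cast; ring
    · have := Nat.isCoprime_iff_coprime.mpr hc
      have h8 : IsCoprime (2:ℤ) (e + f) := by rwa [Prime.coprime_iff_not_dvd Int.prime_two]
      have h9 : IsCoprime (e:ℤ) (e + f) := by
        have : (e:ℤ) + f = f + e * 1 := by ring
        rw [this, IsCoprime.add_mul_left_right_iff]
        assumption
      have := (h8.mul_left h8).mul_left h9
      simpa using this

lemma amb1_m_empty (m : ℕ) (h : m % 4 = 3 ∨ m % 4 = 2 ∨ m % 8 = 4) :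
    amb1 (-4 * m) = ∅ := by
  ext ⟨a, b, c⟩
  simp only [Set.mem_empty_iff_false, iff_false]
  intro h0
  obtain ⟨e, f, rfl, rfl, h1, h2, h3, h4⟩ := amb1_even_mem (by omega) h0
  have h4 : (e + f) % 4 = 2 := by omega
  have h5 := Nat.mod_lt e (show 8 > 0 by norm_num)
  have h6 := Nat.mod_lt f (show 8 > 0 by norm_num)
  have h7 : m % 8 = ((e % 8) * (f % 8)) % 8 := by rw [← h2, Nat.mul_mod]
  generalize hx : e % 8 = x at *
  generalize hy : f % 8 = y at *
  interval_cases x <;> interval_cases y <;> omega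

lemma primeFactors_four_mul (m : ℕ) (hm : m ≠ 0) :
    (4 * m).primeFactors = insert 2 m.primeFactors := by
  rw [Nat.primeFactors_mul (by norm_num) hm, show 4 = 2 ^ 2 by norm_num,
    Nat.primeFactors_prime_pow (by norm_num) Nat.prime_two]
  rfl

lemma card_ambSet (Δ : ℤ) (hΔneg : Δ < 0)
    (hΔcong : Δ % 4 = 0 ∨ Δ % 4 = 1)
    (r : ℕ) (hr : r = (Δ.natAbs.primeFactors.erase 2).card)
    (μ : ℕ)
    (hμ : μ = if Δ % 4 = 1 ∨ Δ % 16 = 4 then r - 1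
          else if Δ % 16 = 8 ∨ Δ % 16 = 12 ∨ Δ % 32 = 16 then r
          else r + 1) : (ambSet Δ).Finite ∧ (ambSet Δ).ncard = 2 ^ (μ + 1) := by
  rcases hΔcong with h4 | h1
  · obtain ⟨m, rfl⟩ : ∃ m : ℕ, Δ = -4 * m := ⟨(-Δ / 4).toNat, by omega⟩
    have hm : m ≠ 0 := by omega
    obtain ⟨f0, c0⟩ := ncard_of_image hm _ 1 one_ne_zero (fun _ => rfl) (amb0_eq m hm)
    have hdis : Disjoint (amb0 (-4 * m)) (amb1 (-4 * m)) := by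
      rw [Set.disjoint_left]
      rintro t ht ht'
      have h1 := ht.1
      have h2 := ht.2.1
      have h3 := ht'.2.1
      omega
    have hnat : (-4 * (m:ℤ)).natAbs = 4 * m := by omega
    rw [hnat, primeFactors_four_mul m hm, Finset.erase_insert_eq_erase] at hr
    have hodd : m % 2 = 1 → m.primeFactors.card = r := by
      intro h
      rw [hr, Finset.erase_eq_of_notMem]
      intro h2
      have := Nat.dvd_of_mem_primeFactors h2
      omega
    have heven : m % 2 = 0 → m.primeFactors.card = r + 1 := by
      intro h
      have : 2 ∈ m.primeFactors := Nat.mem_primeFactors.mpr ⟨Nat.prime_two, by omega, hm⟩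
      rw [hr, Finset.card_erase_add_one this]
    have hempty : (m % 4 = 3 ∨ m % 4 = 2 ∨ m % 8 = 4) →
        (ambSet (-4 * m)).Finite ∧ (ambSet (-4 * m)).ncard = 2 ^ m.primeFactors.card := by
      intro h
      rw [ambSet, amb1_m_empty m h, Set.union_empty]
      exact ⟨f0, c0⟩
    rcases (show m % 4 = 1 ∨ m % 4 = 3 ∨ (m % 4 = 2 ∨ m % 8 = 4) ∨ m % 8 = 0 by omega) with
      h | h | h | h
    · obtain ⟨f1, c1⟩ := ncard_of_image hm _ 2 two_ne_zero (fun _ => rfl) (amb1_m_odd m h)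
      refine ⟨f0.union f1, ?_⟩
      rw [ambSet, Set.ncard_union_eq hdis f0 f1, c0, c1, hodd (by omega)]
      rw [if_neg (by omega), if_pos (by omega)] at hμ
      rw [hμ]; ring
    · rw [if_pos (by omega)] at hμ
      have hr0 : r ≠ 0 := by
        intro h0
        rw [← hodd (by omega), Finset.card_eq_zero, Nat.primeFactors_eq_empty] at h0
        omega
      obtain ⟨fi, ca⟩ := hempty (Or.inl h)
      refine ⟨fi, ?_⟩
      rw [ca, hodd (by omega), hμ]
      congr 1; omega
    · rw [if_neg (by omega), if_pos (by omega)] at hμ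
      obtain ⟨fi, ca⟩ := hempty (Or.inr h)
      refine ⟨fi, ?_⟩
      rw [ca, heven (by omega), hμ]
    · rw [if_neg (by omega), if_neg (by omega)] at hμ
      obtain ⟨k, rfl⟩ : ∃ k, m = 4 * k := ⟨m / 4, by omega⟩
      have hk : k ≠ 0 := by omega
      obtain ⟨f1, c1⟩ := ncard_of_image hk _ 4 four_ne_zero (fun _ => rfl)
        (amb1_m_8 k (by omega) hk)
      refine ⟨f0.union f1, ?_⟩
      have hk2 : (4 * k).primeFactors = k.primeFactors := by
        rw [primeFactors_four_mul k hk]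
        exact Finset.insert_eq_of_mem (Nat.mem_primeFactors.mpr ⟨Nat.prime_two, by omega, hk⟩)
      rw [ambSet, Set.ncard_union_eq hdis f0 f1, c0, c1, ← hk2, heven (by omega), hμ]
      ring
  · obtain ⟨D, rfl⟩ : ∃ D : ℕ, Δ = -D := ⟨(-Δ).toNat, by omega⟩
    rw [if_pos (by omega)] at hμ
    obtain ⟨f1, c1⟩ := ncard_of_image (by omega) _ 1 one_ne_zero (fun _ => rfl)
      (amb1_odd D (by omega))
    rw [ambSet, amb0_empty h1, Set.empty_union]
    refine ⟨f1, ?_⟩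
    have hnat : (-(D:ℤ)).natAbs = D := by omega
    rw [hnat, Finset.erase_eq_of_notMem] at hr
    · have hr0 : r ≠ 0 := by
        intro h0
        rw [hr, Finset.card_eq_zero, Nat.primeFactors_eq_empty] at h0
        omega
      rw [c1, ← hr, hμ]
      congr 1; omega
    · intro h2
      have := Nat.dvd_of_mem_primeFactors h2
      omega

section ClassGroupPart
open scoped nonZeroDivisors
variable {R : Type*} [CommRing R] [IsDomain R]

open Classical in
/-- class of an ideal (junk value 1 if not invertible) -/
noncomputable def idealCls (I : Ideal R) : ClassGroup R :=
  if h : IsUnit (I : FractionalIdeal R⁰ (FractionRing R)) then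
    ClassGroup.mk (FractionRing R) h.unit else 1

lemma idealCls_def {I : Ideal R} (h : IsUnit (I : FractionalIdeal R⁰ (FractionRing R))) :
    idealCls I = ClassGroup.mk (FractionRing R) h.unit := by
  rw [idealCls, dif_pos h]

lemma isUnit_spanS {x : R} (hx : x ≠ 0) :
    IsUnit ((Ideal.span {x} : Ideal R) : FractionalIdeal R⁰ (FractionRing R)) := by
  rw [FractionalIdeal.coeIdeal_span_singleton]
  have h0 : algebraMap R (FractionRing R) x ≠ 0 := by
    simpa using hx
  exact ⟨toPrincipalIdeal R (FractionRing R) (Units.mk0 _ h0), by simp⟩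

lemma isUnit_of_sq {I : Ideal R} {x : R} (hx : x ≠ 0) (h : I * I = Ideal.span {x}) :
    IsUnit (I : FractionalIdeal R⁰ (FractionRing R)) := by
  have := isUnit_spanS hx
  rw [← h, FractionalIdeal.coeIdeal_mul] at this
  exact isUnit_of_mul_isUnit_left this

lemma idealCls_eq_iff {I J : Ideal R} (hI : IsUnit (I : FractionalIdeal R⁰ (FractionRing R)))
    (hJ : IsUnit (J : FractionalIdeal R⁰ (FractionRing R))) :
    idealCls I = idealCls J ↔
      ∃ x y : R, x ≠ 0 ∧ y ≠ 0 ∧ Ideal.span {x} * I = Ideal.span {y} * J := by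
  rw [idealCls_def hI, idealCls_def hJ]
  exact ClassGroup.mk_eq_mk_of_coe_ideal (by simp) (by simp)

lemma idealCls_sq {I : Ideal R} (hI : IsUnit (I : FractionalIdeal R⁰ (FractionRing R))) :
    idealCls I ^ 2 = 1 ↔ ∃ x : R, x ≠ 0 ∧ I * I = Ideal.span {x} := by
  rw [idealCls_def hI, ← map_pow]
  exact ClassGroup.mk_eq_one_of_coe_ideal (by simp [sq])

lemma idealCls_surj (c : ClassGroup R) :
    ∃ I : Ideal R, IsUnit (I : FractionalIdeal R⁰ (FractionRing R)) ∧ idealCls I = c := by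
  refine ClassGroup.induction (FractionRing R) (fun I => ?_) c
  · have hu : IsUnit ((I : FractionalIdeal R⁰ (FractionRing R)).num :
        FractionalIdeal R⁰ (FractionRing R)) := FractionalIdeal.isUnit_num.mpr I.isUnit
    refine ⟨_, hu, ?_⟩
    rw [idealCls_def hu, eq_comm, ClassGroup.mk_eq_mk]
    have fd_ne_zero : (algebraMap R (FractionRing R)) I.1.den ≠ 0 := by
      exact IsFractionRing.to_map_ne_zero_of_mem_nonZeroDivisors (SetLike.coe_mem _)
    refine ⟨Units.mk0 (algebraMap R _ I.1.den) fd_ne_zero, ?_⟩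
    apply Units.ext
    rw [mul_comm, Units.val_mul, coe_toPrincipalIdeal, Units.val_mk0]
    exact FractionalIdeal.den_mul_self_eq_num' R⁰ (FractionRing R) I

end ClassGroupPart

lemma card_two_to_one {A H : Type*} [Finite A] (f : A → H) (hf : Function.Surjective f)
    (inv : A → A) (hne : ∀ x, inv x ≠ x) (hfib : ∀ x y, f x = f y ↔ y = x ∨ y = inv x) :
    Nat.card A = 2 * Nat.card H := by
  classical
  have : Finite H := Finite.of_surjective f hf
  have := Fintype.ofFinite A
  have := Fintype.ofFinite H
  rw [Nat.card_eq_fintype_card, Nat.card_eq_fintype_card, ← Finset.card_univ (α := A),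
    Finset.card_eq_sum_card_fiberwise (f := f) (t := Finset.univ) (by simp)]
  rw [Finset.sum_congr rfl (g := fun _ => 2), Finset.sum_const, Finset.card_univ, smul_eq_mul,
    mul_comm]
  intro h _
  obtain ⟨x, rfl⟩ := hf h
  have : (Finset.univ.filter (fun y => f y = f x)) = {x, inv x} := by
    ext y
    simp only [Finset.mem_filter, Finset.mem_univ, true_and, Finset.mem_insert,
      Finset.mem_singleton]
    rw [eq_comm, hfib]
  rw [this, Finset.card_pair (hne x).symm]

section QuadPart

abbrev QA (p t : ℤ) := QuadraticAlgebra ℤ p t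

variable {p t : ℤ}

def qth (p t k : ℤ) : QA p t := ⟨k, 1⟩

def qI (p t a k : ℤ) : Ideal (QA p t) := Ideal.span {(a : QA p t), qth p t k}

lemma mem_qI {a k c : ℤ} (h : a * c = k ^ 2 + t * k - p) (z : QA p t) :
    z ∈ qI p t a k ↔ a ∣ z.re - k * z.im := by
  rw [qI, Ideal.mem_span_pair]
  constructor
  · rintro ⟨u, v, rfl⟩
    refine ⟨u.re - k * u.im - v.im * c, ?_⟩
    simp only [qth, QuadraticAlgebra.re_add, QuadraticAlgebra.re_mul, QuadraticAlgebra.re_intCast,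
      QuadraticAlgebra.im_intCast, QuadraticAlgebra.im_add, QuadraticAlgebra.im_mul, Int.cast_id]
    linear_combination v.im * h
  · rintro ⟨j, hj⟩
    refine ⟨(j : QA p t), (z.im : QA p t), ?_⟩
    ext
    · simp [qth]
      linear_combination -hj
    · simp [qth]

lemma mem_span_int {n : ℤ} (z : QA p t) :
    z ∈ Ideal.span {(n : QA p t)} ↔ n ∣ z.re ∧ n ∣ z.im := by
  rw [Ideal.mem_span_singleton]
  exact QuadraticAlgebra.algebraMap_dvd_iff

lemma four_norm (z : QA p t) :
    4 * z.norm = (2 * z.re + t * z.im) ^ 2 - (t ^ 2 + 4 * p) * z.im ^ 2 := by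
  rw [QuadraticAlgebra.norm_def]; ring

lemma norm_pos' (hneg : t ^ 2 + 4 * p < 0) {z : QA p t} (hz : z ≠ 0) : 0 < z.norm := by
  have h := four_norm z
  by_cases him : z.im = 0
  · have hre : z.re ≠ 0 := by
      intro h0; exact hz (QuadraticAlgebra.ext h0 him)
    rw [him] at h
    have : 0 < z.re ^ 2 := by positivity
    nlinarith
  · have : 0 < z.im ^ 2 := by positivity
    nlinarith [sq_nonneg (2 * z.re + t * z.im)]

lemma norm_cast' (z : QA p t) : ((z.norm : ℤ) : QA p t) = z * star z :=
  QuadraticAlgebra.algebraMap_norm_eq_mul_star z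

lemma intCast_eq_iff {m n : ℤ} : (m : QA p t) = n ↔ m = n := Int.cast_inj

lemma intCast_ne {n : ℤ} (h : n ≠ 0) : (n : QA p t) ≠ 0 := by
  exact_mod_cast h

lemma isDomain_QA (hneg : t ^ 2 + 4 * p < 0) : IsDomain (QA p t) := by
  have : NoZeroDivisors (QA p t) := by
    refine ⟨?_⟩
    intro x y hxy
    by_contra! hh
    have h1 := norm_pos' hneg hh.1
    have h2 := norm_pos' hneg hh.2
    have h3 : (x * y).norm = x.norm * y.norm := map_mul _ _ _
    rw [hxy, QuadraticAlgebra.norm_zero] at h3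
    have := mul_pos h1 h2
    omega
  exact NoZeroDivisors.to_isDomain _

/-- an ideal with its norm form -/
lemma ideal_structure (hneg : t ^ 2 + 4 * p < 0) (I : Ideal (QA p t)) (hI : I ≠ ⊥) :
    ∃ g a k c : ℤ, 0 < g ∧ 0 < a ∧ a * c = k ^ 2 + t * k - p ∧
      I = Ideal.span {(g : QA p t)} * qI p t a k := by
  -- the ideal of imaginary parts
  let J : Ideal ℤ := Submodule.map (QuadraticAlgebra.imₗ p t) (I.restrictScalars ℤ)
  let L : Ideal ℤ := Ideal.comap (Int.castRingHom (QA p t)) I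
  have hJ : ∀ n, n ∈ J ↔ ∃ z ∈ I, z.im = n := by
    intro n
    simp [J, Submodule.mem_map]
  have hL : ∀ n : ℤ, n ∈ L ↔ (n : QA p t) ∈ I := by
    intro n
    simp [L, Ideal.mem_comap]
  obtain ⟨z0, hz0, hz0'⟩ := Submodule.exists_mem_ne_zero_of_ne_bot hI
  have hgen : ∀ K : Ideal ℤ, K ≠ ⊥ → ∃ g : ℤ, 0 < g ∧ K = Ideal.span {g} := by
    intro K hK
    obtain ⟨g, hg⟩ := (IsPrincipalIdealRing.principal K).principal
    change K = Ideal.span {g} at hg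
    refine ⟨|g|, ?_, ?_⟩
    · rw [abs_pos]; rintro rfl; exact hK (by rw [hg]; simp)
    · rw [hg, Ideal.span_singleton_eq_span_singleton]
      exact Int.associated_iff_natAbs.mpr (Int.natAbs_abs g).symm
  have hLne : L ≠ ⊥ := by
    intro h0
    have : z0.norm ∈ L := by
      rw [hL, norm_cast']
      exact I.mul_mem_right _ hz0
    rw [h0, Ideal.mem_bot] at this
    have := norm_pos' hneg hz0'
    omega
  obtain ⟨h, hh, hLh⟩ := hgen L hLne
  have hhI : (h : QA p t) ∈ I := by rw [← hL, hLh]; exact Ideal.mem_span_singleton_self h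
  have hhJ : h ∈ J := by
    rw [hJ]
    refine ⟨(h : QA p t) * qth p t 0, I.mul_mem_right _ hhI, ?_⟩
    simp [qth]
  have hJne : J ≠ ⊥ := by
    intro h0
    rw [h0, Ideal.mem_bot] at hhJ
    omega
  obtain ⟨g, hg, hJg⟩ := hgen J hJne
  obtain ⟨a, rfl⟩ : g ∣ h := by rwa [hJg, Ideal.mem_span_singleton] at hhJ
  obtain ⟨z, hzI, hz⟩ := (hJ g).mp (by rw [hJg]; exact Ideal.mem_span_singleton_self g)
  have hre : z.re + t * g ∈ J := by
    rw [hJ]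
    refine ⟨z * qth p t 0, I.mul_mem_right _ hzI, ?_⟩
    simp [qth, hz]
  rw [hJg, Ideal.mem_span_singleton] at hre
  obtain ⟨k, hk⟩ : g ∣ z.re := (Int.dvd_add_left (Dvd.intro_left t rfl)).mp hre
  have hzz : z = (g : QA p t) * qth p t k := by
    ext
    · simp [qth, hk]
    · simp [qth, hz]
  have hN : g * (k ^ 2 + t * k - p) ∈ L := by
    rw [hL]
    have : ((g * (k ^ 2 + t * k - p) : ℤ) : QA p t) = z * star (qth p t k) := by
      rw [hzz]
      ext
      · simp only [QuadraticAlgebra.re_intCast, qth, QuadraticAlgebra.re_mul, QuadraticAlgebra.im_mul, QuadraticAlgebra.im_intCast,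
          QuadraticAlgebra.re_star, QuadraticAlgebra.im_star, Int.cast_id]
        ring
      · simp only [QuadraticAlgebra.re_intCast, qth, QuadraticAlgebra.re_mul, QuadraticAlgebra.im_mul, QuadraticAlgebra.im_intCast,
          QuadraticAlgebra.re_star, QuadraticAlgebra.im_star, Int.cast_id]
        ring
    rw [this]
    exact I.mul_mem_right _ hzI
  rw [hLh, Ideal.mem_span_singleton] at hN
  obtain ⟨c, hc⟩ := (mul_dvd_mul_iff_left hg.ne').mp hN
  refine ⟨g, a, k, c, hg, pos_of_mul_pos_right hh hg.le, hc.symm, ?_⟩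
  apply le_antisymm
  · intro w hw
    have h1 : w.im ∈ J := (hJ _).mpr ⟨w, hw, rfl⟩
    rw [hJg, Ideal.mem_span_singleton] at h1
    obtain ⟨j, hj⟩ := h1
    have h2 : w.re - j * g * k ∈ L := by
      rw [hL]
      have : ((w.re - j * g * k : ℤ) : QA p t) = w - (j : QA p t) * z := by
        ext
        · simp [hk]; ring
        · simp [hj, hz]; ring
      rw [this]
      exact I.sub_mem hw (I.mul_mem_left _ hzI)
    rw [hLh, Ideal.mem_span_singleton] at h2
    obtain ⟨i, hi⟩ := h2
    rw [Ideal.mem_span_singleton_mul]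
    refine ⟨⟨i * a + j * k, j⟩, ?_, ?_⟩
    · rw [mem_qI hc.symm]
      exact ⟨i, by simp; ring⟩
    · ext
      · simp; linear_combination -hi
      · simp [hj]
  · rw [qI, Ideal.span_mul_span', Ideal.span_le]
    rintro x hx
    simp only [Set.mem_mul, Set.mem_singleton_iff, Set.mem_insert_iff] at hx
    obtain ⟨_, rfl, y, rfl | rfl, rfl⟩ := hx
    · have : (g : QA p t) * a = ((g * a : ℤ) : QA p t) := by push_cast; rfl
      rw [this]; exact hhI
    · rw [← hzz]; exact hzI

lemma qth_star (k : ℤ) : star (qth p t k) = ((t + 2 * k : ℤ) : QA p t) - qth p t k := by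
  ext <;> simp only [qth, QuadraticAlgebra.re_intCast, QuadraticAlgebra.im_intCast, QuadraticAlgebra.re_mul, QuadraticAlgebra.im_mul,
    QuadraticAlgebra.re_sub, QuadraticAlgebra.im_sub, QuadraticAlgebra.re_star, QuadraticAlgebra.im_star, Int.cast_id] <;> ring

lemma qth_sq (k : ℤ) : qth p t k * qth p t k =
    ((t + 2 * k : ℤ) : QA p t) * qth p t k - ((k ^ 2 + t * k - p : ℤ) : QA p t) := by
  ext <;> simp only [qth, QuadraticAlgebra.re_intCast, QuadraticAlgebra.im_intCast, QuadraticAlgebra.re_mul, QuadraticAlgebra.im_mul,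
    QuadraticAlgebra.re_sub, QuadraticAlgebra.im_sub, QuadraticAlgebra.re_star, QuadraticAlgebra.im_star, Int.cast_id] <;> ring

lemma qth_mul_star (k : ℤ) : qth p t k * star (qth p t k) =
    ((k ^ 2 + t * k - p : ℤ) : QA p t) := by
  rw [qth_star, mul_sub, qth_sq]; ring

lemma qI_mul_self {a b c k : ℤ} (hb : b = t + 2 * k) (h : a * c = k ^ 2 + t * k - p)
    (hab : a ∣ b) (hcop : IsCoprime a c) :
    qI p t a k * qI p t a k = Ideal.span {(a : QA p t)} := by
  obtain ⟨e, he⟩ := hab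
  obtain ⟨u, v, huv⟩ := hcop
  have hsq := qth_sq (p := p) (t := t) k
  rw [← hb, ← h, he] at hsq
  push_cast at hsq
  have huv' : (u : QA p t) * a + v * c = 1 := by exact_mod_cast huv
  rw [qI, Ideal.span_pair_mul_span_pair]
  apply le_antisymm
  · rw [Ideal.span_le]
    rintro x hx
    simp only [Set.mem_insert_iff, Set.mem_singleton_iff] at hx
    rw [SetLike.mem_coe, Ideal.mem_span_singleton]
    rcases hx with rfl | rfl | rfl | rfl
    · exact dvd_mul_right _ _
    · exact dvd_mul_right _ _
    · exact dvd_mul_left _ _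
    · exact ⟨e * qth p t k - c, by rw [hsq]; ring⟩
  · rw [Ideal.span_singleton_le_iff_mem]
    have : (a : QA p t) = u * (a * a) + v * (e * (a * qth p t k) - qth p t k * qth p t k) := by
      rw [hsq]
      linear_combination (-(a : QA p t)) * huv'
    refine Eq.mpr (congrArg (fun y => y ∈ _) this) ?_
    refine Ideal.add_mem _ (Ideal.mul_mem_left _ _ (Ideal.subset_span (by simp)))
      (Ideal.mul_mem_left _ _ (Ideal.sub_mem _ (Ideal.mul_mem_left _ _ (Ideal.subset_span (by simp)))
        (Ideal.subset_span (by simp))))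

/-- invertible ideals have primitive forms -/
lemma qI_primitive [IsDomain (QA p t)] {a b c k : ℤ} (hb : b = t + 2 * k)
    (h : a * c = k ^ 2 + t * k - p)
    {x : QA p t} (hx : x ≠ 0) (hsq : qI p t a k * qI p t a k = Ideal.span {x})
    {d : ℤ} (ha' : d ∣ a) (hb' : d ∣ b) (hc' : d ∣ c) : IsUnit d := by
  have h1 : Ideal.span {qth p t k} * qI p t a k ≤ Ideal.span {(d : QA p t)} * qI p t a k := by
    obtain ⟨a', rfl⟩ := ha'
    obtain ⟨b', rfl⟩ := hb'
    obtain ⟨c', rfl⟩ := hc'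
    rw [Ideal.span_singleton_mul_le_iff]
    intro z hz
    rw [qI, Ideal.mem_span_pair] at hz
    obtain ⟨u, v, rfl⟩ := hz
    rw [Ideal.mem_span_singleton_mul]
    refine ⟨u * a' * qth p t k + v * (b' * qth p t k - c' * ((d * a' : ℤ) : QA p t)), ?_, ?_⟩
    · refine Ideal.add_mem _ (Ideal.mul_mem_left _ _ (Ideal.subset_span (by simp)))
        (Ideal.mul_mem_left _ _ (Ideal.sub_mem _ (Ideal.mul_mem_left _ _
          (Ideal.subset_span (by simp))) (Ideal.mul_mem_left _ _
          (Ideal.subset_span (by simp)))))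
    · have hs := qth_sq (p := p) (t := t) k
      rw [← hb, ← h] at hs
      push_cast at hs ⊢
      linear_combination (-v) * hs
  have h2 := Ideal.mul_mono_left (I := Ideal.span {qth p t k} * qI p t a k) (K := qI p t a k) h1
  rw [mul_assoc, mul_assoc, hsq, Ideal.span_singleton_mul_span_singleton,
    Ideal.span_singleton_mul_span_singleton, Ideal.span_singleton_le_span_singleton] at h2
  have h3 := (mul_dvd_mul_iff_right hx).mp h2
  have h4 := (mem_span_int _).mp (Ideal.mem_span_singleton.mpr h3)
  exact isUnit_of_dvd_one h4.2

lemma bezout3 {a b c : ℤ} (h : ∀ d : ℤ, d ∣ a → d ∣ b → d ∣ c → IsUnit d) :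
    ∃ u v w : ℤ, u * a + v * b + w * c = 1 := by
  have h1 : IsCoprime ((Int.gcd a b : ℕ) : ℤ) c := by
    rw [Int.isCoprime_iff_gcd_eq_one]
    have := h (Int.gcd (Int.gcd a b : ℤ) c)
      ((Int.gcd_dvd_left ..).trans (Int.gcd_dvd_left ..))
      ((Int.gcd_dvd_left ..).trans (Int.gcd_dvd_right ..)) (Int.gcd_dvd_right ..)
    simpa [Int.isUnit_iff_natAbs_eq] using this
  obtain ⟨u, v, huv⟩ := h1
  rw [Int.gcd_eq_gcd_ab] at huv
  exact ⟨u * Int.gcdA a b, u * Int.gcdB a b, v, by linarith⟩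

lemma map_star_qI (a k : ℤ) : Ideal.map (starRingEnd (QA p t)) (qI p t a k) =
    Ideal.span {(a : QA p t), star (qth p t k)} := by
  rw [qI, Ideal.map_span, Set.image_pair]
  simp [starRingEnd_apply]

lemma qI_mul_bar {a b c k : ℤ} (hb : b = t + 2 * k) (h : a * c = k ^ 2 + t * k - p)
    (hbez : ∃ u v w : ℤ, u * a + v * b + w * c = 1) :
    qI p t a k * Ideal.map (starRingEnd (QA p t)) (qI p t a k) = Ideal.span {(a : QA p t)} := by
  obtain ⟨u, v, w, huv⟩ := hbez
  have huv' : (u : QA p t) * a + v * b + w * c = 1 := by exact_mod_cast huv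
  have hms := qth_mul_star (p := p) (t := t) k
  rw [← h] at hms
  push_cast at hms
  have hst := qth_star (p := p) (t := t) k
  rw [← hb] at hst
  rw [map_star_qI, qI, Ideal.span_pair_mul_span_pair, hms]
  apply le_antisymm
  · rw [Ideal.span_le]
    rintro x hx
    simp only [Set.mem_insert_iff, Set.mem_singleton_iff] at hx
    rw [SetLike.mem_coe, Ideal.mem_span_singleton]
    rcases hx with rfl | rfl | rfl | rfl
    · exact dvd_mul_right _ _
    · exact dvd_mul_right _ _
    · exact dvd_mul_left _ _
    · exact dvd_mul_right _ _
  · rw [Ideal.span_singleton_le_iff_mem]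
    have : (a : QA p t) = u * (a * a) + v * (qth p t k * a + a * star (qth p t k)) + w * (a * c) := by
      rw [hst]
      linear_combination (-(a : QA p t)) * huv'
    refine Eq.mpr (congrArg (fun y => y ∈ _) this) ?_
    refine Ideal.add_mem _ (Ideal.add_mem _ (Ideal.mul_mem_left _ _ (Ideal.subset_span (by simp)))
      (Ideal.mul_mem_left _ _ (Ideal.add_mem _ (Ideal.subset_span (by simp))
        (Ideal.subset_span (by simp))))) (Ideal.mul_mem_left _ _ (Ideal.subset_span (by simp)))

/-- strip an integer factor -/
lemma strip [IsDomain (QA p t)] {I K : Ideal (QA p t)} {g : ℤ} (hg : g ≠ 0) {x : QA p t} (hx : x ≠ 0)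
    (hI : I = Ideal.span {(g : QA p t)} * K) (hsq : I * I = Ideal.span {x}) :
    ∃ y : QA p t, y ≠ 0 ∧ K * K = Ideal.span {y} := by
  have hgg : (g : QA p t) * g ≠ 0 := mul_ne_zero (intCast_ne hg) (intCast_ne hg)
  have h1 : Ideal.span {(g : QA p t) * g} * (K * K) = Ideal.span {x} := by
    rw [← hsq, hI, ← Ideal.span_singleton_mul_span_singleton]; ring
  have h2 : x ∈ Ideal.span {(g : QA p t) * g} * (K * K) := by
    rw [h1]; exact Ideal.mem_span_singleton_self x
  obtain ⟨y, hy, rfl⟩ := Ideal.mem_span_singleton_mul.mp h2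
  refine ⟨y, right_ne_zero_of_mul hx, ?_⟩
  rw [← Ideal.span_singleton_mul_span_singleton (g * g : QA p t) y] at h1
  exact (Ideal.span_singleton_mul_right_inj hgg).mp h1

/-- Hilbert 90 step -/
lemma exists_beta (hneg : t ^ 2 + 4 * p < 0) [IsDomain (QA p t)] {a b c k : ℤ} (ha : 0 < a)
    (hb : b = t + 2 * k) (h : a * c = k ^ 2 + t * k - p)
    {x : QA p t} (hx : x ≠ 0) (hsq : qI p t a k * qI p t a k = Ideal.span {x}) :
    ∃ β : QA p t, β ≠ 0 ∧ Ideal.map (starRingEnd (QA p t)) (Ideal.span {β} * qI p t a k) =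
      Ideal.span {β} * qI p t a k := by
  have hbar := qI_mul_bar hb h (bezout3 (fun d h1 h2 h3 => qI_primitive hb h hx hsq h1 h2 h3))
  have hsqbar := congrArg (Ideal.map (starRingEnd (QA p t))) hsq
  rw [Ideal.map_mul, Ideal.map_span, Set.image_singleton, starRingEnd_apply] at hsqbar
  set I := qI p t a k
  set I' := Ideal.map (starRingEnd (QA p t)) I with hI'
  have ha0 : (a : QA p t) ≠ 0 := intCast_ne ha.ne'
  have hxI : Ideal.span {x} * I' = Ideal.span {(a : QA p t)} * I := by
    rw [← hsq, ← hbar]; ring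
  have hnorm : x * star x = (a : QA p t) * a := by
    have h1 : Ideal.span {((x.norm : ℤ) : QA p t)} = Ideal.span {((a * a : ℤ) : QA p t)} := by
      rw [norm_cast']
      push_cast
      rw [← Ideal.span_singleton_mul_span_singleton, ← Ideal.span_singleton_mul_span_singleton,
        ← hsq, ← hsqbar, ← hbar]
      ring
    have h2 := (mem_span_int _).mp (h1 ▸ Ideal.mem_span_singleton_self ((x.norm : ℤ) : QA p t))
    have h3 := (mem_span_int _).mp (h1 ▸ Ideal.mem_span_singleton_self ((a * a : ℤ) : QA p t))
    have h4 : x.norm = a * a :=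
      Int.dvd_antisymm (norm_pos' hneg hx).le (mul_pos ha ha).le (by simpa using h3.1)
        (by simpa using h2.1)
    rw [← norm_cast', h4]; push_cast; rfl
  have key : ∀ β : QA p t, β ≠ 0 → x * β = a * star β →
      ∃ β : QA p t, β ≠ 0 ∧ Ideal.map (starRingEnd (QA p t)) (Ideal.span {β} * I) =
      Ideal.span {β} * I := by
    intro β hβ h1
    refine ⟨β, hβ, ?_⟩
    rw [Ideal.map_mul, Ideal.map_span, Set.image_singleton, starRingEnd_apply, ← hI']
    apply (Ideal.span_singleton_mul_right_inj ha0).mp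
    rw [← mul_assoc, Ideal.span_singleton_mul_span_singleton, ← h1,
      ← Ideal.span_singleton_mul_span_singleton]
    calc _ = Ideal.span {β} * (Ideal.span {x} * I') := by ring
      _ = _ := by rw [hxI]; ring
  by_cases hxa : (a : QA p t) + star x = 0
  · apply key (⟨-t, 2⟩ : QA p t)
    · intro h0
      have := congrArg QuadraticAlgebra.im h0
      simp at this
    · have h1 : x = -(a : QA p t) := by
        have := congrArg star (eq_neg_of_add_eq_zero_right hxa)
        simpa using this
      rw [h1]
      ext
      · simp [mul_comm]
        try ring_nf
        try simp
      · simp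
  · apply key _ hxa
    rw [mul_add, hnorm]
    simp
    ring

lemma amb_props (hneg : t ^ 2 + 4 * p < 0) {a b c : ℤ} (hx : (a, b, c) ∈ ambSet (t ^ 2 + 4 * p)) :
    ∃ k : ℤ, (b - t) / 2 = k ∧ b = t + 2 * k ∧ a * c = k ^ 2 + t * k - p ∧ 0 < a ∧ a ∣ b ∧
      IsCoprime a c ∧ (b = 0 ∨ b = a) ∧ b ^ 2 - 4 * a * c = t ^ 2 + 4 * p ∧ 0 < c := by
  have h : 0 < a ∧ (b = 0 ∨ b = a) ∧ b ^ 2 - 4 * a * c = t ^ 2 + 4 * p ∧ IsCoprime a c := by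
    rcases hx with hx | hx
    · exact ⟨hx.1, Or.inl hx.2.1, hx.2.2⟩
    · exact ⟨hx.1, Or.inr hx.2.1, hx.2.2⟩
  obtain ⟨ha, hb, hd, hc⟩ := h
  have hpar : (b - t) % 2 = 0 := by
    have h1 : (2:ℤ) ∣ (b - t) * (b + t) := ⟨2 * (a * c + p), by linear_combination hd⟩
    rcases Int.prime_two.dvd_or_dvd h1 with h | h <;> omega
  obtain ⟨k, hk⟩ : ∃ k, b = t + 2 * k := ⟨(b - t) / 2, by omega⟩
  refine ⟨k, by omega, hk, ?_, ha, ?_, hc, hb, hd, ?_⟩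
  · rw [hk] at hd
    linarith
  · rcases hb with rfl | rfl
    · exact dvd_zero a
    · exact dvd_refl _
  · by_contra hc0
    have : a * c ≤ 0 := mul_nonpos_of_nonneg_of_nonpos ha.le (by omega)
    nlinarith [sq_nonneg b]

lemma mem_ambSet_of {a b c : ℤ} (ha : 0 < a) (hb : b = 0 ∨ b = a)
    (hd : b ^ 2 - 4 * a * c = t ^ 2 + 4 * p) (hc : IsCoprime a c) :
    (a, b, c) ∈ ambSet (t ^ 2 + 4 * p) := by
  rcases hb with hb | hb
  · exact Or.inl ⟨ha, hb, hd, hc⟩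
  · exact Or.inr ⟨ha, hb, hd, hc⟩

def ambI (p t : ℤ) (x : ℤ × ℤ × ℤ) : Ideal (QA p t) := qI p t x.1 ((x.2.1 - t) / 2)

lemma ambI_sq (hneg : t ^ 2 + 4 * p < 0) {x : ℤ × ℤ × ℤ} (hx : x ∈ ambSet (t ^ 2 + 4 * p)) :
    ambI p t x * ambI p t x = Ideal.span {(x.1 : QA p t)} ∧ (x.1 : QA p t) ≠ 0 := by
  obtain ⟨a, b, c⟩ := x
  obtain ⟨k, hk, hb, h, ha, hab, hc, -⟩ := amb_props hneg hx
  simp only [ambI, hk]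
  exact ⟨qI_mul_self hb h hab hc, intCast_ne ha.ne'⟩

lemma map_star_stable {a b c k : ℤ} (hb : b = t + 2 * k) (h : a * c = k ^ 2 + t * k - p)
    (hab : a ∣ b) : Ideal.map (starRingEnd (QA p t)) (qI p t a k) = qI p t a k := by
  have hle : Ideal.map (starRingEnd (QA p t)) (qI p t a k) ≤ qI p t a k := by
    rw [map_star_qI, Ideal.span_le]
    rintro x hx
    simp only [Set.mem_insert_iff, Set.mem_singleton_iff] at hx
    rcases hx with rfl | rfl
    · exact Ideal.subset_span (by simp)
    · rw [SetLike.mem_coe, mem_qI h, qth_star, ← hb]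
      simp only [qth, QuadraticAlgebra.re_intCast, QuadraticAlgebra.im_intCast,
        QuadraticAlgebra.re_sub, QuadraticAlgebra.im_sub, Int.cast_id]
      have : b - k - k * (0 - 1) = b := by ring
      rwa [this]
  apply le_antisymm hle
  intro y hy
  have h1 : star (star y) ∈ Ideal.map (starRingEnd (QA p t)) (qI p t a k) := by
    rw [← starRingEnd_apply (star y)]
    apply Ideal.mem_map_of_mem
    apply hle
    rw [← starRingEnd_apply y]
    exact Ideal.mem_map_of_mem _ hy
  rwa [star_star] at h1

lemma amb_surj (hneg : t ^ 2 + 4 * p < 0) [IsDomain (QA p t)] {I : Ideal (QA p t)} {x : QA p t}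
    (hx : x ≠ 0) (hsq : I * I = Ideal.span {x}) :
    ∃ y ∈ ambSet (t ^ 2 + 4 * p), ∃ u v : QA p t, u ≠ 0 ∧ v ≠ 0 ∧
      Ideal.span {u} * I = Ideal.span {v} * ambI p t y := by
  have hI : I ≠ ⊥ := by
    rintro rfl
    rw [Ideal.mul_bot] at hsq
    exact hx (Ideal.span_singleton_eq_bot.mp hsq.symm)
  obtain ⟨g, a, k, c, hg, ha, h, hIeq⟩ := ideal_structure hneg I hI
  obtain ⟨x1, hx1, hsq1⟩ := strip hg.ne' hx hIeq hsq
  obtain ⟨β, hβ, hstab⟩ := exists_beta hneg ha rfl h hx1 hsq1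
  set J := Ideal.span {β} * qI p t a k with hJdef
  have hJsq : J * J = Ideal.span {β * β * x1} := by
    rw [hJdef, ← Ideal.span_singleton_mul_span_singleton, ← Ideal.span_singleton_mul_span_singleton,
      ← hsq1]
    ring
  have hJx : β * β * x1 ≠ 0 := mul_ne_zero (mul_ne_zero hβ hβ) hx1
  have hJ : J ≠ ⊥ := by
    intro h0
    rw [h0] at hJsq
    simp at hJsq
    exact hJx (by simpa using hJsq.symm)
  obtain ⟨g', a', k', c', hg', ha', h', hJeq⟩ := ideal_structure hneg J hJ
  obtain ⟨x2, hx2, hsq2⟩ := strip hg'.ne' hJx hJeq hJsq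
  have hstab' : Ideal.map (starRingEnd (QA p t)) (qI p t a' k') = qI p t a' k' := by
    rw [hJeq, Ideal.map_mul, Ideal.map_span, Set.image_singleton, starRingEnd_apply,
      star_intCast] at hstab
    exact (Ideal.span_singleton_mul_right_inj (intCast_ne hg'.ne')).mp hstab
  have hab : a' ∣ t + 2 * k' := by
    have h1 : star (qth p t k') ∈ qI p t a' k' := by
      rw [← hstab', map_star_qI]
      exact Ideal.subset_span (by simp)
    rw [mem_qI h', qth_star] at h1
    simp only [qth, QuadraticAlgebra.re_intCast, QuadraticAlgebra.im_intCast,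
        QuadraticAlgebra.re_sub, QuadraticAlgebra.im_sub, Int.cast_id] at h1
    have : t + 2 * k' - k' - k' * (0 - 1) = t + 2 * k' := by ring
    rwa [this] at h1
  -- shift
  obtain ⟨j, e, he, hj⟩ : ∃ j e : ℤ, (e = 0 ∨ e = 1) ∧ t + 2 * k' = a' * (2 * j + e) := by
    obtain ⟨q, hq⟩ := hab
    refine ⟨q / 2, q % 2, by omega, ?_⟩
    rw [hq]
    congr 1
    omega
  obtain ⟨k, hk⟩ : ∃ k, k = k' - a' * j := ⟨_, rfl⟩
  obtain ⟨b, hb⟩ : ∃ b, b = t + 2 * k := ⟨_, rfl⟩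
  have hbe : b = a' * e := by rw [hb, hk]; linarith
  have hk' : k' = k + a' * j := by omega
  obtain ⟨c'', h''⟩ : ∃ c'', a' * c'' = k ^ 2 + t * k - p := by
    refine ⟨c' - 2 * k' * j + a' * j ^ 2 - t * j, ?_⟩
    rw [hk]
    linear_combination h'
  have hqI : qI p t a' k' = qI p t a' k := by
    ext z
    rw [mem_qI h', mem_qI h'', hk']
    have : z.re - (k + a' * j) * z.im = z.re - k * z.im - a' * (j * z.im) := by ring
    rw [this]
    exact dvd_sub_left (dvd_mul_right _ _)
  rw [hqI] at hJeq hsq2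
  have hprim := fun d => qI_primitive (d := d) hb h'' hx2 hsq2
  have hmem : (a', b, c'') ∈ ambSet (t ^ 2 + 4 * p) := by
    apply mem_ambSet_of ha'
    · rcases he with rfl | rfl
      · left; rw [hbe]; ring
      · right; rw [hbe]; ring
    · rw [hb]; linear_combination (-4) * h''
    · rw [Int.isCoprime_iff_gcd_eq_one]
      have := hprim (Int.gcd a' c'') (Int.gcd_dvd_left ..)
        ((Int.gcd_dvd_left ..).trans (hbe ▸ dvd_mul_right _ _)) (Int.gcd_dvd_right ..)
      simpa [Int.isUnit_iff_natAbs_eq] using this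
  refine ⟨_, hmem, β, g * g', hβ, mul_ne_zero (intCast_ne hg.ne') (intCast_ne hg'.ne'), ?_⟩
  have hkk : (b - t) / 2 = k := by omega
  simp only [ambI, hkk]
  rw [← Ideal.span_singleton_mul_span_singleton, mul_assoc, ← hJeq, hJdef, hIeq]
  ring

lemma qth_mem_qI (a k : ℤ) : qth p t k ∈ qI p t a k := by
  rw [qI]
  exact Ideal.subset_span (Set.mem_insert_of_mem _ rfl)

lemma int_mem_qI (a k : ℤ) : (a : QA p t) ∈ qI p t a k := by
  rw [qI]
  exact Ideal.subset_span (Set.mem_insert _ _)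

lemma im_dvd_aux (r n a k a' k' : ℤ)
    (h : Ideal.span {(r : QA p t)} * qI p t a k ≤ Ideal.span {(n : QA p t)} * qI p t a' k') :
    n ∣ r := by
  have h1 : (r : QA p t) * qth p t k ∈ Ideal.span {(r : QA p t)} * qI p t a k :=
    Ideal.mul_mem_mul (Ideal.mem_span_singleton_self _) (qth_mem_qI a k)
  have h3 := h h1
  have h4 := Ideal.mul_le_right (I := qI p t a' k') (J := Ideal.span {(n : QA p t)}) (mul_comm (Ideal.span {(n : QA p t)}) _ ▸ h3)
  have h2 := ((mem_span_int _).mp h4).2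
  simpa [qth] using h2

lemma amb_uniq (hneg : t ^ 2 + 4 * p < 0) [IsDomain (QA p t)] {x y : ℤ × ℤ × ℤ}
    (hx : x ∈ ambSet (t ^ 2 + 4 * p)) (hy : y ∈ ambSet (t ^ 2 + 4 * p)) {r n : ℤ}
    (hr : r ≠ 0) (hn : n ≠ 0)
    (h : Ideal.span {(r : QA p t)} * ambI p t x = Ideal.span {(n : QA p t)} * ambI p t y) :
    y = x := by
  obtain ⟨a, b, c⟩ := x
  obtain ⟨a', b', c'⟩ := y
  obtain ⟨k, hk, hb, hac, ha, hab, hc, hb2, hd, -⟩ := amb_props hneg hx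
  obtain ⟨k', hk', hb', hac', ha', hab', hc', hb2', hd', -⟩ := amb_props hneg hy
  simp only [ambI, hk, hk'] at h
  have hass : Associated (r : QA p t) n := by
    have h1 := im_dvd_aux _ _ _ _ _ _ h.le
    have h2 := im_dvd_aux _ _ _ _ _ _ h.ge
    have hrn : r = n ∨ r = -n := by
      have := Int.natAbs_eq_natAbs_iff.mp (Nat.dvd_antisymm (Int.natAbs_dvd_natAbs.mpr h2)
        (Int.natAbs_dvd_natAbs.mpr h1))
      exact this
    rcases hrn with h | h
    · rw [h]
    · rw [h, Int.cast_neg]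
      exact Associated.neg_left (Associated.refl _)
  rw [← Ideal.span_singleton_eq_span_singleton] at hass
  rw [hass] at h
  have hI := (Ideal.span_singleton_mul_right_inj (intCast_ne hn)).mp h
  have h1 : a' ∣ a := by
    have : (a : QA p t) ∈ qI p t a' k' := by
      rw [← hI]; exact int_mem_qI _ _
    rw [mem_qI hac'] at this
    simpa using this
  have h2 : a ∣ a' := by
    have : (a' : QA p t) ∈ qI p t a k := by
      rw [hI]; exact int_mem_qI _ _
    rw [mem_qI hac] at this
    simpa using this
  have haa := Int.dvd_antisymm ha.le ha'.le h2 h1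
  subst haa
  have h3 : a ∣ k - k' := by
    have : qth p t k ∈ qI p t a k' := by
      rw [← hI]; exact qth_mem_qI _ _
    rw [mem_qI hac'] at this
    simpa [qth] using this
  have hbb : b' = b := by
    obtain ⟨j, hj⟩ := h3
    have h4 : b - b' = a * (2 * j) := by linarith
    rcases hb2 with rfl | rfl <;> rcases hb2' with rfl | rfl
    · rfl
    · exfalso
      have : b' * (2 * j + 1) = 0 := by linarith
      rcases mul_eq_zero.mp this with h | h <;> omega
    · exfalso
      have : b * (2 * j - 1) = 0 := by linarith
      rcases mul_eq_zero.mp this with h | h <;> omega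
    · rfl
  subst hbb
  have hcc : c' = c := by
    have : a * c' = a * c := by linarith
    exact mul_left_cancel₀ ha.ne' this
  rw [hcc]

def ambInv (x : ℤ × ℤ × ℤ) : ℤ × ℤ × ℤ :=
  if x.2.1 = 0 then (x.2.2, 0, x.1) else (4 * x.2.2 - x.1, 4 * x.2.2 - x.1, x.2.2)

def ambD (x : ℤ × ℤ × ℤ) : ℤ := if x.2.1 = 0 then 2 * x.1 else x.1

def qs (p t : ℤ) : QA p t := ⟨-t, 2⟩

lemma qs_ne : qs p t ≠ 0 := by
  intro h0
  have := congrArg QuadraticAlgebra.im h0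
  simp [qs] at this

lemma amb_four (hneg : t ^ 2 + 4 * p < 0) {a b c : ℤ} (hx : (a, b, c) ∈ ambSet (t ^ 2 + 4 * p))
    (hb0 : b ≠ 0) : b = a ∧ 0 < 4 * c - a := by
  obtain ⟨k, hk, hb, hac, ha, hab, hc, hb2, hd, hc0⟩ := amb_props hneg hx
  have hba : b = a := by tauto
  subst hba
  have : 0 < b * (4 * c - b) := by nlinarith
  exact ⟨rfl, pos_of_mul_pos_right this ha.le⟩

lemma ambInv_mem (hneg : t ^ 2 + 4 * p < 0) {x : ℤ × ℤ × ℤ} (hx : x ∈ ambSet (t ^ 2 + 4 * p)) :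
    ambInv x ∈ ambSet (t ^ 2 + 4 * p) := by
  obtain ⟨a, b, c⟩ := x
  obtain ⟨k, hk, hb, hac, ha, hab, hc, hb2, hd, hc0⟩ := amb_props hneg hx
  by_cases hb0 : b = 0
  · simp only [ambInv, hb0, if_true]
    apply mem_ambSet_of hc0 (Or.inl rfl) _ hc.symm
    rw [← hd, hb0]; ring
  · obtain ⟨hba, h4⟩ := amb_four hneg hx hb0
    simp only [ambInv, hb0, if_false]
    apply mem_ambSet_of h4 (Or.inr rfl)
    · rw [← hd, hba]; ring
    · have : 4 * c - a = -a + c * 4 := by ring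
      rw [this, IsCoprime.add_mul_left_left_iff]
      exact hc.neg_left

lemma ambInv_invol (hneg : t ^ 2 + 4 * p < 0) {x : ℤ × ℤ × ℤ} (hx : x ∈ ambSet (t ^ 2 + 4 * p)) :
    ambInv (ambInv x) = x ∧ ambD x * ambD (ambInv x) = - (t ^ 2 + 4 * p) := by
  obtain ⟨a, b, c⟩ := x
  obtain ⟨k, hk, hb, hac, ha, hab, hc, hb2, hd, hc0⟩ := amb_props hneg hx
  by_cases hb0 : b = 0
  · simp only [ambInv, ambD, hb0, if_true]
    refine ⟨by simp, ?_⟩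
    rw [← hd, hb0]; ring
  · obtain ⟨hba, h4⟩ := amb_four hneg hx hb0
    subst hba
    simp only [ambInv, ambD, hb0, if_false, h4.ne']
    refine ⟨by simp, ?_⟩
    rw [← hd]; ring

lemma ambD_ne (hneg : t ^ 2 + 4 * p < 0) {x : ℤ × ℤ × ℤ} (hx : x ∈ ambSet (t ^ 2 + 4 * p)) :
    ambD x ≠ 0 := by
  have := (ambInv_invol hneg hx).2
  intro h0
  rw [h0] at this
  omega

lemma ambInv_ne (h4 : t ^ 2 + 4 * p < -4) {x : ℤ × ℤ × ℤ} (hx : x ∈ ambSet (t ^ 2 + 4 * p)) :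
    ambInv x ≠ x := by
  have hneg : t ^ 2 + 4 * p < 0 := by omega
  obtain ⟨a, b, c⟩ := x
  obtain ⟨k, hk, hb, hac, ha, hab, hc, hb2, hd, hc0⟩ := amb_props hneg hx
  intro heq
  by_cases hb0 : b = 0
  · simp only [ambInv, hb0, if_true, Prod.mk.injEq] at heq
    obtain ⟨rfl, -, -⟩ := heq
    have := isCoprime_self.mp hc
    rcases Int.isUnit_iff.mp this with h | h
    · subst h hb0; omega
    · omega
  · obtain ⟨hba, h4⟩ := amb_four hneg hx hb0
    simp only [ambInv, hb0, if_false, Prod.mk.injEq] at heq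
    have hac2 : a = 2 * c := by omega
    subst hac2
    have := isCoprime_self.mp hc.of_mul_left_right
    rcases Int.isUnit_iff.mp this with h | h
    · subst h hba; omega
    · omega

lemma ambInv_le (hneg : t ^ 2 + 4 * p < 0) {x : ℤ × ℤ × ℤ} (hx : x ∈ ambSet (t ^ 2 + 4 * p)) :
    Ideal.span {qs p t} * ambI p t x ≤ Ideal.span {(ambD x : QA p t)} * ambI p t (ambInv x) := by
  have hmem := ambInv_mem hneg hx
  obtain ⟨a, b, c⟩ := x
  obtain ⟨k, hk, hb, hac, ha, hab, hc, hb2, hd, hc0⟩ := amb_props hneg hx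
  have gen : ∀ (K : Ideal (QA p t)), qs p t * (a : QA p t) ∈ K → qs p t * qth p t k ∈ K →
      Ideal.span {qs p t} * qI p t a k ≤ K := by
    intro K h1 h2
    rw [qI, Ideal.span_mul_span', Ideal.span_le]
    rintro x hx
    simp only [Set.mem_mul, Set.mem_singleton_iff, Set.mem_insert_iff] at hx
    obtain ⟨_, rfl, y, rfl | rfl, rfl⟩ := hx
    · exact h1
    · exact h2
  by_cases hb0 : b = 0
  · simp only [ambInv, ambD, hb0, if_true] at hmem ⊢
    subst hb0
    simp only [ambI, hk]
    have hs : qs p t = 2 * qth p t k := by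
      rw [two_mul]
      ext
      · simp [qs, qth]; omega
      · simp [qs, qth]
    apply gen
    · rw [Ideal.mem_span_singleton_mul]
      refine ⟨qth p t k, Ideal.subset_span (by simp), ?_⟩
      rw [hs]; push_cast; ring
    · rw [Ideal.mem_span_singleton_mul]
      refine ⟨-(c : QA p t), neg_mem (Ideal.subset_span (by simp)), ?_⟩
      have hsq := qth_sq (p := p) (t := t) k
      rw [← hb, ← hac] at hsq
      push_cast at hsq ⊢
      rw [hs]
      linear_combination (-2) * hsq
  · obtain ⟨hba, h4⟩ := amb_four hneg hx hb0
    subst hba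
    simp only [ambInv, ambD, hb0, if_false] at hmem ⊢
    obtain ⟨k', hk', hb', hac', -⟩ := amb_props hneg hmem
    simp only [ambI, hk, hk']
    apply gen
    · rw [Ideal.mem_span_singleton_mul]
      refine ⟨qs p t, ?_, mul_comm _ _⟩
      rw [mem_qI hac']
      refine ⟨-1, ?_⟩
      simp only [qs]
      linarith
    · rw [Ideal.mem_span_singleton_mul]
      refine ⟨⟨k - 2 * c, 1⟩, ?_, ?_⟩
      · rw [mem_qI hac']
        refine ⟨-1, ?_⟩
        simp only
        linarith
      · ext
        · simp [qs, qth]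
          linear_combination (k : ℤ) * hb - 2 * hac
        · simp [qs, qth]
          linarith

lemma ambInv_eq (hneg : t ^ 2 + 4 * p < 0) [IsDomain (QA p t)]
    {x : ℤ × ℤ × ℤ} (hx : x ∈ ambSet (t ^ 2 + 4 * p)) :
    Ideal.span {qs p t} * ambI p t x = Ideal.span {(ambD x : QA p t)} * ambI p t (ambInv x) := by
  apply le_antisymm (ambInv_le hneg hx)
  have hmem := ambInv_mem hneg hx
  have h1 := ambInv_le hneg hmem
  obtain ⟨h2, h3⟩ := ambInv_invol hneg hx
  rw [h2] at h1
  have hd' : (ambD (ambInv x) : QA p t) ≠ 0 := intCast_ne (ambD_ne hneg hmem)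
  rw [← Ideal.span_singleton_mul_right_mono hd', ← mul_assoc, Ideal.span_singleton_mul_span_singleton]
  have h4 : Ideal.span {(ambD (ambInv x) : QA p t) * ambD x} = Ideal.span {qs p t} * Ideal.span {qs p t} := by
    rw [Ideal.span_singleton_mul_span_singleton, ← Ideal.span_singleton_neg]
    congr 2
    have : (ambD (ambInv x) : QA p t) * ambD x = ((-(t ^ 2 + 4 * p) : ℤ) : QA p t) := by
      rw [← h3]; push_cast; ring
    rw [this, ← Int.cast_neg]
    ext
    · simp only [qs, QuadraticAlgebra.re_intCast, QuadraticAlgebra.re_mul, Int.cast_id]; ring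
    · simp only [qs, QuadraticAlgebra.im_intCast, QuadraticAlgebra.im_mul]; ring
  rw [h4, mul_assoc]
  calc _ ≤ Ideal.span {qs p t} * (Ideal.span {(ambD (ambInv x) : QA p t)} * ambI p t x) :=
        Ideal.mul_mono_right h1
    _ = _ := by ring

lemma unit_pm (h4 : t ^ 2 + 4 * p < -4) {u : QA p t} (hu : IsUnit u) : u = 1 ∨ u = -1 := by
  have hneg : t ^ 2 + 4 * p < 0 := by omega
  have : Nontrivial (QA p t) := inferInstance
  have h1 := QuadraticAlgebra.isUnit_iff_norm_isUnit.mp hu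
  have h2 := norm_pos' hneg hu.ne_zero
  have h3 : u.norm = 1 := by
    rcases Int.isUnit_iff.mp h1 with h | h <;> omega
  have h5 := four_norm u
  rw [h3] at h5
  have him : u.im = 0 := by
    by_contra h0
    have : 1 ≤ u.im ^ 2 := by have : 0 < u.im ^ 2 := by positivity
                              omega
    nlinarith [sq_nonneg (2 * u.re + t * u.im)]
  rw [him] at h5
  have h6 : u.re ^ 2 = 1 := by nlinarith
  rcases (sq_eq_sq_iff_eq_or_eq_neg.mp (h6.trans (one_pow 2).symm)) with h | h
  · left; ext
    · rw [h]; rfl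
    · rw [him]; rfl
  · right; ext
    · rw [h]; rfl
    · rw [him]; rfl

lemma amb_fiber (h4 : t ^ 2 + 4 * p < -4) [IsDomain (QA p t)] {X Y : ℤ × ℤ × ℤ}
    (hX : X ∈ ambSet (t ^ 2 + 4 * p)) (hY : Y ∈ ambSet (t ^ 2 + 4 * p)) {x y : QA p t}
    (hx : x ≠ 0) (hy : y ≠ 0)
    (h : Ideal.span {x} * ambI p t X = Ideal.span {y} * ambI p t Y) :
    Y = X ∨ Y = ambInv X := by
  have hneg : t ^ 2 + 4 * p < 0 := by omega
  have stab : ∀ X ∈ ambSet (t ^ 2 + 4 * p),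
      Ideal.map (starRingEnd (QA p t)) (ambI p t X) = ambI p t X := by
    rintro ⟨a, b, c⟩ hX
    obtain ⟨k, hk, hb, hac, ha, hab, -⟩ := amb_props hneg hX
    simp only [ambI, hk]
    exact map_star_stable hb hac hab
  have hn := norm_pos' hneg hy
  obtain ⟨z, hz⟩ : ∃ z, z = x * star y := ⟨_, rfl⟩
  have hz0 : z ≠ 0 := by
    rw [hz]
    exact mul_ne_zero hx (by simpa using hy)
  have hzI : Ideal.span {z} * ambI p t X = Ideal.span {((y.norm : ℤ) : QA p t)} * ambI p t Y := by
    rw [norm_cast', hz, ← Ideal.span_singleton_mul_span_singleton,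
      ← Ideal.span_singleton_mul_span_singleton]
    calc _ = Ideal.span {star y} * (Ideal.span {x} * ambI p t X) := by ring
      _ = _ := by rw [h]; ring
  have hzI' := congrArg (Ideal.map (starRingEnd (QA p t))) hzI
  rw [Ideal.map_mul, Ideal.map_mul, stab X hX, stab Y hY, Ideal.map_span, Ideal.map_span,
    Set.image_singleton, Set.image_singleton, starRingEnd_apply, starRingEnd_apply, star_intCast,
    ← hzI] at hzI'
  obtain ⟨hsq, hne⟩ := ambI_sq hneg hX
  have h1 := congrArg (fun K => K * ambI p t X) hzI'
  simp only [mul_assoc, hsq] at h1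
  rw [mul_comm, mul_comm (Ideal.span {z}), Ideal.span_singleton_mul_right_inj hne,
    Ideal.span_singleton_eq_span_singleton] at h1
  obtain ⟨u, hu⟩ := h1.symm
  rcases unit_pm h4 u.isUnit with h2 | h2
  · left
    rw [h2, mul_one] at hu
    have him : z.im = 0 := by
      have := congrArg QuadraticAlgebra.im hu
      rw [QuadraticAlgebra.im_star] at this
      omega
    have hzc : z = (z.re : QA p t) := by
      ext <;> simp [him]
    have hr : z.re ≠ 0 := by
      intro h0; rw [h0] at hzc; exact hz0 (by rw [hzc]; simp)
    rw [hzc] at hzI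
    exact amb_uniq hneg hX hY hr hn.ne' hzI
  · right
    rw [h2] at hu
    have hre : 2 * z.re = - t * z.im := by
      have := congrArg QuadraticAlgebra.re hu
      rw [QuadraticAlgebra.re_star] at this
      simp at this
      linarith
    have him : z.im ≠ 0 := by
      intro h0
      rw [h0] at hre
      exact hz0 (by ext <;> simp <;> omega)
    have h2z : ((2 : ℤ) : QA p t) * z = (z.im : QA p t) * qs p t := by
      ext
      · simp only [qs, QuadraticAlgebra.re_intCast, QuadraticAlgebra.im_intCast,
          QuadraticAlgebra.re_mul, Int.cast_id]; linarith
      · simp only [qs, QuadraticAlgebra.re_intCast, QuadraticAlgebra.im_intCast,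
          QuadraticAlgebra.im_mul, Int.cast_id]; linarith
    refine amb_uniq hneg (ambInv_mem hneg hX) hY (r := z.im * ambD X) (n := 2 * y.norm)
      (mul_ne_zero him (ambD_ne hneg hX)) (by omega) ?_
    rw [Int.cast_mul, Int.cast_mul, ← Ideal.span_singleton_mul_span_singleton,
      ← Ideal.span_singleton_mul_span_singleton, mul_assoc, mul_assoc, ← hzI, ← ambInv_eq hneg hX,
      ← mul_assoc, ← mul_assoc, Ideal.span_singleton_mul_span_singleton,
      Ideal.span_singleton_mul_span_singleton, h2z]

lemma amb_principal (hneg : t ^ 2 + 4 * p < 0) (h4 : -4 ≤ t ^ 2 + 4 * p) {x : ℤ × ℤ × ℤ}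
    (hx : x ∈ ambSet (t ^ 2 + 4 * p)) : ∃ w : QA p t, w ≠ 0 ∧ ambI p t x = Ideal.span {w} := by
  obtain ⟨a, b, c⟩ := x
  have hx' := hx
  obtain ⟨k, hk, hb, hac, ha, hab, hc, hb2, hd, hc0⟩ := amb_props hneg hx
  have h1 : a = 1 ∨ c = 1 := by
    by_cases hb0 : b = 0
    · rw [hb0] at hd
      left
      nlinarith
    · obtain ⟨hba, h5⟩ := amb_four hneg hx hb0
      subst hba
      by_contra! hh
      have hb2 : 2 ≤ b := by omega
      have hc2 : 2 ≤ c := by omega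
      nlinarith
  simp only [ambI, hk]
  rcases h1 with rfl | rfl
  · refine ⟨1, one_ne_zero, ?_⟩
    rw [Ideal.span_singleton_one, Ideal.eq_top_iff_one, qI]
    exact Ideal.subset_span (by simp)
  · refine ⟨qth p t k, ?_, ?_⟩
    · intro h0
      have := congrArg QuadraticAlgebra.im h0
      simp [qth] at this
    · apply le_antisymm
      · rw [qI, Ideal.span_le]
        rintro x hx
        simp only [Set.mem_insert_iff, Set.mem_singleton_iff] at hx
        rcases hx with rfl | rfl
        · rw [SetLike.mem_coe, Ideal.mem_span_singleton]
          refine ⟨((t + 2 * k : ℤ) : QA p t) - qth p t k, ?_⟩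
          have hsq := qth_sq (p := p) (t := t) k
          rw [← hac] at hsq
          push_cast at hsq ⊢
          linear_combination hsq
        · exact Ideal.mem_span_singleton_self _
      · rw [Ideal.span_singleton_le_iff_mem]
        exact Ideal.subset_span (by simp)

lemma card_QA (hneg : t ^ 2 + 4 * p < 0) (hcong : (t ^ 2 + 4 * p) % 4 = 0 ∨ (t ^ 2 + 4 * p) % 4 = 1)
    [IsDomain (QA p t)]
    (r : ℕ) (hr : r = ((t ^ 2 + 4 * p).natAbs.primeFactors.erase 2).card)
    (μ : ℕ)
    (hμ : μ = if (t ^ 2 + 4 * p) % 4 = 1 ∨ (t ^ 2 + 4 * p) % 16 = 4 then r - 1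
          else if (t ^ 2 + 4 * p) % 16 = 8 ∨ (t ^ 2 + 4 * p) % 16 = 12 ∨
            (t ^ 2 + 4 * p) % 32 = 16 then r
          else r + 1) :
    Nat.card {c : ClassGroup (QA p t) // c ^ 2 = 1} = 2 ^ μ := by
  obtain ⟨hfin, hcard⟩ := card_ambSet _ hneg hcong r hr μ hμ
  have hunit : ∀ x ∈ ambSet (t ^ 2 + 4 * p), _ := fun x hx =>
    isUnit_of_sq (ambI_sq hneg hx).2 (ambI_sq hneg hx).1
  let f : ambSet (t ^ 2 + 4 * p) → {c : ClassGroup (QA p t) // c ^ 2 = 1} := fun x =>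
    ⟨idealCls (ambI p t x.1), (idealCls_sq (hunit _ x.2)).mpr
      ⟨_, (ambI_sq hneg x.2).2, (ambI_sq hneg x.2).1⟩⟩
  have hf : Function.Surjective f := by
    rintro ⟨c, hc⟩
    obtain ⟨I, hI, rfl⟩ := idealCls_surj c
    obtain ⟨x, hx, hsq⟩ := (idealCls_sq hI).mp hc
    obtain ⟨y, hy, u, v, hu, hv, huv⟩ := amb_surj hneg hx hsq
    refine ⟨⟨y, hy⟩, Subtype.ext ?_⟩
    exact ((idealCls_eq_iff hI (hunit y hy)).mpr ⟨u, v, hu, hv, huv⟩).symm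
  have : Finite (ambSet (t ^ 2 + 4 * p)) := hfin
  by_cases h4 : t ^ 2 + 4 * p < -4
  · have h2 := card_two_to_one f hf (fun x => ⟨ambInv x.1, ambInv_mem hneg x.2⟩)
      (fun x h => ambInv_ne h4 x.2 (congrArg Subtype.val h)) (by
        rintro ⟨x, hx⟩ ⟨y, hy⟩
        simp only [f, Subtype.mk.injEq]
        rw [idealCls_eq_iff (hunit x hx) (hunit y hy)]
        constructor
        · rintro ⟨u, v, hu, hv, huv⟩
          exact amb_fiber h4 hx hy hu hv huv
        · rintro (rfl | rfl)
          · exact ⟨1, 1, one_ne_zero, one_ne_zero, rfl⟩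
          · exact ⟨_, _, qs_ne, intCast_ne (ambD_ne hneg hx), ambInv_eq hneg hx⟩)
    rw [Nat.card_coe_set_eq, hcard, pow_succ] at h2
    omega
  · have hone : Nat.card {c : ClassGroup (QA p t) // c ^ 2 = 1} = 1 := by
      rw [Nat.card_eq_one_iff_unique]
      refine ⟨⟨fun a b => ?_⟩, ⟨⟨1, one_pow 2⟩⟩⟩
      obtain ⟨x, rfl⟩ := hf a
      obtain ⟨y, rfl⟩ := hf b
      apply Subtype.ext
      change idealCls (ambI p t x.1) = idealCls (ambI p t y.1)
      rw [idealCls_eq_iff (hunit _ x.2) (hunit _ y.2)]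
      obtain ⟨w, hw, hw2⟩ := amb_principal hneg (by omega) x.2
      obtain ⟨v, hv, hv2⟩ := amb_principal hneg (by omega) y.2
      exact ⟨v, w, hv, hw, by rw [hw2, hv2, mul_comm]⟩
    rw [hone]
    have hcases : t ^ 2 + 4 * p = -3 ∨ t ^ 2 + 4 * p = -4 := by omega
    have hμ0 : μ = 0 := by
      rcases hcases with h | h
      · rw [h] at hr hμ
        have : (Int.natAbs (-3)).primeFactors.erase 2 = {3} := by
          rw [show Int.natAbs (-3) = 3 from rfl, Nat.prime_three.primeFactors]; rfl
        rw [this, Finset.card_singleton] at hr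
        rw [hμ, hr]; rfl
      · rw [h] at hr hμ
        have : (Int.natAbs (-4)).primeFactors.erase 2 = ∅ := by
          rw [show Int.natAbs (-4) = 2 ^ 2 from rfl,
            Nat.primeFactors_prime_pow two_ne_zero Nat.prime_two]; rfl
        rw [this, Finset.card_empty] at hr
        rw [hμ, hr]; rfl
    rw [hμ0, pow_zero]

end QuadPart

open QuadraticAlgebra in
lemma card_of_QA (Δ m : ℤ) [IsDomain (ℤ[X] ⧸ Ideal.span {(X ^ 2 - C Δ * X + C m : ℤ[X])})]
    [IsDomain (QA (-m) Δ)] :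
    Nat.card {c : ClassGroup (ℤ[X] ⧸ Ideal.span {(X ^ 2 - C Δ * X + C m : ℤ[X])}) // c ^ 2 = 1} =
      Nat.card {c : ClassGroup (QA (-m) Δ) // c ^ 2 = 1} := by
  set P : ℤ[X] := X ^ 2 - C Δ * X + C m with hP
  have hroot : aeval (⟨0, 1⟩ : QA (-m) Δ) P = 0 := by
    rw [hP]
    simp only [map_add, map_sub, map_mul, map_pow, aeval_X, aeval_C]
    ext <;> simp [sq]
  let F : (ℤ[X] ⧸ Ideal.span {P}) →ₐ[ℤ] QA (-m) Δ :=
    Ideal.Quotient.liftₐ _ (aeval (⟨0, 1⟩ : QA (-m) Δ)) (by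
      intro a ha
      obtain ⟨b, rfl⟩ := Ideal.mem_span_singleton.mp ha
      rw [map_mul, hroot, zero_mul])
  let xb : ℤ[X] ⧸ Ideal.span {P} := Ideal.Quotient.mk _ X
  have hxb : xb * xb = (-m) • 1 + Δ • xb := by
    have h0 : (Ideal.Quotient.mk (Ideal.span {P})) P = 0 :=
      Ideal.Quotient.eq_zero_iff_mem.mpr (Ideal.mem_span_singleton_self _)
    have hC : ∀ n : ℤ, (Ideal.Quotient.mk (Ideal.span {P})) (C n) = (n : ℤ[X] ⧸ Ideal.span {P}) := by
      intro n
      simp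
    have h1 : xb ^ 2 - (Δ : ℤ[X] ⧸ Ideal.span {P}) * xb + (m : ℤ[X] ⧸ Ideal.span {P}) = 0 := by
      rw [← hC, ← hC, ← h0]
      simp only [xb, ← map_add, ← map_sub, ← map_mul, ← map_pow]
      exact congrArg _ hP.symm
    rw [zsmul_eq_mul, zsmul_eq_mul]
    push_cast
    linear_combination h1
  let G : QA (-m) Δ →ₐ[ℤ] (ℤ[X] ⧸ Ideal.span {P}) := QuadraticAlgebra.lift ⟨xb, hxb⟩
  have hFx : F xb = ⟨0, 1⟩ := by
    change aeval (⟨0, 1⟩ : QA (-m) Δ) X = _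
    rw [aeval_X]
  have hGw : G ⟨0, 1⟩ = xb := by
    simp [G]
  have hFG : ∀ z, F (G z) = z := by
    intro z
    have hz : z = (z.re : QA (-m) Δ) + (z.im : QA (-m) Δ) * ⟨0, 1⟩ := by
      ext <;> simp
    rw [hz]
    simp only [map_add, map_mul, map_intCast, hGw, hFx]
  have hGF : ∀ y, G (F y) = y := by
    intro y
    obtain ⟨q, rfl⟩ := Ideal.Quotient.mk_surjective y
    have : (G.comp F).comp (Ideal.Quotient.mkₐ ℤ (Ideal.span {P})) =
        Ideal.Quotient.mkₐ ℤ (Ideal.span {P}) := by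
      apply Polynomial.algHom_ext
      change G (F xb) = xb
      rw [hFx, hGw]
    exact DFunLike.congr_fun this q
  let e : (ℤ[X] ⧸ Ideal.span {P}) ≃+* QA (-m) Δ :=
    RingEquiv.ofRingHom F.toRingHom G.toRingHom (RingHom.ext hFG) (RingHom.ext hGF)
  let E := ClassGroup.mulEquiv e
  refine Nat.card_congr (E.toEquiv.subtypeEquiv ?_)
  intro c
  change c ^ 2 = 1 ↔ (E c) ^ 2 = 1
  rw [← map_pow, map_eq_one_iff E E.injective]

/-- Let `Δ < 0` with `Δ ≡ 0` or `1 (mod 4)`, let `o(Δ)` be the imaginary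
quadratic order of discriminant `Δ` (an integral domain since `Δ < 0`), and let `r` be
the number of distinct odd primes dividing `Δ`. Then the number of `2`-torsion elements
of `Pic(o(Δ)) = ClassGroup o(Δ)` is `2^μ`, where `μ = r − 1` if `Δ ≡ 1 (mod 4)` or
`Δ ≡ 4 (mod 16)`; `μ = r` if `Δ ≡ 8, 12 (mod 16)` or `Δ ≡ 16 (mod 32)`; and
`μ = r + 1` if `Δ ≡ 0 (mod 32)`. -/
theorem card_classGroup_two_torsion (Δ : ℤ) (hΔneg : Δ < 0)
    (hΔcong : Δ % 4 = 0 ∨ Δ % 4 = 1) [IsDomain (quadOrder Δ)]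
    (r : ℕ) (hr : r = (Δ.natAbs.primeFactors.erase 2).card)
    (μ : ℕ)
    (hμ : μ = if Δ % 4 = 1 ∨ Δ % 16 = 4 then r - 1
          else if Δ % 16 = 8 ∨ Δ % 16 = 12 ∨ Δ % 32 = 16 then r
          else r + 1) :
    Nat.card {c : ClassGroup (quadOrder Δ) // c ^ 2 = 1} = 2 ^ μ := by
  obtain ⟨m, hm⟩ : ∃ m, (Δ ^ 2 - Δ) / 4 = m := ⟨_, rfl⟩
  have h4 : Δ ^ 2 + 4 * (-m) = Δ := by
    have hdvd : (4 : ℤ) ∣ Δ ^ 2 - Δ := by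
      rcases hΔcong with h | h
      · exact (dvd_sub (dvd_pow (Int.dvd_of_emod_eq_zero h) two_ne_zero)
          (Int.dvd_of_emod_eq_zero h))
      · have : (4 : ℤ) ∣ Δ - 1 := by omega
        have h2 : Δ ^ 2 - Δ = (Δ - 1) * Δ := by ring
        rw [h2]
        exact this.mul_right _
    omega
  have hdom : IsDomain (QA (-m) Δ) := isDomain_QA (by omega)
  have key : Nat.card {c : ClassGroup (QA (-m) Δ) // c ^ 2 = 1} = 2 ^ μ := by
    apply card_QA (by omega) (by rw [h4]; exact hΔcong) r (by rw [h4]; exact hr) μ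
    rw [h4]; exact hμ
  rw [← key]
  subst hm
  exact card_of_QA Δ _
end

section
/- Let K be a number field with [K : ℚ] = 2 whose discriminant d = disc(K) satisfies d < −4 (so K is an imaginary quadratic field). Then the class number h_K of K satisfies h_K ≤ (e/(2π))·√|d|·log|d|, as real numbers. -/
namespace ClassNumberBound

open NumberField Ideal UniqueFactorizationMonoid

section Ideals

variable {K : Type*} [Field K] [NumberField K]

/-- The rational prime below a prime ideal. -/
noncomputable def below (P : Ideal (𝓞 K)) : ℕ := absNorm (under ℤ P)

/-- A nonzero prime ideal. -/
def NZPrime (P : Ideal (𝓞 K)) : Prop := P.IsPrime ∧ P ≠ ⊥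

lemma below_prime {P : Ideal (𝓞 K)} (h : NZPrime P) : (below P).Prime := by
  have := h.1
  have : NeZero P := ⟨h.2⟩
  exact Nat.absNorm_under_prime P

lemma below_dvd (P : Ideal (𝓞 K)) : below P ∣ absNorm P :=
  Int.absNorm_under_dvd_absNorm P

lemma below_mem (P : Ideal (𝓞 K)) : ((below P : ℕ) : 𝓞 K) ∈ P := by
  have := Int.absNorm_under_mem P
  simpa [below] using this

lemma absNorm_span_nat (hdeg : Module.finrank ℚ K = 2) (p : ℕ) :
    absNorm (span {(p : 𝓞 K)}) = p ^ 2 := by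
  have h : Module.finrank ℤ (𝓞 K) = 2 := by rw [RingOfIntegers.rank, hdeg]
  have h2 : ((p : ℕ) : 𝓞 K) = algebraMap ℤ (𝓞 K) p := by simp
  rw [absNorm_span_singleton, h2, Algebra.norm_algebraMap_of_basis (RingOfIntegers.basis K),
    ← Module.finrank_eq_card_basis (RingOfIntegers.basis K), h, Int.natAbs_pow, Int.natAbs_natCast]

lemma absNorm_dvd_sq (hdeg : Module.finrank ℚ K = 2) (P : Ideal (𝓞 K)) :
    absNorm P ∣ below P ^ 2 := by
  rw [← absNorm_span_nat hdeg]
  apply absNorm_dvd_absNorm_of_le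
  rw [span_singleton_le_iff_mem]
  exact below_mem P

lemma factorization_norm_ne (hdeg : Module.finrank ℚ K = 2) {P Q : Ideal (𝓞 K)}
    (hP : NZPrime P) (hQ : NZPrime Q) (h : below P ≠ below Q) :
    (absNorm Q).factorization (below P) = 0 := by
  apply Nat.factorization_eq_zero_of_not_dvd
  intro hd
  have := (below_prime hP).dvd_of_dvd_pow (hd.trans (absNorm_dvd_sq hdeg Q))
  exact h ((Nat.prime_dvd_prime_iff_eq (below_prime hP) (below_prime hQ)).1 this)

lemma norm_ne_zero {P : Ideal (𝓞 K)} (hP : P ≠ ⊥) : absNorm P ≠ 0 := by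
  rwa [Ne, absNorm_eq_zero_iff]

lemma factorization_prod (hdeg : Module.finrank ℚ K = 2) (S : Set (Ideal (𝓞 K)))
    (hS : ∀ P ∈ S, ∀ Q ∈ S, NZPrime P → NZPrime Q → below P = below Q → P = Q)
    {P : Ideal (𝓞 K)} (hP : NZPrime P) (hPS : P ∈ S)
    (M : Multiset (Ideal (𝓞 K))) (hM : ∀ Q ∈ M, NZPrime Q ∧ Q ∈ S) :
    (M.map absNorm).prod ≠ 0 ∧ (M.map absNorm).prod.factorization (below P) =
      (absNorm P).factorization (below P) * M.count P := by
  classical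
  induction M using Multiset.induction_on with
  | empty => simp
  | cons Q M ih =>
    obtain ⟨ih0, ih1⟩ := ih (fun Q hQ => hM Q (Multiset.mem_cons_of_mem hQ))
    obtain ⟨hQ, hQS⟩ := hM Q (Multiset.mem_cons_self Q M)
    have hQ0 := norm_ne_zero hQ.2
    rw [Multiset.map_cons, Multiset.prod_cons]
    refine ⟨mul_ne_zero hQ0 ih0, ?_⟩
    rw [Nat.factorization_mul hQ0 ih0, Finsupp.add_apply, ih1]
    by_cases h : P = Q
    · subst h
      rw [Multiset.count_cons_self]; ring
    · rw [Multiset.count_cons_of_ne h, factorization_norm_ne hdeg hP hQ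
        (fun hb => h (hS P hPS Q hQS hP hQ hb)), zero_add]

lemma multiset_eq (hdeg : Module.finrank ℚ K = 2) (S : Set (Ideal (𝓞 K)))
    (hS : ∀ P ∈ S, ∀ Q ∈ S, NZPrime P → NZPrime Q → below P = below Q → P = Q)
    (M N : Multiset (Ideal (𝓞 K))) (hM : ∀ Q ∈ M, NZPrime Q ∧ Q ∈ S)
    (hN : ∀ Q ∈ N, NZPrime Q ∧ Q ∈ S)
    (h : (M.map absNorm).prod = (N.map absNorm).prod) : M = N := by
  classical
  ext P
  by_cases hP : NZPrime P ∧ P ∈ S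
  · have h1 := (factorization_prod hdeg S hS hP.1 hP.2 M hM).2
    have h2 := (factorization_prod hdeg S hS hP.1 hP.2 N hN).2
    rw [h, h2] at h1
    have hpos : 0 < (absNorm P).factorization (below P) :=
      (below_prime hP.1).factorization_pos_of_dvd (norm_ne_zero hP.1.2) (below_dvd P)
    exact (Nat.eq_of_mul_eq_mul_left hpos h1).symm
  · rw [Multiset.count_eq_zero_of_notMem (fun h => hP (hM P h)),
      Multiset.count_eq_zero_of_notMem (fun h => hP (hN P h))]

lemma not_three (hdeg : Module.finrank ℚ K = 2) {P Q R : Ideal (𝓞 K)}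
    (hP : NZPrime P) (hQ : NZPrime Q) (hR : NZPrime R)
    (hPQ : P ≠ Q) (hPR : P ≠ R) (hQR : Q ≠ R)
    (h1 : below P = below Q) (h2 : below P = below R) : False := by
  set p := below P with hp
  have hpp : p.Prime := below_prime hP
  have dvd : ∀ {I : Ideal (𝓞 K)}, below I = p → I ∣ span {(p : 𝓞 K)} := by
    intro I hI
    rw [dvd_iff_le, span_singleton_le_iff_mem, ← hI]
    exact below_mem I
  have cop : ∀ {I J : Ideal (𝓞 K)}, NZPrime I → NZPrime J → I ≠ J → IsCoprime I J := by
    intro I J hI hJ hIJ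
    have := hI.1
    have := hJ.1
    have mI := hI.1.isMaximal hI.2
    have mJ := hJ.1.isMaximal hJ.2
    exact Ideal.isCoprime_iff_sup_eq.2 (mI.coprime_of_ne mJ hIJ)
  have hd : P * Q * R ∣ span {(p : 𝓞 K)} :=
    IsCoprime.mul_dvd (IsCoprime.mul_left (cop hP hR hPR) (cop hQ hR hQR))
      (IsCoprime.mul_dvd (cop hP hQ hPQ) (dvd rfl) (dvd h1.symm)) (dvd h2.symm)
  have hn : absNorm (P * Q * R) ∣ p ^ 2 := by
    rw [← absNorm_span_nat hdeg]
    exact absNorm_dvd_absNorm_of_le (dvd_iff_le.1 hd)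
  rw [map_mul, map_mul] at hn
  have h3 : p * p * p ∣ p ^ 2 := by
    refine (mul_dvd_mul (mul_dvd_mul (below_dvd P) ?_) ?_).trans hn
    · rw [h1]; exact below_dvd Q
    · rw [h2]; exact below_dvd R
  have := Nat.le_of_dvd (pow_pos hpp.pos 2) h3
  have := hpp.two_le
  nlinarith [pow_pos hpp.pos 2]

open Classical in
/-- A choice of a prime above `p`. -/
noncomputable def chosen (K : Type*) [Field K] [NumberField K] (p : ℕ) : Ideal (𝓞 K) :=
  if h : ∃ P : Ideal (𝓞 K), NZPrime P ∧ below P = p then h.choose else ⊥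

lemma chosen_spec {P : Ideal (𝓞 K)} (h : NZPrime P) :
    NZPrime (chosen K (below P)) ∧ below (chosen K (below P)) = below P := by
  have h' : ∃ Q : Ideal (𝓞 K), NZPrime Q ∧ below Q = below P := ⟨P, h, rfl⟩
  rw [chosen, dif_pos h']
  exact h'.choose_spec

/-- The set of chosen primes. -/
def chosenSet (K : Type*) [Field K] [NumberField K] : Set (Ideal (𝓞 K)) :=
  {P | chosen K (below P) = P}

lemma chosenSet_inj : ∀ P ∈ chosenSet K, ∀ Q ∈ chosenSet K, NZPrime P → NZPrime Q →
    below P = below Q → P = Q := by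
  intro P hP Q hQ _ _ h
  have h1 : chosen K (below P) = P := hP
  have h2 : chosen K (below Q) = Q := hQ
  rw [← h1, ← h2, h]

lemma chosenSet_compl_inj (hdeg : Module.finrank ℚ K = 2) :
    ∀ P ∈ (chosenSet K)ᶜ, ∀ Q ∈ (chosenSet K)ᶜ, NZPrime P → NZPrime Q →
    below P = below Q → P = Q := by
  intro P hP Q hQ hP' hQ' h
  by_contra hne
  have h1 : chosen K (below P) ≠ P := hP
  have h2 : chosen K (below Q) ≠ Q := hQ
  rw [← h] at h2
  obtain ⟨h3, h4⟩ := chosen_spec hP'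
  exact not_three hdeg h3 hP' hQ' h1 h2 hne h4 (h4.trans h)

open Classical in
/-- The map sending an ideal to a factorization of its norm. -/
noncomputable def pairMap (I : Ideal (𝓞 K)) : ℕ × ℕ :=
  ((((normalizedFactors I).filter (· ∈ chosenSet K)).map absNorm).prod,
   (((normalizedFactors I).filter (¬ · ∈ chosenSet K)).map absNorm).prod)

lemma nz_of_mem {I P : Ideal (𝓞 K)} (h : P ∈ normalizedFactors I) : NZPrime P := by
  have h1 := prime_of_normalized_factor P h
  exact ⟨isPrime_of_prime h1, h1.ne_zero⟩

lemma pairMap_inj (hdeg : Module.finrank ℚ K = 2) {I J : Ideal (𝓞 K)} (hI : I ≠ ⊥) (hJ : J ≠ ⊥)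
    (h : pairMap I = pairMap J) : I = J := by
  classical
  rw [pairMap, pairMap, Prod.mk.injEq] at h
  have h1 := multiset_eq hdeg (chosenSet K) chosenSet_inj _ _ (by
    intro Q hQ
    rw [Multiset.mem_filter] at hQ
    exact ⟨nz_of_mem hQ.1, hQ.2⟩) (by
    intro Q hQ
    rw [Multiset.mem_filter] at hQ
    exact ⟨nz_of_mem hQ.1, hQ.2⟩) h.1
  have h2 := multiset_eq hdeg (chosenSet K)ᶜ (chosenSet_compl_inj hdeg) _ _ (by
    intro Q hQ
    rw [Multiset.mem_filter] at hQ
    exact ⟨nz_of_mem hQ.1, hQ.2⟩) (by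
    intro Q hQ
    rw [Multiset.mem_filter] at hQ
    exact ⟨nz_of_mem hQ.1, hQ.2⟩) h.2
  rw [← Ideal.prod_normalizedFactors_eq_self hI, ← Ideal.prod_normalizedFactors_eq_self hJ,
    ← Multiset.filter_add_not (· ∈ chosenSet K) (normalizedFactors I), h1, h2,
    Multiset.filter_add_not]

lemma pairMap_mul {I : Ideal (𝓞 K)} (hI : I ≠ ⊥) :
    (pairMap I).1 * (pairMap I).2 = absNorm I := by
  classical
  conv_rhs => rw [← Ideal.prod_normalizedFactors_eq_self hI, map_multiset_prod,
    ← Multiset.filter_add_not (· ∈ chosenSet K) (normalizedFactors I), Multiset.map_add,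
    Multiset.prod_add]
  rfl

/-- Pairs with product at most `N`. -/
def pairs (N : ℕ) : Finset (ℕ × ℕ) :=
  (Finset.Icc 1 N).biUnion fun a => (Finset.Icc 1 (N / a)).image fun b => (a, b)

lemma mem_pairs {N a b : ℕ} (h0 : a * b ≠ 0) (h : a * b ≤ N) : (a, b) ∈ pairs N := by
  have ha : 0 < a := Nat.pos_of_ne_zero (left_ne_zero_of_mul h0)
  have hb : 0 < b := Nat.pos_of_ne_zero (right_ne_zero_of_mul h0)
  simp only [pairs, Finset.mem_biUnion, Finset.mem_image, Finset.mem_Icc]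
  refine ⟨a, ⟨ha, by nlinarith⟩, b, ⟨hb, ?_⟩, rfl⟩
  rw [Nat.le_div_iff_mul_le ha]
  linarith

lemma card_pairs (N : ℕ) : (pairs N).card ≤ ∑ a ∈ Finset.Icc 1 N, N / a := by
  refine Finset.card_biUnion_le.trans (Finset.sum_le_sum fun a _ => ?_)
  exact Finset.card_image_le.trans (by simp)

lemma classNumber_le_sum (hdeg : Module.finrank ℚ K = 2) (hdisc : discr K < 0) :
    classNumber K ≤
      ∑ a ∈ Finset.Icc 1 ⌊2 / Real.pi * √|(discr K : ℝ)|⌋₊,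
        ⌊2 / Real.pi * √|(discr K : ℝ)|⌋₊ / a := by
  have hc : InfinitePlace.nrComplexPlaces K = 1 := by
    have h1 := InfinitePlace.card_add_two_mul_card_eq_rank K
    have h2 := sign_discr K
    rw [Int.sign_eq_neg_one_of_neg hdisc] at h2
    have h3 : InfinitePlace.nrComplexPlaces K ≠ 0 := by
      intro h; rw [h] at h2; norm_num at h2
    omega
  refine le_trans ?_ (card_pairs _)
  choose f hf1 hf2 using exists_ideal_in_class_of_norm_le (K := K)
  rw [hc, hdeg] at hf2
  have hne : ∀ C, (f C : Ideal (𝓞 K)) ≠ ⊥ := fun C => nonZeroDivisors.coe_ne_zero (f C)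
  rw [classNumber, ← Finset.card_univ]
  apply Finset.card_le_card_of_injOn (fun C => pairMap (f C : Ideal (𝓞 K)))
  · intro C _
    refine mem_pairs (a := (pairMap (f C : Ideal (𝓞 K))).1)
      (b := (pairMap (f C : Ideal (𝓞 K))).2) ?_ ?_
    · rw [pairMap_mul (hne C)]; exact norm_ne_zero (hne C)
    · rw [pairMap_mul (hne C)]
      apply Nat.le_floor
      refine (hf2 C).trans (le_of_eq ?_)
      norm_num [Nat.factorial]
      ring
  · intro C _ D _ h
    have := pairMap_inj hdeg (hne C) (hne D) h
    rw [← hf1 C, ← hf1 D, Subtype.ext this]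

end Ideals

lemma sum_le (x : ℝ) (hx : 1 ≤ x) :
    ((∑ a ∈ Finset.Icc 1 ⌊x⌋₊, ⌊x⌋₊ / a : ℕ) : ℝ) ≤ x * (1 + Real.log x) := by
  have hN : (⌊x⌋₊ : ℝ) ≤ x := Nat.floor_le (by linarith)
  have hN1 : 1 ≤ ⌊x⌋₊ := Nat.le_floor (by simpa using hx)
  have h1 : ((∑ a ∈ Finset.Icc 1 ⌊x⌋₊, ⌊x⌋₊ / a : ℕ) : ℝ) ≤ ⌊x⌋₊ * (harmonic ⌊x⌋₊ : ℝ) := by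
    rw [harmonic_eq_sum_Icc]
    push_cast
    rw [Finset.mul_sum]
    apply Finset.sum_le_sum
    intro a _
    rw [← div_eq_mul_inv]
    exact Nat.cast_div_le
  have h2 := harmonic_le_one_add_log ⌊x⌋₊
  have h3 : Real.log ⌊x⌋₊ ≤ Real.log x := Real.log_le_log (by exact_mod_cast hN1) hN
  have h4 : 0 ≤ Real.log x := Real.log_nonneg hx
  calc _ ≤ _ := h1
    _ ≤ (⌊x⌋₊ : ℝ) * (1 + Real.log x) := by gcongr; linarith
    _ ≤ _ := by gcongr

lemma log_23 : 3.13 ≤ Real.log 23 := by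
  rw [Real.le_log_iff_exp_le (by norm_num)]
  have h1 := Real.exp_bound' (x := 0.13) (by norm_num) (by norm_num) (n := 4) (by norm_num)
  norm_num [Finset.sum_range_succ, Nat.factorial] at h1
  have h2 := Real.exp_one_lt_d9
  have h3 : Real.exp 3.13 = Real.exp 1 ^ 3 * Real.exp (13/100) := by
    rw [← Real.exp_nat_mul, ← Real.exp_add]; norm_num
  rw [h3]
  calc _ ≤ (2.7182818286 : ℝ) ^ 3 * 1.1389 := by
        gcongr
        linarith
    _ ≤ 23 := by norm_num

lemma log_10 : 2.25 ≤ Real.log 10 := by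
  rw [Real.le_log_iff_exp_le (by norm_num)]
  have h1 := Real.exp_bound' (x := 0.25) (by norm_num) (by norm_num) (n := 4) (by norm_num)
  norm_num [Finset.sum_range_succ, Nat.factorial] at h1
  have h2 := Real.exp_one_lt_d9
  have h3 : Real.exp 2.25 = Real.exp 1 ^ 2 * Real.exp (1/4) := by
    rw [← Real.exp_nat_mul, ← Real.exp_add]; norm_num
  rw [h3]
  calc _ ≤ (2.7182818286 : ℝ) ^ 2 * 1.285 := by
        gcongr
        linarith
    _ ≤ 10 := by norm_num

lemma log_5 : 1.5 ≤ Real.log 5 := by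
  rw [Real.le_log_iff_exp_le (by norm_num)]
  have h1 := Real.exp_bound' (x := 0.5) (by norm_num) (by norm_num) (n := 4) (by norm_num)
  norm_num [Finset.sum_range_succ, Nat.factorial] at h1
  have h2 := Real.exp_one_lt_d9
  have h3 : Real.exp 1.5 = Real.exp 1 * Real.exp (1/2) := by
    rw [← Real.exp_add]; norm_num
  rw [h3]
  calc _ ≤ (2.7182818286 : ℝ) * 1.66 := by
        gcongr
        linarith
    _ ≤ 5 := by norm_num

lemma log_pi_half : 0.445 ≤ Real.log (Real.pi / 2) := by
  rw [Real.le_log_iff_exp_le (by positivity)]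
  have h1 := Real.exp_bound' (x := 0.445) (by norm_num) (by norm_num) (n := 4) (by norm_num)
  norm_num [Finset.sum_range_succ, Nat.factorial] at h1
  have := Real.pi_gt_d2
  norm_num at this ⊢
  linarith

lemma const_lb : 0.432 ≤ Real.exp 1 / (2 * Real.pi) := by
  rw [le_div_iff₀ (by positivity)]
  have := Real.pi_lt_d4
  have := Real.exp_one_gt_d9
  norm_num at *
  linarith

lemma analytic (D : ℕ) (hD : 5 ≤ D) :
    ((∑ a ∈ Finset.Icc 1 ⌊2 / Real.pi * √(D : ℝ)⌋₊, ⌊2 / Real.pi * √(D : ℝ)⌋₊ / a : ℕ) : ℝ) ≤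
      Real.exp 1 / (2 * Real.pi) * √(D : ℝ) * Real.log D := by
  have hpi := Real.pi_gt_d4
  have hpi' := Real.pi_pos
  have hc := const_lb
  rcases Nat.lt_or_ge D 10 with h10 | h10
  · have hs : √(D : ℝ) ≤ 3 := by
      rw [Real.sqrt_le_left (by norm_num)]
      norm_num; exact_mod_cast (by omega : D ≤ 9)
    have hN : ⌊2 / Real.pi * √(D : ℝ)⌋₊ ≤ 1 := by
      rw [← Nat.lt_succ_iff, Nat.floor_lt (by positivity), div_mul_eq_mul_div, div_lt_iff₀ hpi']
      norm_num at *
      linarith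
    have hl : 1.5 ≤ Real.log D :=
      log_5.trans (Real.log_le_log (by norm_num) (by exact_mod_cast hD))
    have hs2 : 2.2 ≤ √(D : ℝ) := by
      apply Real.le_sqrt_of_sq_le
      have : (5 : ℝ) ≤ D := by exact_mod_cast hD
      norm_num; linarith
    have h1 : (1 : ℝ) ≤ Real.exp 1 / (2 * Real.pi) * √(D : ℝ) * Real.log D :=
      calc (1 : ℝ) ≤ 0.432 * 2.2 * 1.5 := by norm_num
        _ ≤ _ := by gcongr
    refine le_trans ?_ h1
    generalize ⌊2 / Real.pi * √(D : ℝ)⌋₊ = N at hN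
    interval_cases N <;> simp
  rcases Nat.lt_or_ge D 23 with h23 | h23
  · have hs : √(D : ℝ) ≤ 4.7 := by
      rw [Real.sqrt_le_left (by norm_num)]
      have : (D : ℝ) ≤ 22 := by exact_mod_cast (by omega : D ≤ 22)
      norm_num; linarith
    have hN : ⌊2 / Real.pi * √(D : ℝ)⌋₊ ≤ 2 := by
      rw [← Nat.lt_succ_iff, Nat.floor_lt (by positivity), div_mul_eq_mul_div, div_lt_iff₀ hpi']
      norm_num at *
      linarith
    have hl : 2.25 ≤ Real.log D :=
      log_10.trans (Real.log_le_log (by norm_num) (by exact_mod_cast h10))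
    have hs2 : 3.16 ≤ √(D : ℝ) := by
      apply Real.le_sqrt_of_sq_le
      have : (10 : ℝ) ≤ D := by exact_mod_cast h10
      norm_num; linarith
    have h1 : (3 : ℝ) ≤ Real.exp 1 / (2 * Real.pi) * √(D : ℝ) * Real.log D :=
      calc (3 : ℝ) ≤ 0.432 * 3.16 * 2.25 := by norm_num
        _ ≤ _ := by gcongr
    refine le_trans ?_ h1
    generalize ⌊2 / Real.pi * √(D : ℝ)⌋₊ = N at hN
    have : ∑ a ∈ Finset.Icc 1 N, N / a ≤ 3 := by
      interval_cases N <;> decide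
    exact_mod_cast this
  · have hD0 : (0 : ℝ) < D := by exact_mod_cast (by omega : 0 < D)
    have hs2 : 4 ≤ √(D : ℝ) := by
      apply Real.le_sqrt_of_sq_le
      have : (23 : ℝ) ≤ D := by exact_mod_cast h23
      norm_num; linarith
    have hl : 3.13 ≤ Real.log D :=
      log_23.trans (Real.log_le_log (by norm_num) (by exact_mod_cast h23))
    have hx : 1 ≤ 2 / Real.pi * √(D : ℝ) := by
      rw [div_mul_eq_mul_div, le_div_iff₀ hpi']
      have := Real.pi_lt_four
      linarith
    refine (sum_le _ hx).trans ?_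
    have hlog : Real.log (2 / Real.pi * √(D : ℝ)) =
        - Real.log (Real.pi / 2) + Real.log D / 2 := by
      rw [Real.log_mul (by positivity) (by positivity), Real.log_sqrt hD0.le, ← Real.log_inv,
        inv_div]
    rw [hlog]
    have hlp := log_pi_half
    have he := Real.exp_one_gt_d9
    have key : 2 * (1 + (- Real.log (Real.pi / 2) + Real.log D / 2)) ≤
        Real.exp 1 / 2 * Real.log D := by
      have : (0.3591 : ℝ) * 3.13 ≤ (Real.exp 1 / 2 - 1) * Real.log D := by
        have h0 : (0.3591 : ℝ) ≤ Real.exp 1 / 2 - 1 := by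
          norm_num at *; linarith
        gcongr
      norm_num at *
      linarith
    calc _ = √(D : ℝ) / Real.pi * (2 * (1 + (- Real.log (Real.pi / 2) + Real.log D / 2))) := by
          ring
      _ ≤ √(D : ℝ) / Real.pi * (Real.exp 1 / 2 * Real.log D) := by gcongr
      _ = _ := by field_simp

end ClassNumberBound

/-- For `K` an imaginary quadratic field, i.e. a number field with
`[K : ℚ] = 2` and discriminant `d < -4`, the class number of `K` satisfies
`h_K ≤ (e/(2π)) √|d| log|d|`. -/
theorem classNumber_le_of_imaginary_quadratic (K : Type*) [Field K] [NumberField K]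
    (hdeg : Module.finrank ℚ K = 2) (hdisc : NumberField.discr K < -4) :
    (NumberField.classNumber K : ℝ) ≤
      Real.exp 1 / (2 * Real.pi) * Real.sqrt |(NumberField.discr K : ℝ)| *
        Real.log |(NumberField.discr K : ℝ)| := by
  have h1 := ClassNumberBound.classNumber_le_sum hdeg (by omega)
  have h2 := ClassNumberBound.analytic (NumberField.discr K).natAbs (by omega)
  have h3 : (((NumberField.discr K).natAbs : ℕ) : ℝ) = |(NumberField.discr K : ℝ)| := by
    rw [Nat.cast_natAbs, Int.cast_abs]
  rw [h3] at h2
  exact le_trans (by exact_mod_cast h1) h2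
end
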